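/- Let ℳ be a bounded cyclic module over F₂, i.e., a cyclic module with HH_n(ℳ) = 0 for all but finitely many n. Then the following are equivalent: (1) the Hodge-to-de Rham spectral sequence for ℳ collapses at E¹; (2) there is a quasi-isomorphism ℳ ≅ ⊕_{j=0}^{k} 𝒩_j in the homotopy category of cyclic modules, where each 𝒩_j has HH_n(𝒩_j) = 0 for all but one value of n. -/

import Mathlib

noncomputable section
open TensorProduct

namespace LT

/-- A differential graded (dg) algebra over a commutative ring `k`: a chain complex with a
degree `-1` differential together with an associative unital multiplication satisfying the
(signed) Leibniz rule; over `𝔽₂` the signs are invisible. The grading is given by an internal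
direct sum decomposition into submodules. -/
structure DGA (k : Type) [CommRing k] : Type 1 where
  V : Type
  [acg : AddCommGroup V]
  [mod : Module k V]
  gr : ℤ → Submodule k V
  internal : DirectSum.IsInternal gr
  d : V →ₗ[k] V
  d_d : ∀ x, d (d x) = 0
  d_gr : ∀ i, ∀ x ∈ gr i, d x ∈ gr (i - 1)
  mul : V →ₗ[k] V →ₗ[k] V
  mul_assoc' : ∀ x y z, mul (mul x y) z = mul x (mul y z)
  one : V
  one_gr : one ∈ gr 0
  one_mul' : ∀ x, mul one x = x
  mul_one' : ∀ x, mul x one = x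
  mul_gr : ∀ i j, ∀ x ∈ gr i, ∀ y ∈ gr j, mul x y ∈ gr (i + j)
  leibniz : ∀ i, ∀ x ∈ gr i, ∀ y, d (mul x y) = mul (d x) y + (Int.negOnePow i : ℤ) • mul x (d y)

attribute [instance] DGA.acg
attribute [instance 2000] DGA.mod

variable {k : Type} [CommRing k]

/-- A dg `(A,A)`-bimodule over a dg algebra `A`. -/
structure DGBimod (A : DGA k) : Type 1 where
  V : Type
  [acg : AddCommGroup V]
  [mod : Module k V]
  gr : ℤ → Submodule k V
  internal : DirectSum.IsInternal gr
  d : V →ₗ[k] V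
  d_d : ∀ x, d (d x) = 0
  d_gr : ∀ i, ∀ x ∈ gr i, d x ∈ gr (i - 1)
  actL : A.V →ₗ[k] V →ₗ[k] V
  actR : V →ₗ[k] A.V →ₗ[k] V
  actL_one : ∀ m, actL A.one m = m
  actR_one : ∀ m, actR m A.one = m
  actL_mul : ∀ a b m, actL (A.mul a b) m = actL a (actL b m)
  actR_mul : ∀ m a b, actR (actR m a) b = actR m (A.mul a b)
  actLR : ∀ a m b, actR (actL a m) b = actL a (actR m b)
  actL_gr : ∀ i j, ∀ a ∈ A.gr i, ∀ m ∈ gr j, actL a m ∈ gr (i + j)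
  actR_gr : ∀ i j, ∀ m ∈ gr i, ∀ a ∈ A.gr j, actR m a ∈ gr (i + j)
  leibnizL : ∀ i, ∀ a ∈ A.gr i, ∀ m, d (actL a m) = actL (A.d a) m + (Int.negOnePow i : ℤ) • actL a (d m)
  leibnizR : ∀ j, ∀ m ∈ gr j, ∀ a, d (actR m a) = actR (d m) a + (Int.negOnePow j : ℤ) • actR m (A.d a)

attribute [instance] DGBimod.acg
attribute [instance 2000] DGBimod.mod

/-- The diagonal bimodule: `A` viewed as a bimodule over itself. -/
def DGA.diag (A : DGA k) : DGBimod A where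
  V := A.V
  gr := A.gr
  internal := A.internal
  d := A.d
  d_d := A.d_d
  d_gr := A.d_gr
  actL := A.mul
  actR := A.mul
  actL_one := A.one_mul'
  actR_one := A.mul_one'
  actL_mul := fun a b m => A.mul_assoc' a b m
  actR_mul := fun m a b => A.mul_assoc' m a b
  actLR := fun a m b => A.mul_assoc' a m b
  actL_gr := A.mul_gr
  actR_gr := A.mul_gr
  leibnizL := A.leibniz
  leibnizR := A.leibniz

variable {A : DGA k}

/-- A homomorphism of dg bimodules of degree `s`: a linear map raising degree by `s`,
commuting with the differentials and the two actions. -/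
def IsBHom (M N : DGBimod A) (s : ℤ) (f : M.V →ₗ[k] N.V) : Prop :=
  (∀ i, ∀ x ∈ M.gr i, f x ∈ N.gr (i + s)) ∧
  (∀ x, f (M.d x) = N.d (f x)) ∧
  (∀ a m, f (M.actL a m) = N.actL a (f m)) ∧
  (∀ m a, f (M.actR m a) = N.actR (f m) a)

/-- Graded maps of degree `s` compatible with the bimodule actions (no compatibility with the
differential required); these are used as homotopies. -/
def grHomSub (M N : DGBimod A) (s : ℤ) : Submodule k (M.V →ₗ[k] N.V) where
  carrier := {f | (∀ i, ∀ x ∈ M.gr i, f x ∈ N.gr (i + s)) ∧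
    (∀ a m, f (M.actL a m) = N.actL a (f m)) ∧
    (∀ m a, f (M.actR m a) = N.actR (f m) a)}
  add_mem' := by
    rintro f g ⟨hf1, hf2, hf3⟩ ⟨hg1, hg2, hg3⟩
    refine ⟨fun i x hx => ?_, fun a m => ?_, fun m a => ?_⟩ <;>
      simp [LinearMap.add_apply, hf2, hg2, hf3, hg3]
    exact Submodule.add_mem _ (hf1 i x hx) (hg1 i x hx)
  zero_mem' := by
    refine ⟨fun i x hx => ?_, fun a m => ?_, fun m a => ?_⟩ <;> simp
  smul_mem' := by
    rintro c f ⟨hf1, hf2, hf3⟩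
    refine ⟨fun i x hx => ?_, fun a m => ?_, fun m a => ?_⟩ <;>
      simp [LinearMap.smul_apply, hf2, hf3]
    exact Submodule.smul_mem _ _ (hf1 i x hx)

/-- Bimodule chain maps of degree `s`, as a submodule of all linear maps. -/
def bcmSub (M N : DGBimod A) (s : ℤ) : Submodule k (M.V →ₗ[k] N.V) where
  carrier := {f | IsBHom M N s f}
  add_mem' := by
    rintro f g ⟨hf1, hf0, hf2, hf3⟩ ⟨hg1, hg0, hg2, hg3⟩
    refine ⟨fun i x hx => ?_, fun x => ?_, fun a m => ?_, fun m a => ?_⟩ <;>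
      simp [LinearMap.add_apply, hf0, hg0, hf2, hg2, hf3, hg3]
    exact Submodule.add_mem _ (hf1 i x hx) (hg1 i x hx)
  zero_mem' := by
    refine ⟨fun i x hx => ?_, fun x => ?_, fun a m => ?_, fun m a => ?_⟩ <;> simp
  smul_mem' := by
    rintro c f ⟨hf1, hf0, hf2, hf3⟩
    refine ⟨fun i x hx => ?_, fun x => ?_, fun a m => ?_, fun m a => ?_⟩ <;>
      simp [LinearMap.smul_apply, hf0, hf2, hf3]
    exact Submodule.smul_mem _ _ (hf1 i x hx)

/-- The nullhomotopic degree-`s` maps `d ∘ h + h ∘ d` for `h` a degree `s+1` bimodule map. -/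
def nullHtpSub (M N : DGBimod A) (s : ℤ) : Submodule k (M.V →ₗ[k] N.V) :=
  Submodule.map
    ((LinearMap.llcomp k M.V N.V N.V N.d) + (LinearMap.lcomp k N.V M.d))
    (grHomSub M N (s + 1))

/-- Homotopy classes of degree-`s` bimodule chain maps `M → N`; for `M` a cell retract this
computes morphisms `Σ^s M → N` in the derived category of dg bimodules. -/
def HtpyHom (M N : DGBimod A) (s : ℤ) :=
  bcmSub M N s ⧸ Submodule.comap (bcmSub M N s).subtype (nullHtpSub M N s)

instance (M N : DGBimod A) (s : ℤ) : AddCommGroup (HtpyHom M N s) :=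
  inferInstanceAs (AddCommGroup (_ ⧸ _))
instance (M N : DGBimod A) (s : ℤ) : Module k (HtpyHom M N s) :=
  inferInstanceAs (Module k (_ ⧸ _))


/-- Homology in degree `n` of a graded module with "relations": the degree-`n` part of the
homology of the quotient complex `(T/N, d)` where the grading of `T/N` is induced by `gr`.
Taking `N = ⊥` gives ordinary graded homology. -/
def Hgr (T : Type) [AddCommGroup T] [Module k T] (gr : ℤ → Submodule k T)
    (N : Submodule k T) (d : T →ₗ[k] T) (n : ℤ) : Type :=
  ↥((gr n ⊔ N) ⊓ Submodule.comap d N) ⧸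
    Submodule.comap ((gr n ⊔ N) ⊓ Submodule.comap d N).subtype
      (Submodule.map d (gr (n + 1) ⊔ N) ⊔ N)

instance (T : Type) [AddCommGroup T] [Module k T] (gr : ℤ → Submodule k T)
    (N : Submodule k T) (d : T →ₗ[k] T) (n : ℤ) : AddCommGroup (Hgr T gr N d n) :=
  inferInstanceAs (AddCommGroup (_ ⧸ _))
instance (T : Type) [AddCommGroup T] [Module k T] (gr : ℤ → Submodule k T)
    (N : Submodule k T) (d : T →ₗ[k] T) (n : ℤ) : Module k (Hgr T gr N d n) :=
  inferInstanceAs (Module k (_ ⧸ _))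

/-- `f` induces an isomorphism on (graded) homology, with a degree shift `s`; stated
elementarily: the induced map on homology classes is surjective and injective. -/
def IsQIsoDeg (T S : Type) [AddCommGroup T] [Module k T] [AddCommGroup S] [Module k S]
    (grT : ℤ → Submodule k T) (grS : ℤ → Submodule k S)
    (dT : T →ₗ[k] T) (dS : S →ₗ[k] S) (s : ℤ) (f : T →ₗ[k] S) : Prop :=
  ∀ n : ℤ,
    (∀ y ∈ grS (n + s), dS y = 0 →
      ∃ x ∈ grT n, dT x = 0 ∧ f x - y ∈ Submodule.map dS (grS (n + s + 1))) ∧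
    (∀ x ∈ grT n, dT x = 0 → f x ∈ Submodule.map dS (grS (n + s + 1)) →
      x ∈ Submodule.map dT (grT (n + 1)))

variable {A : DGA k}

/-- The bilinear "sandwich" map `(a, b) ↦ a · m · b` for a fixed element `m` of a bimodule. -/
def sandwich (M : DGBimod A) (m : M.V) : A.V →ₗ[k] A.V →ₗ[k] M.V :=
  LinearMap.mk₂ k (fun a b => M.actR (M.actL a m) b)
    (fun a₁ a₂ b => by simp)
    (fun c a b => by simp)
    (fun a b₁ b₂ => by simp)
    (fun c a b => by simp)

/-- The bimodule map `A ⊗ A → M`, `a ⊗ b ↦ a · m · b`. -/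
def sandwichT (M : DGBimod A) (m : M.V) : (A.V ⊗[k] A.V) →ₗ[k] M.V :=
  TensorProduct.lift (sandwich M m)

/-- `S'/S` is a free dg bimodule: there is a family of "generators" `g i` of degrees `deg i`,
closed cycles modulo `S`, which generate `S'` freely over `A ⊗ A` modulo `S`. -/
def IsFreeStep (M : DGBimod A) (S S' : Submodule k M.V) : Prop :=
  ∃ (I : Type) (g : I → M.V) (deg : I → ℤ),
    (∀ i, g i ∈ S') ∧ (∀ i, M.d (g i) ∈ S) ∧
    (∀ i p q, ∀ a ∈ A.gr p, ∀ b ∈ A.gr q, M.actR (M.actL a (g i)) b ∈ M.gr (p + q + deg i)) ∧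
    S' ≤ S ⊔ (⨆ i, LinearMap.range (sandwichT M (g i))) ∧
    (∀ (u : Finset I) (c : I → A.V ⊗[k] A.V),
      (∑ i ∈ u, sandwichT M (g i) (c i)) ∈ S → ∀ i ∈ u, c i = 0)

/-- As `IsFreeStep`, with a finite generating family. -/
def IsFreeStepFin (M : DGBimod A) (S S' : Submodule k M.V) : Prop :=
  ∃ (I : Type) (_ : Finite I) (g : I → M.V) (deg : I → ℤ),
    (∀ i, g i ∈ S') ∧ (∀ i, M.d (g i) ∈ S) ∧
    (∀ i p q, ∀ a ∈ A.gr p, ∀ b ∈ A.gr q, M.actR (M.actL a (g i)) b ∈ M.gr (p + q + deg i)) ∧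
    S' ≤ S ⊔ (⨆ i, LinearMap.range (sandwichT M (g i))) ∧
    (∀ (u : Finset I) (c : I → A.V ⊗[k] A.V),
      (∑ i ∈ u, sandwichT M (g i) (c i)) ∈ S → ∀ i ∈ u, c i = 0)

/-- A filtration exhibiting `M` as a cell bimodule. -/
def IsCellFiltration (M : DGBimod A) (Fil : ℕ → Submodule k M.V) : Prop :=
  Fil 0 = ⊥ ∧ Monotone Fil ∧ (⨆ n, Fil n) = ⊤ ∧
  (∀ n, ∀ x ∈ Fil n, M.d x ∈ Fil n) ∧
  (∀ n a, ∀ x ∈ Fil n, M.actL a x ∈ Fil n) ∧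
  (∀ n a, ∀ x ∈ Fil n, M.actR x a ∈ Fil n) ∧
  (∀ n, IsFreeStep M (Fil n) (Fil (n + 1)))

/-- A cell bimodule: admits a filtration with free subquotients. -/
def IsCellBimod (M : DGBimod A) : Prop := ∃ Fil, IsCellFiltration M Fil

/-- A finite cell bimodule: a finite filtration with finite-rank free subquotients. -/
def IsFiniteCellBimod (M : DGBimod A) : Prop :=
  ∃ Fil, (Fil 0 = ⊥ ∧ Monotone Fil ∧ (⨆ n, Fil n) = ⊤ ∧
    (∀ n, ∀ x ∈ Fil n, M.d x ∈ Fil n) ∧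
    (∀ n a, ∀ x ∈ Fil n, M.actL a x ∈ Fil n) ∧
    (∀ n a, ∀ x ∈ Fil n, M.actR x a ∈ Fil n) ∧
    (∀ n, IsFreeStepFin M (Fil n) (Fil (n + 1)))) ∧ (∃ n₀, Fil n₀ = ⊤)

/-- A (finite) cell retract: a subcomplex of a (finite) cell bimodule whose inclusion admits
a bimodule retraction. -/
def IsCellRetract (P : DGBimod A) : Prop :=
  ∃ (C : DGBimod A), IsCellBimod C ∧
    ∃ (ι : P.V →ₗ[k] C.V) (r : C.V →ₗ[k] P.V),
      IsBHom P C 0 ι ∧ IsBHom C P 0 r ∧ Function.Injective ι ∧ r.comp ι = LinearMap.id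

def IsFiniteCellRetract (P : DGBimod A) : Prop :=
  ∃ (C : DGBimod A), IsFiniteCellBimod C ∧
    ∃ (ι : P.V →ₗ[k] C.V) (r : C.V →ₗ[k] P.V),
      IsBHom P C 0 ι ∧ IsBHom C P 0 r ∧ Function.Injective ι ∧ r.comp ι = LinearMap.id

/-- `ρ : R → M` is a resolution: a quasi-isomorphism of dg bimodules from a cell retract. -/
def IsResolution (R M : DGBimod A) (ρ : R.V →ₗ[k] M.V) : Prop :=
  IsCellRetract R ∧ IsBHom R M 0 ρ ∧ IsQIsoDeg R.V M.V R.gr M.gr R.d M.d 0 ρ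

/-- A bimodule is perfect if it admits a resolution by a finite cell retract. -/
def IsPerfect (M : DGBimod A) : Prop :=
  ∃ (R : DGBimod A) (ρ : R.V →ₗ[k] M.V),
    IsFiniteCellRetract R ∧ IsBHom R M 0 ρ ∧ IsQIsoDeg R.V M.V R.gr M.gr R.d M.d 0 ρ

/-- `A` is homologically smooth: perfect as a bimodule over itself. -/
def HomSmooth (A : DGA k) : Prop := IsPerfect A.diag

/-- The homology of the dg algebra `A` in degree `n`. -/
abbrev AlgH (A : DGA k) (n : ℤ) := Hgr A.V A.gr ⊥ A.d n

/-- `A` is homologically proper: its total homology is finitely generated. -/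
def HomProper (A : DGA k) : Prop :=
  (∀ n, Module.Finite k (AlgH A n)) ∧ (Set.Finite {n : ℤ | Nontrivial (AlgH A n)})

/-- A dg bimodule is bounded if it is supported in finitely many gradings. -/
def BoundedBimod (M : DGBimod A) : Prop := ∃ u : Finset ℤ, ∀ i ∉ u, M.gr i = ⊥

/-! ### Bicomplexes and the spectral sequences of their two filtrations -/

/-- A bicomplex of `k`-modules "with relations", presented as one ambient module with a
bigrading by submodules, a horizontal differential `dh` (of bidegree `(-1,0)`), a vertical
differential `dv` (of bidegree `(0,-1)`) and a submodule `N` of relations (so that the actual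
bicomplex is the quotient by `N`; take `N = ⊥` for an honest bicomplex). -/
structure RelBicx (k : Type) [CommRing k] : Type 1 where
  T : Type
  [acg : AddCommGroup T]
  [mod : Module k T]
  gr : ℤ → ℤ → Submodule k T
  N : Submodule k T
  dh : T →ₗ[k] T
  dv : T →ₗ[k] T

attribute [instance] RelBicx.acg RelBicx.mod

namespace RelBicx

variable {k : Type} [CommRing k] (B : RelBicx k)

/-- The total differential. -/
def D : B.T →ₗ[k] B.T := B.dh + B.dv

/-- The column filtration (by the first index `p`) of the total complex, in total degree `n`. -/
def Fcol (p n : ℤ) : Submodule k B.T := ⨆ (i : ℤ) (_ : i ≤ p), B.gr i (n - i)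

/-- The row filtration (by the second index `q`) of the total complex, in total degree `n`. -/
def Frow (q n : ℤ) : Submodule k B.T := ⨆ (j : ℤ) (_ : j ≤ q), B.gr (n - j) j

/-- Approximate cycles for the spectral sequence of the filtration `F`:
elements of filtration `p` (mod `N`) whose total differential drops filtration by `r`. -/
def Zpage (F : ℤ → ℤ → Submodule k B.T) (r p n : ℤ) : Submodule k B.T :=
  (F p n ⊔ B.N) ⊓ Submodule.comap B.D (F (p - r) (n - 1) ⊔ B.N)

/-- The boundaries subobject for the `r`-th page at filtration `p`, total degree `n`. -/
def Bpage (F : ℤ → ℤ → Submodule k B.T) (r p n : ℤ) : Submodule k B.T :=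
  Submodule.map B.D (B.Zpage F (r - 1) (p + r - 1) (n + 1)) ⊔ B.Zpage F (r - 1) (p - 1) n ⊔ B.N

/-- The `r`-th page of the spectral sequence of the filtration `F`, at filtration degree `p`
and total degree `n` (the classical subquotient description `Z^r/B^r`). -/
def Epage (F : ℤ → ℤ → Submodule k B.T) (r p n : ℤ) : Type :=
  ↥(B.Zpage F r p n) ⧸
    Submodule.comap (B.Zpage F r p n).subtype (B.Bpage F r p n)

instance (F : ℤ → ℤ → Submodule k B.T) (r p n : ℤ) : AddCommGroup (B.Epage F r p n) :=
  inferInstanceAs (AddCommGroup (_ ⧸ _))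
instance (F : ℤ → ℤ → Submodule k B.T) (r p n : ℤ) : Module k (B.Epage F r p n) :=
  inferInstanceAs (Module k (_ ⧸ _))

/-- The spectral sequence `ᵛʰE` (filtration by columns; one first takes homology with respect
to the vertical differential). Indexing: `vhE r p q` is `ᵛʰE^r_{p,q}`. -/
def vhE (r p q : ℤ) : Type := B.Epage B.Fcol r p (p + q)

/-- The spectral sequence `ʰᵛE` (filtration by rows; one first takes homology with respect to
the horizontal differential), in the transposed indexing of Lipshitz–Treumann:
`hvE r p q` is `ʰᵛE^r_{p,q}`, whose filtration index is the row `q`. -/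
def hvE (r p q : ℤ) : Type := B.Epage B.Frow r q (p + q)

instance (r p q : ℤ) : AddCommGroup (B.vhE r p q) := inferInstanceAs (AddCommGroup (Epage _ _ _ _ _))
instance (r p q : ℤ) : Module k (B.vhE r p q) := inferInstanceAs (Module k (Epage _ _ _ _ _))
instance (r p q : ℤ) : AddCommGroup (B.hvE r p q) := inferInstanceAs (AddCommGroup (Epage _ _ _ _ _))
instance (r p q : ℤ) : Module k (B.hvE r p q) := inferInstanceAs (Module k (Epage _ _ _ _ _))

/-- Vanishing of the differential leaving the `r`-th page at position `(p, n)`: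
the total differential of any approximate cycle is, up to boundaries of earlier pages and
relations, an approximate cycle of deeper filtration. -/
def zeroDiff (F : ℤ → ℤ → Submodule k B.T) (r p n : ℤ) : Prop :=
  Submodule.map B.D (B.Zpage F r p n) ≤
    Submodule.map B.D (B.Zpage F (r - 1) (p - 1) n) ⊔ B.Zpage F (r - 1) (p - r - 1) (n - 1) ⊔ B.N

/-- The spectral sequence of the filtration `F` collapses at the `r₀`-th page. -/
def collapsesAt (F : ℤ → ℤ → Submodule k B.T) (r₀ : ℤ) : Prop :=
  ∀ r : ℤ, r₀ ≤ r → ∀ p n : ℤ, B.zeroDiff F r p n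

/-- The part of total degree `n` of the bicomplex. -/
def totGr (n : ℤ) : Submodule k B.T := ⨆ p : ℤ, B.gr p (n - p)

/-- The degree-`n` homology of the total complex (of the quotient by `N`). -/
def Htot (n : ℤ) : Type :=
  ↥((B.totGr n ⊔ B.N) ⊓ Submodule.comap B.D B.N) ⧸
    Submodule.comap ((B.totGr n ⊔ B.N) ⊓ Submodule.comap B.D B.N).subtype
      (Submodule.map B.D (B.totGr (n + 1) ⊔ B.N) ⊔ B.N)

instance (n : ℤ) : AddCommGroup (B.Htot n) := inferInstanceAs (AddCommGroup (_ ⧸ _))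
instance (n : ℤ) : Module k (B.Htot n) := inferInstanceAs (Module k (_ ⧸ _))

/-- The graded piece `F_p H_n / F_{p-1} H_n` of the filtration induced by `F` on the homology
of the total complex. -/
def grHtot (F : ℤ → ℤ → Submodule k B.T) (p n : ℤ) : Type :=
  ↥((F p n ⊔ B.N) ⊓ Submodule.comap B.D B.N) ⧸
    Submodule.comap ((F p n ⊔ B.N) ⊓ Submodule.comap B.D B.N).subtype
      (((F (p - 1) n ⊔ B.N) ⊓ Submodule.comap B.D B.N) ⊔
        Submodule.map B.D (B.totGr (n + 1) ⊔ B.N) ⊔ B.N)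

instance (F : ℤ → ℤ → Submodule k B.T) (p n : ℤ) : AddCommGroup (B.grHtot F p n) :=
  inferInstanceAs (AddCommGroup (_ ⧸ _))
instance (F : ℤ → ℤ → Submodule k B.T) (p n : ℤ) : Module k (B.grHtot F p n) :=
  inferInstanceAs (Module k (_ ⧸ _))

/-- The spectral sequence of the filtration `F` converges to the homology of the total
complex: for every position the pages eventually stabilize and agree with the associated
graded of the induced filtration on the homology of the total complex. -/
def convergesTo (F : ℤ → ℤ → Submodule k B.T) : Prop :=
  ∀ p n : ℤ, ∃ r₀ : ℤ, ∀ r : ℤ, r₀ ≤ r →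
    Nonempty (B.Epage F r p n ≃ₗ[k] B.grHtot F p n)

end RelBicx
/-! ### Hochschild chains, the involution `τ`, and the Hochschild–Tate bicomplex (over `𝔽₂`) -/

section Hochschild

variable {A : DGA (ZMod 2)} (R M : DGBimod A)

/-- The ambient space `R ⊗ M` of the Hochschild chain complex `HC(A, M)` (with respect to the
resolution `R` of the diagonal bimodule): `HC(A,M) = (R ⊗ M)/rel2`. -/
abbrev T2 := R.V ⊗[ZMod 2] M.V

/-- The differential `∂(r ⊗ m) = ∂r ⊗ m + r ⊗ ∂m` (char. 2). -/
def d2 : T2 R M →ₗ[ZMod 2] T2 R M :=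
  TensorProduct.map R.d LinearMap.id + TensorProduct.map LinearMap.id M.d

/-- The grading of `R ⊗ M`. -/
def gr2 (n : ℤ) : Submodule (ZMod 2) (T2 R M) :=
  Submodule.span (ZMod 2)
    {z | ∃ i j, ∃ r ∈ R.gr i, ∃ m ∈ M.gr j, i + j = n ∧ z = r ⊗ₜ[ZMod 2] m}

/-- The Hochschild relations `ra ⊗ m ∼ r ⊗ am` and `ar ⊗ m ∼ r ⊗ ma` (char. 2). -/
def rel2 : Submodule (ZMod 2) (T2 R M) :=
  Submodule.span (ZMod 2)
    ({z | ∃ r a m, z = (R.actR r a) ⊗ₜ[ZMod 2] m + r ⊗ₜ[ZMod 2] (M.actL a m)} ∪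
     {z | ∃ r a m, z = (R.actL a r) ⊗ₜ[ZMod 2] m + r ⊗ₜ[ZMod 2] (M.actR m a)})

/-- The underlying space of the Hochschild chain complex `HC(A, M)`. -/
abbrev HCQ := T2 R M ⧸ rel2 R M

/-- The Hochschild homology `HH_n(A, M)` (computed from the chosen resolution `R → A`). -/
abbrev HH (n : ℤ) := Hgr (T2 R M) (gr2 R M) (rel2 R M) (d2 R M) n

/-- The ambient space `R ⊗ (M ⊗ (R ⊗ M))` of the Hochschild chain complex of the derived
tensor product: `HC(A, M ⊗̃_A M) = (R ⊗ (M ⊠ R ⊠ M))/∼ = (R ⊗ M ⊗ R ⊗ M)/rel4`. -/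
abbrev T4 := R.V ⊗[ZMod 2] (M.V ⊗[ZMod 2] (R.V ⊗[ZMod 2] M.V))

/-- The differential of `R ⊗ M ⊗ R ⊗ M` (char. 2; no signs). -/
def d4 : T4 R M →ₗ[ZMod 2] T4 R M :=
  TensorProduct.map R.d LinearMap.id +
  TensorProduct.map LinearMap.id (TensorProduct.map M.d LinearMap.id +
    TensorProduct.map LinearMap.id (TensorProduct.map R.d LinearMap.id +
      TensorProduct.map LinearMap.id M.d))

/-- The grading of `R ⊗ M ⊗ R ⊗ M`. -/
def gr4 (n : ℤ) : Submodule (ZMod 2) (T4 R M) :=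
  Submodule.span (ZMod 2)
    {z | ∃ i₁ j₁ i₂ j₂, ∃ r ∈ R.gr i₁, ∃ m ∈ M.gr j₁, ∃ r' ∈ R.gr i₂, ∃ m' ∈ M.gr j₂,
      i₁ + j₁ + i₂ + j₂ = n ∧ z = r ⊗ₜ[ZMod 2] (m ⊗ₜ[ZMod 2] (r' ⊗ₜ[ZMod 2] m'))}

/-- The combined relations presenting `HC(A, M ⊗̃_A M)` as a quotient of `R ⊗ M ⊗ R ⊗ M`:
the two relations of the naive tensor products `M ⊠_A R ⊠_A M` and the two outer Hochschild
relations (char. 2). -/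
def rel4 : Submodule (ZMod 2) (T4 R M) :=
  Submodule.span (ZMod 2)
    ({z | ∃ r a m r' m', z = (R.actR r a) ⊗ₜ[ZMod 2] (m ⊗ₜ[ZMod 2] (r' ⊗ₜ[ZMod 2] m')) +
        r ⊗ₜ[ZMod 2] ((M.actL a m) ⊗ₜ[ZMod 2] (r' ⊗ₜ[ZMod 2] m'))} ∪
     {z | ∃ r a m r' m', z = (R.actL a r) ⊗ₜ[ZMod 2] (m ⊗ₜ[ZMod 2] (r' ⊗ₜ[ZMod 2] m')) +
        r ⊗ₜ[ZMod 2] (m ⊗ₜ[ZMod 2] (r' ⊗ₜ[ZMod 2] (M.actR m' a)))} ∪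
     {z | ∃ r a m r' m', z = r ⊗ₜ[ZMod 2] ((M.actR m a) ⊗ₜ[ZMod 2] (r' ⊗ₜ[ZMod 2] m')) +
        r ⊗ₜ[ZMod 2] (m ⊗ₜ[ZMod 2] ((R.actL a r') ⊗ₜ[ZMod 2] m'))} ∪
     {z | ∃ r a m r' m', z = r ⊗ₜ[ZMod 2] (m ⊗ₜ[ZMod 2] ((R.actR r' a) ⊗ₜ[ZMod 2] m')) +
        r ⊗ₜ[ZMod 2] (m ⊗ₜ[ZMod 2] (r' ⊗ₜ[ZMod 2] (M.actL a m')))})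


instance {A : DGA (ZMod 2)} (R M : DGBimod A) :
    HasQuotient (T4 R M) (Submodule (ZMod 2) (T4 R M)) := Submodule.hasQuotient

/-- The underlying space of the Hochschild chain complex `HC(A, M ⊗̃_A M)`. -/
abbrev HCQ4 := T4 R M ⧸ rel4 R M

/-- The Hochschild homology `HH_n(A, M ⊗̃_A M)` of the derived tensor square. -/
abbrev HH4 (n : ℤ) := Hgr (T4 R M) (gr4 R M) (rel4 R M) (d4 R M) n

/-- The involution `τ` of `R ⊗ (M ⊗ (R ⊗ M))` exchanging the two halves:
`r ⊗ (m ⊗ (r' ⊗ m')) ↦ r' ⊗ (m' ⊗ (r ⊗ m))`. -/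
def tau4 : T4 R M →ₗ[ZMod 2] T4 R M :=
  ((TensorProduct.assoc (ZMod 2) R.V M.V (R.V ⊗[ZMod 2] M.V)).toLinearMap).comp
    (((TensorProduct.comm (ZMod 2) (R.V ⊗[ZMod 2] M.V) (R.V ⊗[ZMod 2] M.V)).toLinearMap).comp
      ((TensorProduct.assoc (ZMod 2) R.V M.V (R.V ⊗[ZMod 2] M.V)).symm.toLinearMap))

/-- The Hochschild–Tate bicomplex `HC^{Tate}(A, M ⊗̃_A M)`: the `ℤ`-periodic bicomplex whose
columns are the Hochschild complex of `M ⊗̃_A M` and whose horizontal differential is `1 + τ`. -/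
def TateBicx : RelBicx (ZMod 2) where
  T := ℤ →₀ T4 R M
  gr := fun p q => Submodule.map (Finsupp.lsingle p) (gr4 R M q)
  N := ⨅ p : ℤ, Submodule.comap (Finsupp.lapply p) (rel4 R M)
  dv := Finsupp.mapRange.linearMap (d4 R M)
  dh := (Finsupp.lmapDomain (T4 R M) (ZMod 2) (fun p => p - 1)).comp
    (Finsupp.mapRange.linearMap (LinearMap.id + tau4 R M))


/-- An element of the Hochschild–Tate bicomplex concentrated in column `p`. -/
def tateSingle (p : ℤ) (x : T4 R M) : (TateBicx R M).T := Finsupp.single p x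

/-- A dg bimodule `M` is `π`-formal (with respect to the resolution `R` of the diagonal
bimodule) if the spectral sequence `ʰᵛE` of the Hochschild–Tate bicomplex of `M ⊗̃_A M`
collapses at the `E³`-page; equivalently, all the induced operations
`d^{2i} : HH_k(A,M) → HH_{k-i}(A,M)`, `i ≥ 2`, vanish. -/
def PiFormalBimod : Prop := (TateBicx R M).collapsesAt (TateBicx R M).Frow 3

/-- A dg algebra is `π`-formal if every dg bimodule over it is `π`-formal. -/
def PiFormalAlg (R : DGBimod A) : Prop := ∀ M : DGBimod A, PiFormalBimod R M

end Hochschild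

/-! ### Cyclic modules over `𝔽₂` -/

/-- A cyclic module over `𝔽₂` (a functor on Connes's cyclic category `ΔC`): vector spaces
`X n`, face maps `d n i : X (n+1) → X n` (`0 ≤ i ≤ n+1`), degeneracies
`s n i : X n → X (n+1)` (`0 ≤ i ≤ n`), and cyclic operators `t n` generating a
`ℤ/(n+1)`-action, subject to the cyclic identities. (Face and degeneracy maps for indices out
of range are unconstrained junk data.) -/
structure CycMod : Type 1 where
  X : ℕ → Type
  [acg : ∀ n, AddCommGroup (X n)]
  [mod : ∀ n, Module (ZMod 2) (X n)]
  d : ∀ n : ℕ, ℕ → (X (n + 1) →ₗ[ZMod 2] X n)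
  s : ∀ n : ℕ, ℕ → (X n →ₗ[ZMod 2] X (n + 1))
  t : ∀ n : ℕ, X n →ₗ[ZMod 2] X n
  dd : ∀ n i j, i < j → j ≤ n + 2 →
    (d n i).comp (d (n + 1) j) = (d n (j - 1)).comp (d (n + 1) i)
  ss : ∀ n i j, i ≤ j → j ≤ n →
    (s (n + 1) i).comp (s n j) = (s (n + 1) (j + 1)).comp (s n i)
  ds_lt : ∀ n i j, i < j → j ≤ n + 1 →
    (d (n + 1) i).comp (s (n + 1) j) = (s n (j - 1)).comp (d n i)
  ds_eq : ∀ n j, j ≤ n →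
    (d n j).comp (s n j) = LinearMap.id ∧ (d n (j + 1)).comp (s n j) = LinearMap.id
  ds_gt : ∀ n i j, j + 1 < i → i ≤ n + 2 →
    (d (n + 1) i).comp (s (n + 1) j) = (s n j).comp (d n (i - 1))
  t_ord : ∀ n, (t n) ^ (n + 1) = LinearMap.id
  dt : ∀ n i, 1 ≤ i → i ≤ n + 1 → (d n i).comp (t (n + 1)) = (t n).comp (d n (i - 1))
  d0t : ∀ n, (d n 0).comp (t (n + 1)) = d n (n + 1)
  st : ∀ n i, 1 ≤ i → i ≤ n → (s n i).comp (t n) = (t (n + 1)).comp (s n (i - 1))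
  s0t : ∀ n, (s n 0).comp (t n) = ((t (n + 1)).comp (t (n + 1))).comp (s n n)

attribute [instance] CycMod.acg CycMod.mod

namespace CycMod

variable (C : CycMod)

/-- The Hochschild differential `∂ = ∑_{i=0}^{n+1} d_i : X_{n+1} → X_n`. -/
def bd (n : ℕ) : C.X (n + 1) →ₗ[ZMod 2] C.X n := ∑ i ∈ Finset.range (n + 2), C.d n i

/-- The bar differential `b' = ∑_{i=0}^{n} d_i : X_{n+1} → X_n`. -/
def bd' (n : ℕ) : C.X (n + 1) →ₗ[ZMod 2] C.X n := ∑ i ∈ Finset.range (n + 1), C.d n i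

/-- Hochschild cycles. -/
def cyc : ∀ n : ℕ, Submodule (ZMod 2) (C.X n)
  | 0 => ⊤
  | (m + 1) => LinearMap.ker (C.bd m)

/-- The Hochschild homology `HH_n(𝓜)` of a cyclic module. -/
def HHc (n : ℕ) : Type :=
  ↥(C.cyc n) ⧸ Submodule.comap (C.cyc n).subtype (LinearMap.range (C.bd n))

instance (n : ℕ) : AddCommGroup (C.HHc n) := inferInstanceAs (AddCommGroup (_ ⧸ _))
instance (n : ℕ) : Module (ZMod 2) (C.HHc n) := inferInstanceAs (Module (ZMod 2) (_ ⧸ _))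

/-- A cyclic module is bounded if its Hochschild homology vanishes in all but finitely many
degrees. -/
def Bounded : Prop := Set.Finite {n : ℕ | Nontrivial (C.HHc n)}

/-- The cyclic bicomplex `CC(𝓜)`: first-quadrant, columns alternately `(HC, ∂)` and
`(HC, b')`, horizontal maps alternately `1 - t` and `N = ∑ tⁱ` (char. 2). Its column
filtration spectral sequence is the Hodge-to-de Rham (Hochschild-to-cyclic) spectral
sequence, converging to cyclic homology. -/
def CC : RelBicx (ZMod 2) where
  T := Π₀ pq : ℕ × ℕ, C.X pq.2
  gr := fun p q =>
    if 0 ≤ p ∧ 0 ≤ q then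
      Submodule.map (DFinsupp.lsingle (p.toNat, q.toNat)) ⊤
    else ⊥
  N := ⊥
  dv := DFinsupp.lsum ℕ (fun pq =>
    match pq with
    | (_, 0) => 0
    | (p, q + 1) =>
      (DFinsupp.lsingle (p, q)).comp (if Even p then C.bd q else C.bd' q))
  dh := DFinsupp.lsum ℕ (fun pq =>
    match pq with
    | (0, _) => 0
    | (p + 1, q) =>
      (DFinsupp.lsingle (p, q)).comp
        (if Even p then LinearMap.id + C.t q
         else ∑ i ∈ Finset.range (q + 1), (C.t q) ^ i))

/-- Degeneration of the Hodge-to-de Rham spectral sequence of `𝓜` at the `E^{r₀}` page. -/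
def HdRdegenAt (r₀ : ℤ) : Prop := C.CC.collapsesAt C.CC.Fcol r₀

end CycMod

/-- A map of cyclic modules. -/
def IsCycHom (C D : CycMod) (f : ∀ n, C.X n →ₗ[ZMod 2] D.X n) : Prop :=
  (∀ n i, (f n).comp (C.d n i) = (D.d n i).comp (f (n + 1))) ∧
  (∀ n i, (f (n + 1)).comp (C.s n i) = (D.s n i).comp (f n)) ∧
  (∀ n, (f n).comp (C.t n) = (D.t n).comp (f n))

/-- A degreewise map of `ℕ`-indexed chain complexes induces an isomorphism on homology
(stated elementarily). -/
def IsNatQIso (X Y : ℕ → Type)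
    [∀ n, AddCommGroup (X n)] [∀ n, Module (ZMod 2) (X n)]
    [∀ n, AddCommGroup (Y n)] [∀ n, Module (ZMod 2) (Y n)]
    (dX : ∀ n, X (n + 1) →ₗ[ZMod 2] X n) (dY : ∀ n, Y (n + 1) →ₗ[ZMod 2] Y n)
    (f : ∀ n, X n →ₗ[ZMod 2] Y n) : Prop :=
  ((∀ y : Y 0, ∃ x : X 0, f 0 x - y ∈ LinearMap.range (dY 0)) ∧
    (∀ x : X 0, f 0 x ∈ LinearMap.range (dY 0) → x ∈ LinearMap.range (dX 0))) ∧
  (∀ n : ℕ,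
    (∀ y : Y (n + 1), dY n y = 0 →
      ∃ x : X (n + 1), dX n x = 0 ∧ f (n + 1) x - y ∈ LinearMap.range (dY (n + 1))) ∧
    (∀ x : X (n + 1), dX n x = 0 → f (n + 1) x ∈ LinearMap.range (dY (n + 1)) →
      x ∈ LinearMap.range (dX (n + 1))))

/-- A quasi-isomorphism of cyclic modules. -/
def IsCycQIso (C D : CycMod) (f : ∀ n, C.X n →ₗ[ZMod 2] D.X n) : Prop :=
  IsCycHom C D f ∧ IsNatQIso C.X D.X C.bd D.bd f

/-!
Write `HH_n → CH_n` for the map induced by the inclusion of column `0` into the cyclic bicomplex.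

The `b'`-columns are contractible, so the only obstruction to removing the lowest column of a
boundary, one column at a time, lies in an even column; periodicity moves it to column `0`. Hence
the spectral sequence collapses at `E¹` if and only if every `HH_n → CH_n` is injective. This
injectivity is inherited along maps that are injective on `HH`, is invariant under
quasi-isomorphism, and holds whenever `HH` is concentrated in one degree, because an element of
degree `n + 1` can then be cleared from its columns of positive index. This gives one implication.

Conversely, fix `j` and put `V = HH_j`. If `HH_j → CH_j` is injective, the class map from `j`-cycles
to `V` extends to a degree `j` cocycle on the total complex with coefficients in `V`. On cycles,
every such cocycle factors through a homomorphism from `𝓜` to a cyclic module `W` that is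
concentrated in degree `j` and whose homology embeds into `V`. This is proved by dimension shifting:
choose a degreewise surjection `Q → 𝓜` such that cocycles of positive degree on `Q` are
coboundaries. Then a `j`-cocycle on `𝓜` yields a `(j - 1)`-cocycle on the kernel `K`. If the latter
factors through `K → A`, embed the pushout of `Q` and `A` along `K` into a contractible module; its
quotient by `A` receives a homomorphism from `𝓜`, and its homology is that of `A` shifted by one.
As `𝓜` is bounded, finitely many of these `W` give a quasi-isomorphism from `𝓜` to their product.
-/

theorem add_eq_zero_iff_eq {M : Type*} [AddCommGroup M] [Module (ZMod 2) M] {x y : M} :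
    x + y = 0 ↔ x = y := by
  rw [← ZModModule.sub_eq_add, sub_eq_zero]

/-! ### Finite internal direct sums -/

section DirectSum

variable {ι R M : Type*} [DecidableEq ι] [Semiring R]

theorem isInternal_iff_bijective_sum [Fintype ι] [AddCommMonoid M] [Module R M]
    (U : ι → Submodule R M) :
    DirectSum.IsInternal U ↔ Function.Bijective fun x : ∀ i, U i => ∑ i, (x i : M) := by
  classical
  have coe_eq : ⇑(DirectSum.coeAddMonoidHom U) =
      (fun x : ∀ i, U i => ∑ i, (x i : M)) ∘ DFinsupp.equivFunOnFintype := by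
    funext v
    rw [DirectSum.coeAddMonoidHom_eq_dfinsuppSum]
    exact DFinsupp.sum_eq_sum_fintype v fun _ => rfl
  rw [DirectSum.IsInternal, coe_eq]
  exact Function.Bijective.of_comp_iff _ DFinsupp.equivFunOnFintype.bijective

theorem isInternal_pi_compl_bot [Finite ι] {V : ι → Type*} [∀ i, AddCommMonoid (V i)]
    [∀ i, Module R (V i)] :
    DirectSum.IsInternal fun j => Submodule.pi {j}ᶜ fun i => (⊥ : Submodule R (V i)) := by
  have := Fintype.ofFinite ι
  have sum_apply (x : ∀ j, Submodule.pi {j}ᶜ fun i => (⊥ : Submodule R (V i))) (i : ι) :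
      (∑ j, (x j : ∀ i, V i)) i = (x i : ∀ i, V i) i := by
    rw [Finset.sum_apply]
    exact Finset.sum_eq_single i (fun j _ hj => (x j).2 i hj.symm)
      fun hi => (hi (Finset.mem_univ i)).elim
  refine (isInternal_iff_bijective_sum _).mpr ⟨fun x y hxy => ?_, fun v => ?_⟩
  · refine funext fun j => Subtype.ext (funext fun i => ?_)
    by_cases hi : i = j
    · subst hi
      rw [← sum_apply, ← sum_apply]
      exact congrFun hxy i
    · exact ((x j).2 i hi).trans ((y j).2 i hi).symm
  · refine ⟨fun j => ⟨Pi.single j (v j), fun i hi => Pi.single_eq_of_ne hi _⟩, funext fun i => ?_⟩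
    exact (sum_apply _ i).trans (Pi.single_eq_same i (v i))

end DirectSum

namespace CycMod

/-! ### The operators of a cyclic module -/

section Operators

variable (C : CycMod) {n i j : ℕ}

theorem d_d_apply (h : i ≤ j) (hj : j ≤ n + 1) (x : C.X (n + 2)) :
    C.d n i (C.d (n + 1) (j + 1) x) = C.d n j (C.d (n + 1) i x) :=
  LinearMap.congr_fun (C.dd n i (j + 1) (by omega) (by omega)) x

theorem s_s_apply (h : i ≤ j) (hj : j ≤ n) (x : C.X n) :
    C.s (n + 1) i (C.s n j x) = C.s (n + 1) (j + 1) (C.s n i x) :=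
  LinearMap.congr_fun (C.ss n i j h hj) x

theorem d_s_apply_of_le (h : i ≤ j) (hj : j ≤ n) (x : C.X (n + 1)) :
    C.d (n + 1) i (C.s (n + 1) (j + 1) x) = C.s n j (C.d n i x) :=
  LinearMap.congr_fun (C.ds_lt n i (j + 1) (by omega) (by omega)) x

theorem d_s_apply_self (hj : j ≤ n) (x : C.X n) : C.d n j (C.s n j x) = x :=
  LinearMap.congr_fun (C.ds_eq n j hj).1 x

theorem d_succ_s_apply_self (hj : j ≤ n) (x : C.X n) : C.d n (j + 1) (C.s n j x) = x :=
  LinearMap.congr_fun (C.ds_eq n j hj).2 x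

theorem d_succ_s_apply_of_lt (h : j < i) (hi : i ≤ n + 1) (x : C.X (n + 1)) :
    C.d (n + 1) (i + 1) (C.s (n + 1) j x) = C.s n j (C.d n i x) :=
  LinearMap.congr_fun (C.ds_gt n (i + 1) j (by omega) (by omega)) x

theorem d_succ_t_apply (hi : i ≤ n) (x : C.X (n + 1)) :
    C.d n (i + 1) (C.t (n + 1) x) = C.t n (C.d n i x) :=
  LinearMap.congr_fun (C.dt n (i + 1) (by omega) (by omega)) x

theorem d_zero_t_apply (x : C.X (n + 1)) : C.d n 0 (C.t (n + 1) x) = C.d n (n + 1) x :=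
  LinearMap.congr_fun (C.d0t n) x

theorem s_succ_t_apply (hi : i < n) (x : C.X n) :
    C.s n (i + 1) (C.t n x) = C.t (n + 1) (C.s n i x) :=
  LinearMap.congr_fun (C.st n (i + 1) (by omega) hi) x

theorem s_zero_t_apply (x : C.X n) : C.s n 0 (C.t n x) = C.t (n + 1) (C.t (n + 1) (C.s n n x)) :=
  LinearMap.congr_fun (C.s0t n) x

theorem t_pow_card_apply (x : C.X n) : (C.t n ^ (n + 1)) x = x :=
  LinearMap.congr_fun (C.t_ord n) x

theorem t_pow_succ_apply (k : ℕ) (x : C.X n) : (C.t n ^ (k + 1)) x = C.t n ((C.t n ^ k) x) := by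
  rw [pow_succ', Module.End.mul_apply]

theorem bd_apply (x : C.X (n + 1)) : C.bd n x = ∑ i ∈ Finset.range (n + 2), C.d n i x := by
  rw [bd, LinearMap.sum_apply]

theorem bd'_apply (x : C.X (n + 1)) : C.bd' n x = ∑ i ∈ Finset.range (n + 1), C.d n i x := by
  rw [bd', LinearMap.sum_apply]

theorem bd_eq_bd'_add (x : C.X (n + 1)) : C.bd n x = C.bd' n x + C.d n (n + 1) x := by
  rw [bd_apply, bd'_apply, Finset.sum_range_succ]

/-- The cases `m = n + 2` and `m = n + 1` are `∂∂ = 0` and `b'b' = 0`. -/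
theorem sum_d_sum_d {m : ℕ} (hm : m ≤ n + 2) (x : C.X (n + 2)) :
    ∑ i ∈ Finset.range m, C.d n i (∑ j ∈ Finset.range (m + 1), C.d (n + 1) j x) = 0 := by
  simp only [map_sum]
  rw [← Finset.sum_product']
  refine Finset.sum_involution
    (fun a _ => if a.1 < a.2 then (a.2 - 1, a.1) else (a.2, a.1 + 1)) ?_ ?_ ?_ ?_
  · rintro ⟨i, j⟩ hij
    simp only [Finset.mem_product, Finset.mem_range] at hij
    dsimp only
    split_ifs with h
    · obtain ⟨j, rfl⟩ := Nat.exists_eq_add_of_lt h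
      rw [C.d_d_apply (by omega) (by omega)]
      exact ZModModule.add_self _
    · rw [C.d_d_apply (by omega : j ≤ i) (by omega)]
      exact ZModModule.add_self _
  · rintro ⟨i, j⟩ _ _
    dsimp only
    split_ifs <;> simp only [ne_eq, Prod.mk.injEq] <;> omega
  · rintro ⟨i, j⟩ hij
    simp only [Finset.mem_product, Finset.mem_range] at hij ⊢
    split_ifs <;> dsimp only <;> omega
  · rintro ⟨i, j⟩ _
    by_cases h : i < j
    · have h' : ¬ j - 1 < i := by omega
      simp only [h, h', if_true, if_false, Nat.sub_add_cancel (Nat.one_le_of_lt h)]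
    · have h' : j < i + 1 := by omega
      simp only [h, h', if_true, if_false, Nat.add_sub_cancel]

theorem bd_bd (x : C.X (n + 2)) : C.bd n (C.bd (n + 1) x) = 0 := by
  rw [bd_apply, bd_apply, C.sum_d_sum_d le_rfl]

theorem bd'_bd' (x : C.X (n + 2)) : C.bd' n (C.bd' (n + 1) x) = 0 := by
  rw [bd'_apply, bd'_apply, C.sum_d_sum_d (Nat.le_succ _)]

theorem bd_add_t (x : C.X (n + 1)) :
    C.bd n (x + C.t (n + 1) x) = C.bd' n x + C.t n (C.bd' n x) := by
  have bd_t : C.bd n (C.t (n + 1) x) = C.t n (C.bd' n x) + C.d n (n + 1) x := by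
    rw [bd_apply, Finset.sum_range_succ', d_zero_t_apply, bd'_apply, map_sum]
    congr 1
    refine Finset.sum_congr rfl fun i hi => C.d_succ_t_apply ?_ x
    exact Nat.lt_succ_iff.mp (Finset.mem_range.mp hi)
  rw [map_add, bd_t, bd_eq_bd'_add, add_comm (C.t n _), ZModModule.add_add_add_cancel]

theorem d_t_pow_apply {k : ℕ} (h : i + k = j) (hj : j ≤ n + 1) (x : C.X (n + 1)) :
    C.d n j ((C.t (n + 1) ^ k) x) = (C.t n ^ k) (C.d n i x) := by
  subst h
  induction k with
  | zero => rfl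
  | succ k ih =>
    rw [t_pow_succ_apply, ← add_assoc, C.d_succ_t_apply (by omega), ih (by omega),
      t_pow_succ_apply]

theorem d_t_pow_succ_apply (hi : i ≤ n + 1) (x : C.X (n + 1)) :
    C.d n i ((C.t (n + 1) ^ (i + 1)) x) = (C.t n ^ i) (C.d n (n + 1) x) := by
  rw [pow_succ, Module.End.mul_apply, C.d_t_pow_apply (zero_add i) hi, d_zero_t_apply]

theorem d_t_pow_succ_add_apply {k : ℕ} (hi : i ≤ n + 1) (hk : j + k = n + 1) (x : C.X (n + 1)) :
    C.d n i ((C.t (n + 1) ^ (i + 1 + k)) x) = (C.t n ^ (i + k)) (C.d n j x) := by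
  rw [pow_add, Module.End.mul_apply, C.d_t_pow_succ_apply hi, C.d_t_pow_apply hk le_rfl, pow_add,
    Module.End.mul_apply]

theorem s_t_pow_apply {k : ℕ} (h : i + k = j) (hj : j ≤ n) (x : C.X n) :
    C.s n j ((C.t n ^ k) x) = (C.t (n + 1) ^ k) (C.s n i x) := by
  subst h
  induction k with
  | zero => rfl
  | succ k ih =>
    rw [t_pow_succ_apply, ← add_assoc, C.s_succ_t_apply (by omega), ih (by omega),
      t_pow_succ_apply]

theorem s_t_pow_succ_add_apply {k : ℕ} (hi : i ≤ n) (hk : j + k = n) (x : C.X n) :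
    C.s n i ((C.t n ^ (i + 1 + k)) x) = (C.t (n + 1) ^ (i + 2 + k)) (C.s n j x) := by
  rw [pow_add, pow_succ, Module.End.mul_apply, Module.End.mul_apply,
    C.s_t_pow_apply (zero_add i) hi, s_zero_t_apply, C.s_t_pow_apply hk le_rfl]
  simp only [pow_add, Module.End.mul_apply, pow_two]

variable (n) in
/-- The norm operator `N = ∑ tⁱ` of the cyclic group action. -/
def norm : C.X n →ₗ[ZMod 2] C.X n := ∑ i ∈ Finset.range (n + 1), C.t n ^ i

theorem norm_apply (x : C.X n) : C.norm n x = ∑ i ∈ Finset.range (n + 1), (C.t n ^ i) x := by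
  rw [norm, LinearMap.sum_apply]

theorem norm_t (x : C.X n) : C.norm n (C.t n x) = C.norm n x := by
  rw [norm_apply, norm_apply, Finset.sum_range_succ, Finset.sum_range_succ',
    ← Module.End.mul_apply, ← pow_succ, t_pow_card_apply]
  rfl

theorem t_norm (x : C.X n) : C.t n (C.norm n x) = C.norm n x := by
  rw [norm_apply, map_sum, Finset.sum_range_succ, Finset.sum_range_succ', ← t_pow_succ_apply,
    t_pow_card_apply]
  simp only [t_pow_succ_apply, pow_zero, Module.End.one_apply]

theorem norm_t_pow (k : ℕ) (x : C.X n) : C.norm n ((C.t n ^ k) x) = C.norm n x := by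
  induction k with
  | zero => rfl
  | succ k ih => rw [t_pow_succ_apply, norm_t, ih]

theorem t_pow_norm (k : ℕ) (x : C.X n) : (C.t n ^ k) (C.norm n x) = C.norm n x := by
  induction k with
  | zero => rfl
  | succ k ih => rw [t_pow_succ_apply, ih, t_norm]

theorem bd'_norm_eq_norm_d_norm (x : C.X (n + 1)) :
    C.bd' n (C.norm (n + 1) x) = C.norm n (C.d n (n + 1) (C.norm (n + 1) x)) := by
  rw [bd'_apply, C.norm_apply (C.d n (n + 1) _)]
  refine Finset.sum_congr rfl fun i hi => ?_
  rw [Finset.mem_range] at hi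
  rw [← C.d_t_pow_succ_apply (by omega), t_pow_norm]

theorem norm_bd_eq_norm_d_norm (x : C.X (n + 1)) :
    C.norm n (C.bd n x) = C.norm n (C.d n (n + 1) (C.norm (n + 1) x)) := by
  rw [bd_apply, C.norm_apply x, map_sum, map_sum, map_sum, ← Finset.sum_range_reflect]
  refine Finset.sum_congr rfl fun i hi => ?_
  rw [Finset.mem_range] at hi
  have hx : (C.t (n + 1) ^ (n + 1 - i + 1)) ((C.t (n + 1) ^ i) x) = x := by
    rw [← Module.End.mul_apply, ← pow_add, show n + 1 - i + 1 + i = n + 2 by omega,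
      t_pow_card_apply]
  rw [show n + 2 - 1 - i = n + 1 - i by omega]
  conv_lhs => rw [← hx]
  rw [C.d_t_pow_succ_apply (by omega), norm_t_pow]

theorem bd'_norm (x : C.X (n + 1)) : C.bd' n (C.norm (n + 1) x) = C.norm n (C.bd n x) :=
  (C.bd'_norm_eq_norm_d_norm x).trans (C.norm_bd_eq_norm_d_norm x).symm

variable (n) in
/-- The extra degeneracy `t ∘ s_n`, a contracting homotopy of the `b'`-complex. -/
def extraDegeneracy : C.X n →ₗ[ZMod 2] C.X (n + 1) := C.t (n + 1) ∘ₗ C.s n n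

theorem bd'_extraDegeneracy_zero (x : C.X 0) : C.bd' 0 (C.extraDegeneracy 0 x) = x := by
  rw [bd'_apply, Finset.sum_range_one, extraDegeneracy, LinearMap.comp_apply, d_zero_t_apply,
    C.d_succ_s_apply_self le_rfl]

theorem bd'_extraDegeneracy_succ (x : C.X (n + 1)) :
    C.bd' (n + 1) (C.extraDegeneracy (n + 1) x) = x + C.extraDegeneracy n (C.bd' n x) := by
  rw [bd'_apply, Finset.sum_range_succ']
  simp only [extraDegeneracy, LinearMap.comp_apply]
  rw [d_zero_t_apply, C.d_succ_s_apply_self le_rfl, bd'_apply]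
  refine (add_comm _ _).trans (congrArg (x + ·) ?_)
  simp only [map_sum]
  refine Finset.sum_congr rfl fun i hi => ?_
  rw [Finset.mem_range] at hi
  rw [C.d_succ_t_apply (by omega), C.d_s_apply_of_le (by omega) le_rfl]

theorem exists_bd'_eq_of_bd'_eq_zero {x : C.X (n + 1)} (hx : C.bd' n x = 0) :
    ∃ z, C.bd' (n + 1) z = x :=
  ⟨C.extraDegeneracy (n + 1) x, by rw [bd'_extraDegeneracy_succ, hx, map_zero, add_zero]⟩

end Operators

/-! ### The cyclic bicomplex -/

section Bicomplex

variable (C : CycMod) {p q n : ℕ}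

variable (p q) in
/-- The vertical differential of column `p`. -/
def vert : C.X (q + 1) →ₗ[ZMod 2] C.X q := if Even p then C.bd q else C.bd' q

variable (p q) in
/-- The horizontal differential from column `p + 1` to column `p`. -/
def horiz : C.X q →ₗ[ZMod 2] C.X q := if Even p then LinearMap.id + C.t q else C.norm q

theorem vert_of_even (hp : Even p) : C.vert p q = C.bd q := if_pos hp

theorem vert_of_not_even (hp : ¬ Even p) : C.vert p q = C.bd' q := if_neg hp

theorem vert_zero : C.vert 0 q = C.bd q := C.vert_of_even Even.zero

theorem horiz_zero : C.horiz 0 q = LinearMap.id + C.t q := if_pos Even.zero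

theorem vert_vert (x : C.X (q + 2)) : C.vert p q (C.vert p (q + 1) x) = 0 := by
  unfold vert
  split_ifs
  · exact C.bd_bd x
  · exact C.bd'_bd' x

theorem horiz_horiz (x : C.X q) : C.horiz p q (C.horiz (p + 1) q x) = 0 := by
  unfold horiz
  by_cases hp : Even p
  · simp only [hp, Nat.even_add_one, not_true_eq_false, if_true, if_false, LinearMap.add_apply,
      LinearMap.id_apply, t_norm, ZModModule.add_self]
  · simp only [hp, Nat.even_add_one, not_false_eq_true, if_true, if_false, LinearMap.add_apply,
      LinearMap.id_apply, map_add, norm_t, ZModModule.add_self]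

theorem vert_horiz (x : C.X (q + 1)) :
    C.vert p q (C.horiz p (q + 1) x) = C.horiz p q (C.vert (p + 1) q x) := by
  unfold horiz vert
  by_cases hp : Even p
  · simp only [hp, Nat.even_add_one, not_true_eq_false, if_true, if_false]
    exact C.bd_add_t x
  · simp only [hp, Nat.even_add_one, not_false_eq_true, if_true, if_false]
    exact C.bd'_norm x

/-- Families `y p q` of elements of the bicomplex. The homogeneous ones of a given total degree,
see `fil`, have finite support and hence are the chains of the total complex. -/
abbrev Chain := ∀ (_p q : ℕ), C.X q

/-- The differential of the total complex. -/
def totalD : C.Chain →ₗ[ZMod 2] C.Chain where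
  toFun y p q := C.vert p q (y p (q + 1)) + C.horiz p q (y (p + 1) q)
  map_add' y z := by
    funext p q
    simp only [Pi.add_apply, map_add]
    abel
  map_smul' c y := by
    funext p q
    simp only [Pi.smul_apply, LinearMap.map_smul, smul_add, RingHom.id_apply]

theorem totalD_apply (y : C.Chain) (p q : ℕ) :
    C.totalD y p q = C.vert p q (y p (q + 1)) + C.horiz p q (y (p + 1) q) := rfl

theorem totalD_totalD (y : C.Chain) : C.totalD (C.totalD y) = 0 := by
  funext p q
  simp only [totalD_apply, map_add, vert_vert, horiz_horiz, vert_horiz, zero_add, add_zero,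
    ZModModule.add_self, Pi.zero_apply]

theorem vert_totalD (y : C.Chain) (hy : C.totalD y (p + 1) q = 0) :
    C.vert p q (C.totalD y p (q + 1)) = 0 := by
  have h := congrFun (congrFun (C.totalD_totalD y) p) q
  rwa [totalD_apply, hy, map_zero, add_zero] at h

variable (p q) in
/-- The family with the single entry `x` at position `(p, q)`. -/
def single : C.X q →ₗ[ZMod 2] C.Chain :=
  LinearMap.single (ZMod 2) (fun _ : ℕ => ∀ q, C.X q) p ∘ₗ LinearMap.single (ZMod 2) C.X q

theorem single_same (x : C.X q) : C.single p q x p q = x := by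
  simp only [single, LinearMap.comp_apply, LinearMap.single_apply, Pi.single_eq_same]

theorem single_of_ne (x : C.X q) {p' q' : ℕ} (h : p' ≠ p ∨ q' ≠ q) :
    C.single p q x p' q' = 0 := by
  simp only [single, LinearMap.comp_apply, LinearMap.single_apply]
  by_cases hp : p' = p
  · subst hp
    rw [Pi.single_eq_same, Pi.single_eq_of_ne (by tauto)]
  · rw [Pi.single_eq_of_ne hp, Pi.zero_apply]

/-- The vertical cycles of column `p`. -/
def colCycles (p : ℕ) : ∀ q, Submodule (ZMod 2) (C.X q)
  | 0 => ⊤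
  | q + 1 => LinearMap.ker (C.vert p q)

theorem colCycles_of_even (hp : Even p) : C.colCycles p q = C.cyc q := by
  cases q with
  | zero => rfl
  | succ q => exact congrArg LinearMap.ker (C.vert_of_even hp)

theorem totalD_mem_colCycles (y : C.Chain) (hy : ∀ q, C.totalD y (p + 1) q = 0) :
    C.totalD y p q ∈ C.colCycles p q := by
  cases q with
  | zero => exact Submodule.mem_top
  | succ q => exact C.vert_totalD y (hy q)

theorem exists_vert_eq_of_not_even (hp : ¬ Even p) {x : C.X q} (hx : x ∈ C.colCycles p q) :
    ∃ z, C.vert p q z = x := by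
  simp only [C.vert_of_not_even hp]
  cases q with
  | zero => exact ⟨_, C.bd'_extraDegeneracy_zero x⟩
  | succ q =>
    refine C.exists_bd'_eq_of_bd'_eq_zero ?_
    rw [← C.vert_of_not_even hp]
    exact hx

/-- The families of total degree `n` supported in the columns of index at most `P`. -/
def fil (P n : ℤ) : Submodule (ZMod 2) C.Chain where
  carrier := {y | ∀ p q : ℕ, ¬ ((p : ℤ) ≤ P ∧ (p : ℤ) + q = n) → y p q = 0}
  add_mem' hy hz p q h := by rw [Pi.add_apply, Pi.add_apply, hy p q h, hz p q h, add_zero]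
  zero_mem' _ _ _ := rfl
  smul_mem' c y hy p q h := by rw [Pi.smul_apply, Pi.smul_apply, hy p q h, smul_zero]

variable {C}

theorem eq_zero_of_mem_fil {P n : ℤ} (hP : P < 0) {y : C.Chain} (hy : y ∈ C.fil P n) : y = 0 := by
  funext p q
  exact hy p q (by omega)

theorem totalD_mem_fil {P n : ℤ} {y : C.Chain} (hy : y ∈ C.fil P n) :
    C.totalD y ∈ C.fil P (n - 1) := by
  intro p q h
  rw [totalD_apply, hy p (q + 1) (by omega), hy (p + 1) q (by omega), map_zero, map_zero, add_zero]

theorem single_mem_fil {P n : ℤ} (hp : (p : ℤ) ≤ P) (hn : (p : ℤ) + q = n) (x : C.X q) :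
    C.single p q x ∈ C.fil P n :=
  fun _ _ h => C.single_of_ne x (by omega)

variable (C)

/-- Injectivity of `HH_n → CH_n` for all `n`: an element of `HC_n` which bounds in the total
complex already bounds in column `0`. -/
def HHInjectsCH : Prop :=
  ∀ (n : ℕ), ∀ y ∈ C.fil (n + 1) (n + 1), (∀ p q, C.totalD y (p + 1) q = 0) →
    C.totalD y 0 n ∈ LinearMap.range (C.bd n)

end Bicomplex

/-! ### Degeneration and injectivity of `HH → CH` -/

section SpectralSequence

variable (C : CycMod)

/-- The family underlying an element of the cyclic bicomplex. -/
def toChain : C.CC.T →ₗ[ZMod 2] C.Chain where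
  toFun (Y : Π₀ pq : ℕ × ℕ, C.X pq.2) p q := Y (p, q)
  map_add' _ _ := rfl
  map_smul' _ _ := rfl

/-- The element of the cyclic bicomplex with the single entry `x` at position `(p, q)`. -/
def ccSingle (p q : ℕ) : C.X q →ₗ[ZMod 2] C.CC.T :=
  DFinsupp.lsingle (M := fun pq : ℕ × ℕ => C.X pq.2) (p, q)

theorem toChain_ccSingle (p q : ℕ) (x : C.X q) : C.toChain (C.ccSingle p q x) = C.single p q x := by
  funext a b
  by_cases h : a = p ∧ b = q
  · obtain ⟨rfl, rfl⟩ := h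
    rw [single_same]
    exact DFinsupp.single_eq_same
  · rw [single_of_ne _ _ (by tauto)]
    exact DFinsupp.single_eq_of_ne (by simpa only [ne_eq, Prod.mk.injEq] using h)

theorem dv_ccSingle_zero (p : ℕ) (x : C.X 0) : C.CC.dv (C.ccSingle p 0 x) = 0 :=
  DFinsupp.lsum_single (M := fun pq : ℕ × ℕ => C.X pq.2) (N := Π₀ pq : ℕ × ℕ, C.X pq.2) ..

theorem dv_ccSingle_succ (p q : ℕ) (x : C.X (q + 1)) :
    C.CC.dv (C.ccSingle p (q + 1) x) = C.ccSingle p q (C.vert p q x) :=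
  DFinsupp.lsum_single (M := fun pq : ℕ × ℕ => C.X pq.2) (N := Π₀ pq : ℕ × ℕ, C.X pq.2) ..

theorem dh_ccSingle_zero (q : ℕ) (x : C.X q) : C.CC.dh (C.ccSingle 0 q x) = 0 :=
  DFinsupp.lsum_single (M := fun pq : ℕ × ℕ => C.X pq.2) (N := Π₀ pq : ℕ × ℕ, C.X pq.2) ..

theorem dh_ccSingle_succ (p q : ℕ) (x : C.X q) :
    C.CC.dh (C.ccSingle (p + 1) q x) = C.ccSingle p q (C.horiz p q x) :=
  DFinsupp.lsum_single (M := fun pq : ℕ × ℕ => C.X pq.2) (N := Π₀ pq : ℕ × ℕ, C.X pq.2) ..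

theorem toChain_dv_ccSingle (a b : ℕ) (x : C.X b) (p q : ℕ) :
    C.toChain (C.CC.dv (C.ccSingle a b x)) p q = C.vert p q (C.single a b x p (q + 1)) := by
  cases b with
  | zero => rw [dv_ccSingle_zero, single_of_ne _ _ (by omega), map_zero, map_zero]; rfl
  | succ b =>
    rw [dv_ccSingle_succ, toChain_ccSingle]
    by_cases h : p = a ∧ q = b
    · obtain ⟨rfl, rfl⟩ := h
      rw [single_same, single_same]
    · rw [single_of_ne _ _ (by omega), single_of_ne _ _ (by omega), map_zero]

theorem toChain_dh_ccSingle (a b : ℕ) (x : C.X b) (p q : ℕ) :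
    C.toChain (C.CC.dh (C.ccSingle a b x)) p q = C.horiz p q (C.single a b x (p + 1) q) := by
  cases a with
  | zero => rw [dh_ccSingle_zero, single_of_ne _ _ (by omega), map_zero, map_zero]; rfl
  | succ a =>
    rw [dh_ccSingle_succ, toChain_ccSingle]
    by_cases h : p = a ∧ q = b
    · obtain ⟨rfl, rfl⟩ := h
      rw [single_same, single_same]
    · rw [single_of_ne _ _ (by omega), single_of_ne _ _ (by omega), map_zero]

theorem toChain_D (Y : C.CC.T) : C.toChain (C.CC.D Y) = C.totalD (C.toChain Y) := by
  suffices h : C.toChain ∘ₗ C.CC.D = C.totalD ∘ₗ C.toChain from LinearMap.congr_fun h Y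
  refine DFinsupp.lhom_ext (M := fun pq : ℕ × ℕ => C.X pq.2) fun ⟨a, b⟩ x => ?_
  change C.toChain (C.CC.dh (C.ccSingle a b x) + C.CC.dv (C.ccSingle a b x)) =
    C.totalD (C.toChain (C.ccSingle a b x))
  funext p q
  rw [map_add, Pi.add_apply, Pi.add_apply, toChain_dh_ccSingle, toChain_dv_ccSingle,
    toChain_ccSingle, totalD_apply, add_comm]

theorem exists_toChain_eq {P n : ℤ} {y : C.Chain} (hy : y ∈ C.fil P n) :
    ∃ Y, C.toChain Y = y := by
  classical
  let s := Finset.range (n.toNat + 1) ×ˢ Finset.range (n.toNat + 1)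
  refine ⟨(DFinsupp.mk s fun pq => y pq.1.1 pq.1.2 : Π₀ pq : ℕ × ℕ, C.X pq.2), ?_⟩
  funext p q
  change (DFinsupp.mk s fun pq => y pq.1.1 pq.1.2 : Π₀ pq : ℕ × ℕ, C.X pq.2) (p, q) = _
  rw [DFinsupp.mk_apply]
  split_ifs with h
  · rfl
  · simp only [s, Finset.mem_product, Finset.mem_range] at h
    exact (hy p q (by omega)).symm

theorem Fcol_eq_comap_fil (P n : ℤ) : C.CC.Fcol P n = (C.fil P n).comap C.toChain := by
  classical
  apply le_antisymm
  · refine iSup₂_le fun i hi => ?_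
    change (if 0 ≤ i ∧ 0 ≤ n - i then
      Submodule.map (C.ccSingle i.toNat (n - i).toNat) ⊤ else ⊥) ≤ _
    split_ifs with h
    · rintro _ ⟨x, -, rfl⟩
      rw [Submodule.mem_comap, toChain_ccSingle]
      exact single_mem_fil (by omega) (by omega) x
    · exact bot_le
  · intro Y hY
    have hsum : Y = DFinsupp.sum (β := fun pq : ℕ × ℕ => C.X pq.2) Y
        fun pq x => C.ccSingle pq.1 pq.2 x :=
      (DFinsupp.sum_single (β := fun pq : ℕ × ℕ => C.X pq.2)).symm
    rw [hsum]
    refine Submodule.sum_mem _ fun ⟨p, q⟩ hpq => ?_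
    have hdeg : (p : ℤ) ≤ P ∧ (p : ℤ) + q = n := by
      by_contra hc
      exact (DFinsupp.mem_support_iff (β := fun pq : ℕ × ℕ => C.X pq.2)).mp hpq (hY p q hc)
    refine Submodule.mem_iSup_of_mem (p : ℤ) (Submodule.mem_iSup_of_mem hdeg.1 ?_)
    change _ ∈ (if (0 : ℤ) ≤ p ∧ 0 ≤ n - p then
      Submodule.map (C.ccSingle (p : ℤ).toNat (n - p).toNat) ⊤ else ⊥)
    rw [if_pos (by omega), Int.toNat_natCast, show (n - p).toNat = q by omega]
    exact ⟨_, trivial, rfl⟩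

theorem mem_Zpage_iff (r p n : ℤ) (Y : C.CC.T) :
    Y ∈ C.CC.Zpage C.CC.Fcol r p n ↔
      C.toChain Y ∈ C.fil p n ∧ C.totalD (C.toChain Y) ∈ C.fil (p - r) (n - 1) := by
  have hN : C.CC.N = ⊥ := rfl
  rw [RelBicx.Zpage, hN, sup_bot_eq, sup_bot_eq, Fcol_eq_comap_fil, Fcol_eq_comap_fil,
    Submodule.mem_inf, Submodule.mem_comap, Submodule.mem_comap, Submodule.mem_comap, toChain_D]

theorem zeroDiff_Fcol_iff (r p n : ℤ) :
    C.CC.zeroDiff C.CC.Fcol r p n ↔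
      ∀ y ∈ C.fil p n, C.totalD y ∈ C.fil (p - r) (n - 1) →
        ∃ y' ∈ C.fil (p - 1) n, C.totalD y - C.totalD y' ∈ C.fil (p - r - 1) (n - 1) := by
  have hN : C.CC.N = ⊥ := rfl
  rw [RelBicx.zeroDiff, hN, sup_bot_eq]
  constructor
  · intro h y hy hDy
    obtain ⟨Y, rfl⟩ := C.exists_toChain_eq hy
    obtain ⟨_, ⟨Y', hY', rfl⟩, Z, hZ, hsum⟩ := Submodule.mem_sup.mp
      (h (Submodule.mem_map_of_mem ((C.mem_Zpage_iff ..).mpr ⟨hy, hDy⟩)))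
    refine ⟨C.toChain Y', ((C.mem_Zpage_iff ..).mp hY').1, ?_⟩
    rw [← toChain_D, ← toChain_D, ← hsum, map_add, add_sub_cancel_left]
    exact ((C.mem_Zpage_iff ..).mp hZ).1
  · rintro h _ ⟨Y, hY, rfl⟩
    obtain ⟨hYfil, hDY⟩ := (C.mem_Zpage_iff ..).mp hY
    obtain ⟨y', hy', hsub⟩ := h _ hYfil hDY
    obtain ⟨Y', rfl⟩ := C.exists_toChain_eq hy'
    refine Submodule.mem_sup.mpr ⟨C.CC.D Y', Submodule.mem_map_of_mem ?_,
      C.CC.D Y - C.CC.D Y', ?_, add_sub_cancel _ _⟩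
    · refine (C.mem_Zpage_iff ..).mpr ⟨hy', ?_⟩
      have hle : C.fil (p - r - 1) (n - 1) ≤ C.fil (p - r) (n - 1) :=
        fun _ hz a b hab => hz a b (by omega)
      rw [sub_sub_sub_cancel_right, ← sub_sub_cancel (C.totalD (C.toChain Y)) (C.totalD _)]
      exact Submodule.sub_mem _ hDY (hle hsub)
    · refine (C.mem_Zpage_iff ..).mpr ⟨?_, ?_⟩
      · rwa [map_sub, toChain_D, toChain_D]
      · rw [map_sub, toChain_D, toChain_D, map_sub, totalD_totalD, totalD_totalD, sub_zero]
        exact Submodule.zero_mem _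

theorem exists_mem_fil_zero_of_HdRdegenAt_one (h : C.HdRdegenAt 1) {n : ℤ} (P : ℕ) (y : C.Chain)
    (hy : y ∈ C.fil P n) (hDy : C.totalD y ∈ C.fil 0 (n - 1)) :
    ∃ y' ∈ C.fil 0 n, C.totalD y' = C.totalD y := by
  induction P generalizing y with
  | zero => exact ⟨y, hy, rfl⟩
  | succ P ih =>
    obtain ⟨y', hy', hsub⟩ := (C.zeroDiff_Fcol_iff (P + 1) (P + 1) n).mp (h _ (by omega) _ _) y
      (by exact_mod_cast hy) (by rwa [sub_self])
    have heq : C.totalD y = C.totalD y' :=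
      sub_eq_zero.mp (eq_zero_of_mem_fil (by omega) hsub)
    rw [add_sub_cancel_right] at hy'
    obtain ⟨z, hz, hDz⟩ := ih y' hy' (heq ▸ hDy)
    exact ⟨z, hz, hDz.trans heq.symm⟩

theorem HHInjectsCH_of_HdRdegenAt_one (h : C.HdRdegenAt 1) : C.HHInjectsCH := by
  intro n y hy hDy
  have hDy0 : C.totalD y ∈ C.fil 0 (n + 1 - 1) := by
    intro p q hpq
    cases p with
    | zero => exact totalD_mem_fil hy 0 q (by omega)
    | succ p => exact hDy p q
  obtain ⟨y', hy', hDy'⟩ := C.exists_mem_fil_zero_of_HdRdegenAt_one h (n + 1) y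
    (by exact_mod_cast hy) hDy0
  refine ⟨y' 0 (n + 1), ?_⟩
  rw [← hDy', totalD_apply, hy' (0 + 1) n (by omega), map_zero, add_zero, vert_zero]

theorem exists_vert_eq_totalD (hC : C.HHInjectsCH) {n : ℤ} {p q : ℕ} (hn : (p : ℤ) + q + 1 = n)
    {y : C.Chain} (hy : y ∈ C.fil n n) (hDy : ∀ a b, C.totalD y (p + 1 + a) b = 0) :
    ∃ z, C.vert p q z = C.totalD y p q := by
  by_cases hp : Even p
  · have hvert (a b) : C.vert (p + a) b = C.vert a b := by
      simp only [vert, Nat.even_add, hp, true_iff]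
    have hhoriz (a b) : C.horiz (p + a) b = C.horiz a b := by
      simp only [horiz, Nat.even_add, hp, true_iff]
    have hD (a b) : C.totalD (fun a => y (p + a)) a b = C.totalD y (p + a) b := by
      rw [totalD_apply, totalD_apply, hvert, hhoriz, add_assoc]
    rw [← add_zero p, ← hD, hvert]
    refine (C.vert_zero (q := q)) ▸ hC q (fun a => y (p + a)) ?_ fun a b => ?_
    · intro a b hab
      exact hy _ _ (by push_cast; omega)
    · rw [hD, ← add_assoc, add_right_comm, hDy]
  · exact C.exists_vert_eq_of_not_even hp (C.totalD_mem_colCycles y fun b => hDy 0 b)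

theorem HdRdegenAt_one_of_HHInjectsCH (hC : C.HHInjectsCH) : C.HdRdegenAt 1 := by
  intro r hr p n
  rw [zeroDiff_Fcol_iff]
  intro y hy hDy
  by_cases hcol : 0 ≤ p - r ∧ p - r ≤ n - 1
  · obtain ⟨c, hc⟩ := Int.eq_ofNat_of_zero_le hcol.1
    obtain ⟨q, hq⟩ := Int.eq_ofNat_of_zero_le (sub_nonneg.mpr hcol.2)
    obtain ⟨z, hz⟩ := C.exists_vert_eq_totalD hC (p := c) (q := q) (n := n) (by omega)
      (fun a b hab => hy a b (by omega)) (fun a b => hDy _ _ (by push_cast; omega))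
    have hzfil : C.single c (q + 1) z ∈ C.fil (p - r) n :=
      single_mem_fil hc.ge (by push_cast; omega) z
    refine ⟨C.single c (q + 1) z, fun a b hab => hzfil a b (by omega), fun a b hab => ?_⟩
    by_cases hac : a = c ∧ b = q
    · obtain ⟨rfl, rfl⟩ := hac
      rw [Pi.sub_apply, Pi.sub_apply, totalD_apply (y := C.single _ _ z), single_same,
        C.single_of_ne z (by omega), map_zero, add_zero, hz, sub_self]
    · exact Submodule.sub_mem _ hDy (totalD_mem_fil hzfil) a b (by omega)
  · refine ⟨0, Submodule.zero_mem _, fun a b hab => ?_⟩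
    rw [map_zero, sub_zero]
    exact hDy a b (by omega)

theorem HdRdegenAt_one_iff_HHInjectsCH : C.HdRdegenAt 1 ↔ C.HHInjectsCH :=
  ⟨C.HHInjectsCH_of_HdRdegenAt_one, C.HdRdegenAt_one_of_HHInjectsCH⟩

end SpectralSequence

/-! ### Homomorphisms of cyclic modules -/

/-- A homomorphism of cyclic modules. Unlike in `IsCycHom`, commutation is only required with the
operators whose index is in range, the others being junk data. -/
structure Hom (C D : CycMod) where
  app : ∀ n, C.X n →ₗ[ZMod 2] D.X n
  app_d : ∀ n i, i ≤ n + 1 → ∀ x, app n (C.d n i x) = D.d n i (app (n + 1) x)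
  app_s : ∀ n i, i ≤ n → ∀ x, app (n + 1) (C.s n i x) = D.s n i (app n x)
  app_t : ∀ n x, app n (C.t n x) = D.t n (app n x)

/-- The homology of `C` vanishes in all degrees but `j`. -/
def ConcentratedIn (C : CycMod) (j : ℕ) : Prop :=
  ∀ n, n ≠ j → ∀ x ∈ C.cyc n, x ∈ LinearMap.range (C.bd n)

namespace Hom

variable {C D E : CycMod} (f : Hom C D) {n p q : ℕ}

/-- The bundled form of a map of cyclic modules. -/
def ofIsCycHom {f : ∀ n, C.X n →ₗ[ZMod 2] D.X n} (hf : IsCycHom C D f) : Hom C D where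
  app := f
  app_d n i _ := LinearMap.congr_fun (hf.1 n i)
  app_s n i _ := LinearMap.congr_fun (hf.2.1 n i)
  app_t n := LinearMap.congr_fun (hf.2.2 n)

/-- The composition of homomorphisms. -/
def comp (g : Hom D E) (f : Hom C D) : Hom C E where
  app n := g.app n ∘ₗ f.app n
  app_d n i hi x := (congrArg _ (f.app_d n i hi x)).trans (g.app_d n i hi _)
  app_s n i hi x := (congrArg _ (f.app_s n i hi x)).trans (g.app_s n i hi _)
  app_t n x := (congrArg _ (f.app_t n x)).trans (g.app_t n _)

theorem app_bd (x : C.X (n + 1)) : f.app n (C.bd n x) = D.bd n (f.app (n + 1) x) := by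
  rw [bd_apply, bd_apply, map_sum]
  exact Finset.sum_congr rfl fun i hi => f.app_d n i (by grind) x

theorem app_bd' (x : C.X (n + 1)) : f.app n (C.bd' n x) = D.bd' n (f.app (n + 1) x) := by
  rw [bd'_apply, bd'_apply, map_sum]
  exact Finset.sum_congr rfl fun i hi => f.app_d n i (by grind) x

theorem app_t_pow (k : ℕ) (x : C.X n) : f.app n ((C.t n ^ k) x) = (D.t n ^ k) (f.app n x) := by
  induction k with
  | zero => rfl
  | succ k ih => rw [t_pow_succ_apply, t_pow_succ_apply, f.app_t, ih]

theorem app_norm (x : C.X n) : f.app n (C.norm n x) = D.norm n (f.app n x) := by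
  rw [norm_apply, norm_apply, map_sum]
  exact Finset.sum_congr rfl fun i _ => f.app_t_pow i x

theorem app_vert (x : C.X (q + 1)) : f.app q (C.vert p q x) = D.vert p q (f.app (q + 1) x) := by
  unfold vert
  split_ifs
  · exact f.app_bd x
  · exact f.app_bd' x

theorem app_horiz (x : C.X q) : f.app q (C.horiz p q x) = D.horiz p q (f.app q x) := by
  unfold horiz
  split_ifs
  · simp only [LinearMap.add_apply, LinearMap.id_apply, map_add, f.app_t]
  · exact f.app_norm x

theorem app_mem_cyc {x : C.X n} (hx : x ∈ C.cyc n) : f.app n x ∈ D.cyc n := by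
  cases n with
  | zero => exact Submodule.mem_top
  | succ n => exact (f.app_bd x).symm.trans (by rw [LinearMap.mem_ker.mp hx, map_zero])

/-- The map of families of elements of the cyclic bicomplexes induced by `f`. -/
def mapChain : C.Chain →ₗ[ZMod 2] D.Chain where
  toFun y p q := f.app q (y p q)
  map_add' _ _ := funext₂ fun _ _ => map_add ..
  map_smul' _ _ := funext₂ fun _ _ => map_smul ..

theorem mapChain_apply (y : C.Chain) (p q : ℕ) : f.mapChain y p q = f.app q (y p q) := rfl

theorem mapChain_totalD (y : C.Chain) : f.mapChain (C.totalD y) = D.totalD (f.mapChain y) := by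
  funext p q
  rw [mapChain_apply, totalD_apply, totalD_apply, map_add, app_vert, app_horiz]
  rfl

theorem mapChain_single (x : C.X q) : f.mapChain (C.single p q x) = D.single p q (f.app q x) := by
  funext a b
  rw [mapChain_apply]
  by_cases h : a = p ∧ b = q
  · obtain ⟨rfl, rfl⟩ := h
    rw [single_same, single_same]
  · rw [single_of_ne _ _ (by omega), single_of_ne _ _ (by omega), map_zero]

theorem mapChain_mem_fil {P n : ℤ} {y : C.Chain} (hy : y ∈ C.fil P n) :
    f.mapChain y ∈ D.fil P n :=
  fun p q h => by rw [mapChain_apply, hy p q h, map_zero]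

/-- Injectivity on Hochschild homology. -/
def HHInjective : Prop :=
  ∀ n, ∀ x ∈ C.cyc n, f.app n x ∈ LinearMap.range (D.bd n) → x ∈ LinearMap.range (C.bd n)

/-- Surjectivity on Hochschild homology. -/
def HHSurjective : Prop :=
  ∀ n, ∀ y ∈ D.cyc n, ∃ x ∈ C.cyc n, f.app n x - y ∈ LinearMap.range (D.bd n)

theorem isNatQIso_iff :
    IsNatQIso C.X D.X C.bd D.bd f.app ↔ f.HHInjective ∧ f.HHSurjective := by
  constructor
  · rintro ⟨⟨hsurj, hinj⟩, hsucc⟩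
    refine ⟨fun n x hx => ?_, fun n y hy => ?_⟩
    · cases n with
      | zero => exact hinj x
      | succ n => exact (hsucc n).2 x hx
    · cases n with
      | zero => exact (hsurj y).imp fun x hx => ⟨Submodule.mem_top, hx⟩
      | succ n => exact (hsucc n).1 y hy
  · rintro ⟨hinj, hsurj⟩
    exact ⟨⟨fun y => (hsurj 0 y Submodule.mem_top).imp fun x hx => hx.2,
      fun x => hinj 0 x Submodule.mem_top⟩, fun n => ⟨hsurj (n + 1), hinj (n + 1)⟩⟩

end Hom

/-! ### Invariance of the injectivity of `HH → CH` -/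

section Invariance

variable {C D : CycMod} {f : Hom C D}

theorem HHInjectsCH.of_hom (hD : D.HHInjectsCH) (hf : f.HHInjective) : C.HHInjectsCH := by
  intro n y hy hDy
  refine hf n _ ?_ ?_
  · rw [← C.colCycles_of_even Even.zero]
    exact C.totalD_mem_colCycles y (hDy 0)
  · have hmap := f.mapChain_totalD y
    have h := hD n (f.mapChain y) (f.mapChain_mem_fil hy) fun p q => by
      rw [← hmap, Hom.mapChain_apply, hDy, map_zero]
    rwa [← hmap] at h

variable {p q : ℕ} {P n : ℤ}

theorem fil_mono {P' : ℤ} (h : P ≤ P') : C.fil P n ≤ C.fil P' n :=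
  fun _ hy p q hpq => hy p q (by omega)

/-- Members of `fil` have at most one entry in each column. -/
theorem mem_fil_pred {y : C.Chain} (hy : y ∈ C.fil p n) (hn : (p : ℤ) + q = n)
    (htop : y p q = 0) : y ∈ C.fil (p - 1) n := by
  intro a b hab
  by_cases h : a = p ∧ b = q
  · obtain ⟨rfl, rfl⟩ := h
    exact htop
  · exact hy a b (by omega)

theorem totalD_single_same (x : C.X (q + 1)) :
    C.totalD (C.single p (q + 1) x) p q = C.vert p q x := by
  rw [totalD_apply, single_same, single_of_ne _ _ (by omega), map_zero, add_zero]

theorem totalD_single_mem_fil (hn : (p : ℤ) + q = n) (x : C.X (q + 1)) :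
    C.totalD (C.single p (q + 1) x) ∈ C.fil p n := by
  rw [← add_sub_cancel_right n 1]
  exact totalD_mem_fil (single_mem_fil le_rfl (by rw [← hn, Nat.cast_succ, add_assoc]) x)

theorem totalD_top {y : C.Chain} (hy : y ∈ C.fil p n) :
    C.totalD y p q = C.vert p q (y p (q + 1)) := by
  rw [totalD_apply, hy (p + 1) q (by omega), map_zero, add_zero]

theorem top_mem_colCycles {y : C.Chain} (hy : y ∈ C.fil p n) (hDy : ∀ b, C.totalD y p b = 0) :
    y p q ∈ C.colCycles p q := by
  cases q with
  | zero => exact Submodule.mem_top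
  | succ q => exact (totalD_top hy).symm.trans (hDy q)

theorem exists_vert_eq_of_app_eq (hf : f.HHInjective) {x : C.X q} (hx : x ∈ C.colCycles p q)
    {c : D.X (q + 1)} (h : f.app q x = D.vert p q c) : ∃ u, C.vert p q u = x := by
  by_cases hp : Even p
  · rw [colCycles_of_even _ hp] at hx
    rw [vert_of_even _ hp] at h ⊢
    exact hf q x hx ⟨c, h.symm⟩
  · exact C.exists_vert_eq_of_not_even hp hx

theorem exists_add_app_eq_vert (hf : f.HHSurjective) {c : D.X q} (hc : c ∈ D.colCycles p q) :
    ∃ v ∈ C.colCycles p q, ∃ z, c + f.app q v = D.vert p q z := by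
  by_cases hp : Even p
  · rw [colCycles_of_even _ hp] at hc
    obtain ⟨x, hx, z, hz⟩ := hf q c hc
    refine ⟨x, by rwa [colCycles_of_even _ hp], z, ?_⟩
    rw [vert_of_even _ hp, hz, ZModModule.sub_eq_add, add_comm]
  · obtain ⟨z, hz⟩ := D.exists_vert_eq_of_not_even hp hc
    exact ⟨0, Submodule.zero_mem _, z, by rw [map_zero, add_zero, hz]⟩

theorem exists_correction_at_top (hinj : f.HHInjective) (hsurj : f.HHSurjective)
    (hn : (p : ℤ) + q = n) {y : D.Chain} (hy : y ∈ D.fil p n) {w : C.Chain}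
    (hw : w ∈ C.fil p (n - 1)) (hDw : C.totalD w = 0) (hDy : D.totalD y = f.mapChain w) :
    ∃ u z, w + C.totalD (C.single p q u) ∈ C.fil (p - 1) (n - 1) ∧
      y p q + f.app q u = D.vert p q z := by
  have hsingle (u : C.X q) : w + C.totalD (C.single p q u) ∈ C.fil p (n - 1) :=
    Submodule.add_mem _ hw (totalD_mem_fil (single_mem_fil le_rfl hn u))
  cases q with
  | zero =>
    obtain ⟨v, -, z, hz⟩ := exists_add_app_eq_vert hsurj (p := p) (c := y p 0) Submodule.mem_top
    exact ⟨v, z, fun a b hab => hsingle v a b (by omega), hz⟩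
  | succ q =>
    have htop : f.app q (w p q) = D.vert p q (y p (q + 1)) := by
      rw [← totalD_top hy, hDy, Hom.mapChain_apply]
    have hwp : w p q ∈ C.colCycles p q := top_mem_colCycles hw fun b => by rw [hDw]; rfl
    obtain ⟨u, hu⟩ := exists_vert_eq_of_app_eq hinj hwp htop
    have hcyc : y p (q + 1) + f.app (q + 1) u ∈ D.colCycles p (q + 1) := by
      rw [colCycles, LinearMap.mem_ker, map_add, ← f.app_vert, hu, htop, ZModModule.add_self]
    obtain ⟨v, hv, z, hz⟩ := exists_add_app_eq_vert hsurj hcyc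
    refine ⟨u + v, z, mem_fil_pred (hsingle _) (q := q) (by push_cast at hn; omega) ?_, ?_⟩
    · rw [Pi.add_apply, Pi.add_apply, totalD_single_same, map_add, hu, LinearMap.mem_ker.mp hv,
        add_zero, ZModModule.add_self]
    · rw [map_add, ← add_assoc, hz]

theorem exists_totalD_eq_of_mapChain_eq (hinj : f.HHInjective) (hsurj : f.HHSurjective) (N : ℕ) :
    ∀ y ∈ D.fil (N - 1) n, ∀ w ∈ C.fil (N - 1) (n - 1), C.totalD w = 0 →
      D.totalD y = f.mapChain w → ∃ y' ∈ C.fil (N - 1) n, C.totalD y' = w := by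
  induction N with
  | zero =>
    intro y _ w hw _ _
    exact ⟨0, Submodule.zero_mem _, by rw [map_zero, eq_zero_of_mem_fil (by omega) hw]⟩
  | succ N ih =>
    rw [Nat.cast_succ, add_sub_cancel_right]
    intro y hy w hw hDw hDy
    by_cases hN : n < N
    · obtain ⟨y', hy', h⟩ := ih y (fun a b hab => hy a b (by omega)) w
        (fun a b hab => hw a b (by omega)) hDw hDy
      exact ⟨y', fil_mono (by omega) hy', h⟩
    obtain ⟨q, hq⟩ : ∃ q : ℕ, (N : ℤ) + q = n := ⟨(n - N).toNat, by omega⟩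
    obtain ⟨u, z, hw', hz⟩ := exists_correction_at_top hinj hsurj hq hy hw hDw hDy
    have hu := single_mem_fil (C := C) le_rfl hq u
    have hDz := totalD_single_mem_fil hq z
    obtain ⟨y', hy', h⟩ := ih
      (y + f.mapChain (C.single N q u) + D.totalD (D.single N (q + 1) z))
      (mem_fil_pred (Submodule.add_mem _ (Submodule.add_mem _ hy (f.mapChain_mem_fil hu)) hDz) hq
        (by rw [Pi.add_apply, Pi.add_apply, Pi.add_apply, Pi.add_apply, Hom.mapChain_apply,
          single_same, totalD_single_same, hz, ZModModule.add_self]))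
      (w + C.totalD (C.single N q u)) hw' (by rw [map_add, totalD_totalD, hDw, add_zero])
      (by rw [map_add, map_add, totalD_totalD, hDy, add_zero, map_add, f.mapChain_totalD])
    exact ⟨y' + C.single N q u, Submodule.add_mem _ (fil_mono (by omega) hy') hu,
      by rw [map_add, h, add_assoc, ZModModule.add_self, add_zero]⟩

theorem HHInjectsCH.map (hC : C.HHInjectsCH) (hinj : f.HHInjective) (hsurj : f.HHSurjective) :
    D.HHInjectsCH := by
  intro n y hy hDy
  obtain ⟨x, hx, c, hc⟩ := exists_add_app_eq_vert hsurj (D.totalD_mem_colCycles y (hDy 0))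
  have hxfil : C.single 0 n x ∈ C.fil 0 n := single_mem_fil le_rfl (zero_add _) x
  have hDx : C.totalD (C.single 0 n x) = 0 := by
    funext p q
    by_cases h : p = 0 ∧ q + 1 = n
    · obtain ⟨rfl, rfl⟩ := h
      exact totalD_single_same x |>.trans hx
    · exact totalD_mem_fil hxfil p q (by omega)
  have hcfil : D.single 0 (n + 1) c ∈ D.fil 0 (n + 1) := single_mem_fil le_rfl (zero_add _) c
  have hsum : D.totalD (y + D.single 0 (n + 1) c) = f.mapChain (C.single 0 n x) := by
    rw [f.mapChain_single, map_add]
    funext p q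
    rw [Pi.add_apply, Pi.add_apply]
    by_cases h : p = 0 ∧ q = n
    · obtain ⟨rfl, rfl⟩ := h
      rw [totalD_single_same, single_same, ← hc, ← add_assoc, ZModModule.add_self, zero_add]
    · rw [single_of_ne _ _ (by omega), totalD_mem_fil hcfil p q (by omega), add_zero]
      cases p with
      | zero => exact totalD_mem_fil hy 0 q (by omega)
      | succ p => exact hDy p q
  obtain ⟨y', hy', hDy'⟩ := exists_totalD_eq_of_mapChain_eq hinj hsurj (n := n + 1) (n + 2)
    (y + D.single 0 (n + 1) c)
    (Submodule.add_mem _ (fil_mono (by omega) hy) (fil_mono (by omega) hcfil))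
    (C.single 0 n x) (by rw [add_sub_cancel_right]; exact fil_mono (by omega) hxfil) hDx hsum
  obtain ⟨z, hz⟩ := hC n y' (fil_mono (by omega) hy') fun p q => by
    rw [hDy', single_of_ne _ _ (by omega)]
  rw [hDy', single_same] at hz
  refine ⟨f.app (n + 1) z + c, ?_⟩
  rw [map_add, ← f.app_bd, hz, ← vert_zero, ← hc, add_comm, add_assoc, ZModModule.add_self,
    add_zero]

theorem ConcentratedIn.exists_vert_eq {j : ℕ} (hC : C.ConcentratedIn j) (hqj : q ≠ j) {x : C.X q}
    (hx : x ∈ C.colCycles p q) : ∃ z, C.vert p q z = x := by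
  by_cases hp : Even p
  · rw [colCycles_of_even _ hp] at hx
    rw [vert_of_even _ hp]
    exact hC q hqj x hx
  · exact C.exists_vert_eq_of_not_even hp hx

/-- A boundary of column `0` in degree `j` can be cleared of all its higher columns, because
these only involve `HC` in degrees below `j`. -/
theorem ConcentratedIn.totalD_mem_range {j : ℕ} (hC : C.ConcentratedIn j) (N : ℕ) :
    ∀ y ∈ C.fil N (j + 1), (∀ p q, C.totalD y (p + 1) q = 0) →
      C.totalD y 0 j ∈ LinearMap.range (C.bd j) := by
  induction N with
  | zero => exact fun y hy _ => ⟨y 0 (j + 1), by rw [← vert_zero, ← totalD_top hy]⟩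
  | succ N ih =>
    intro y hy hDy
    by_cases hN : j < N
    · exact ih y (fun a b hab => hy a b (by push_cast at hab ⊢; omega)) hDy
    obtain ⟨q, hq⟩ := Nat.exists_eq_add_of_le (not_lt.mp hN)
    obtain ⟨z, hz⟩ : ∃ z, C.vert (N + 1) q z = y (N + 1) q := by
      have hcyc : y (N + 1) q ∈ C.colCycles (N + 1) q := top_mem_colCycles hy (hDy N)
      by_cases hN0 : N = 0
      · subst hN0
        exact C.exists_vert_eq_of_not_even (by decide) hcyc
      · exact hC.exists_vert_eq (by omega) hcyc
    have hdeg : ((N + 1 : ℕ) : ℤ) + q = j + 1 := by push_cast; omega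
    have hzfil := totalD_single_mem_fil hdeg z
    have h := ih (y + C.totalD (C.single (N + 1) (q + 1) z)) ?_ ?_
    · rwa [map_add, totalD_totalD, add_zero] at h
    · have := mem_fil_pred (Submodule.add_mem _ hy hzfil) hdeg
        (by rw [Pi.add_apply, Pi.add_apply, totalD_single_same, hz, ZModModule.add_self])
      rwa [Nat.cast_succ, add_sub_cancel_right] at this
    · rwa [map_add, totalD_totalD, add_zero]

theorem ConcentratedIn.hhInjectsCH {j : ℕ} (hC : C.ConcentratedIn j) : C.HHInjectsCH := by
  intro n y hy hDy
  by_cases hn : n = j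
  · subst hn
    exact hC.totalD_mem_range (n + 1) y (by exact_mod_cast hy) hDy
  · obtain ⟨z, hz⟩ := hC.exists_vert_eq hn (C.totalD_mem_colCycles y (hDy 0))
    exact ⟨z, by rw [← vert_zero, hz]⟩

end Invariance

/-! ### Constructions of cyclic modules -/

section Transfer

variable (X : ℕ → Type) [∀ n, AddCommGroup (X n)] [∀ n, Module (ZMod 2) (X n)]
  (d : ∀ n : ℕ, ℕ → (X (n + 1) →ₗ[ZMod 2] X n)) (s : ∀ n : ℕ, ℕ → (X n →ₗ[ZMod 2] X (n + 1)))
  (t : ∀ n : ℕ, X n →ₗ[ZMod 2] X n)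

/-- The cyclic identities hold for operators which are intertwined, by a jointly injective family
of maps, with the operators of cyclic modules. -/
def ofInjective {ι : Type} (D : ι → CycMod) (f : ∀ a n, X n →ₗ[ZMod 2] (D a).X n)
    (inj : ∀ n (x y : X n), (∀ a, f a n x = f a n y) → x = y)
    (hd : ∀ a n i, i ≤ n + 1 → ∀ x, f a n (d n i x) = (D a).d n i (f a (n + 1) x))
    (hs : ∀ a n i, i ≤ n → ∀ x, f a (n + 1) (s n i x) = (D a).s n i (f a n x))
    (ht : ∀ a n x, f a n (t n x) = (D a).t n (f a n x)) : CycMod where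
  X := X
  d := d
  s := s
  t := t
  dd n i j h hj := LinearMap.ext fun x => inj _ _ _ fun a => by
    have := LinearMap.congr_fun ((D a).dd n i j h hj) (f a _ x)
    simpa only [LinearMap.comp_apply, hd a n i (by omega), hd a (n + 1) j (by omega),
      hd a n (j - 1) (by omega), hd a (n + 1) i (by omega)] using this
  ss n i j h hj := LinearMap.ext fun x => inj _ _ _ fun a => by
    have := LinearMap.congr_fun ((D a).ss n i j h hj) (f a _ x)
    simpa only [LinearMap.comp_apply, hs a (n + 1) i (by omega), hs a n j (by omega),
      hs a (n + 1) (j + 1) (by omega), hs a n i (by omega)] using this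
  ds_lt n i j h hj := LinearMap.ext fun x => inj _ _ _ fun a => by
    have := LinearMap.congr_fun ((D a).ds_lt n i j h hj) (f a _ x)
    simpa only [LinearMap.comp_apply, hd a (n + 1) i (by omega), hs a (n + 1) j (by omega),
      hs a n (j - 1) (by omega), hd a n i (by omega)] using this
  ds_eq n j hj := by
    constructor
    · refine LinearMap.ext fun x => inj _ _ _ fun a => ?_
      rw [LinearMap.comp_apply, hd a n j (by omega), hs a n j hj, (D a).d_s_apply_self hj,
        LinearMap.id_apply]
    · refine LinearMap.ext fun x => inj _ _ _ fun a => ?_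
      rw [LinearMap.comp_apply, hd a n (j + 1) (by omega), hs a n j hj,
        (D a).d_succ_s_apply_self hj, LinearMap.id_apply]
  ds_gt n i j h hj := LinearMap.ext fun x => inj _ _ _ fun a => by
    have := LinearMap.congr_fun ((D a).ds_gt n i j h hj) (f a _ x)
    simpa only [LinearMap.comp_apply, hd a (n + 1) i (by omega), hs a (n + 1) j (by omega),
      hs a n j (by omega), hd a n (i - 1) (by omega)] using this
  t_ord n := LinearMap.ext fun x => inj _ _ _ fun a => by
    have t_pow : ∀ k, f a n ((t n ^ k) x) = ((D a).t n ^ k) (f a n x) := fun k => by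
      induction k with
      | zero => rfl
      | succ k ih => rw [pow_succ', Module.End.mul_apply, ht, ih, t_pow_succ_apply]
    rw [t_pow, t_pow_card_apply, LinearMap.id_apply]
  dt n i h hi := LinearMap.ext fun x => inj _ _ _ fun a => by
    have := LinearMap.congr_fun ((D a).dt n i h hi) (f a _ x)
    simpa only [LinearMap.comp_apply, hd a n i hi, ht, hd a n (i - 1) (by omega)] using this
  d0t n := LinearMap.ext fun x => inj _ _ _ fun a => by
    rw [LinearMap.comp_apply, hd a n 0 (by omega), ht, d_zero_t_apply, hd a n (n + 1) le_rfl]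
  st n i h hi := LinearMap.ext fun x => inj _ _ _ fun a => by
    have := LinearMap.congr_fun ((D a).st n i h hi) (f a _ x)
    simpa only [LinearMap.comp_apply, hs a n i hi, ht, hs a n (i - 1) (by omega)] using this
  s0t n := LinearMap.ext fun x => inj _ _ _ fun a => by
    rw [LinearMap.comp_apply, LinearMap.comp_apply, LinearMap.comp_apply, hs a n 0 (by omega), ht,
      ht, ht, hs a n n le_rfl, s_zero_t_apply]

/-- The cyclic identities hold for operators which are intertwined, by surjective maps, with the
operators of a cyclic module. -/
def ofSurjective (D : CycMod) (f : ∀ n, D.X n →ₗ[ZMod 2] X n)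
    (surj : ∀ n, Function.Surjective (f n))
    (hd : ∀ n i, i ≤ n + 1 → ∀ x, d n i (f (n + 1) x) = f n (D.d n i x))
    (hs : ∀ n i, i ≤ n → ∀ x, s n i (f n x) = f (n + 1) (D.s n i x))
    (ht : ∀ n x, t n (f n x) = f n (D.t n x)) : CycMod where
  X := X
  d := d
  s := s
  t := t
  dd n i j h hj := LinearMap.ext <| (surj _).forall.mpr fun x => by
    have := congrArg (f n) (LinearMap.congr_fun (D.dd n i j h hj) x)
    simpa only [LinearMap.comp_apply, hd n i (by omega), hd (n + 1) j (by omega),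
      hd n (j - 1) (by omega), hd (n + 1) i (by omega)] using this
  ss n i j h hj := LinearMap.ext <| (surj _).forall.mpr fun x => by
    have := congrArg (f _) (LinearMap.congr_fun (D.ss n i j h hj) x)
    simpa only [LinearMap.comp_apply, hs (n + 1) i (by omega), hs n j (by omega),
      hs (n + 1) (j + 1) (by omega), hs n i (by omega)] using this
  ds_lt n i j h hj := LinearMap.ext <| (surj _).forall.mpr fun x => by
    have := congrArg (f _) (LinearMap.congr_fun (D.ds_lt n i j h hj) x)
    simpa only [LinearMap.comp_apply, hd (n + 1) i (by omega), hs (n + 1) j (by omega),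
      hs n (j - 1) (by omega), hd n i (by omega)] using this
  ds_eq n j hj := by
    constructor
    · refine LinearMap.ext <| (surj _).forall.mpr fun x => ?_
      rw [LinearMap.comp_apply, hs n j hj, hd n j (by omega), d_s_apply_self _ hj,
        LinearMap.id_apply]
    · refine LinearMap.ext <| (surj _).forall.mpr fun x => ?_
      rw [LinearMap.comp_apply, hs n j hj, hd n (j + 1) (by omega), d_succ_s_apply_self _ hj,
        LinearMap.id_apply]
  ds_gt n i j h hj := LinearMap.ext <| (surj _).forall.mpr fun x => by
    have := congrArg (f _) (LinearMap.congr_fun (D.ds_gt n i j h hj) x)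
    simpa only [LinearMap.comp_apply, hd (n + 1) i (by omega), hs (n + 1) j (by omega),
      hs n j (by omega), hd n (i - 1) (by omega)] using this
  t_ord n := LinearMap.ext <| (surj _).forall.mpr fun x => by
    have t_pow : ∀ k, (t n ^ k) (f n x) = f n ((D.t n ^ k) x) := fun k => by
      induction k with
      | zero => rfl
      | succ k ih => rw [pow_succ', Module.End.mul_apply, ih, ht, t_pow_succ_apply]
    rw [t_pow, t_pow_card_apply, LinearMap.id_apply]
  dt n i h hi := LinearMap.ext <| (surj _).forall.mpr fun x => by
    have := congrArg (f _) (LinearMap.congr_fun (D.dt n i h hi) x)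
    simpa only [LinearMap.comp_apply, hd n i hi, ht, hd n (i - 1) (by omega)] using this
  d0t n := LinearMap.ext <| (surj _).forall.mpr fun x => by
    rw [LinearMap.comp_apply, ht, hd n 0 (by omega), d_zero_t_apply, hd n (n + 1) le_rfl]
  st n i h hi := LinearMap.ext <| (surj _).forall.mpr fun x => by
    have := congrArg (f _) (LinearMap.congr_fun (D.st n i h hi) x)
    simpa only [LinearMap.comp_apply, hs n i hi, ht, hs n (i - 1) (by omega)] using this
  s0t n := LinearMap.ext <| (surj _).forall.mpr fun x => by
    rw [LinearMap.comp_apply, LinearMap.comp_apply, LinearMap.comp_apply, ht, hs n 0 (by omega),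
      hs n n le_rfl, ht, ht, s_zero_t_apply]

end Transfer

/-- A cyclic submodule; only the operators whose index is in range have to preserve it. -/
structure Sub (C : CycMod) where
  carrier : ∀ n, Submodule (ZMod 2) (C.X n)
  d_mem : ∀ n i, i ≤ n + 1 → ∀ x ∈ carrier (n + 1), C.d n i x ∈ carrier n
  s_mem : ∀ n i, i ≤ n → ∀ x ∈ carrier n, C.s n i x ∈ carrier (n + 1)
  t_mem : ∀ n, ∀ x ∈ carrier n, C.t n x ∈ carrier n

namespace Sub

variable {C : CycMod} (U : C.Sub) {n : ℕ}

/-- A cyclic submodule as a cyclic module. The operators whose index is out of range need not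
restrict to it and are replaced by `0`. -/
def toCycMod : CycMod :=
  ofInjective (fun n => U.carrier n)
    (fun n i => if h : i ≤ n + 1 then (C.d n i).restrict (U.d_mem n i h) else 0)
    (fun n i => if h : i ≤ n then (C.s n i).restrict (U.s_mem n i h) else 0)
    (fun n => (C.t n).restrict (U.t_mem n))
    (fun _ : Unit => C) (fun _ n => (U.carrier n).subtype)
    (fun _ _ _ h => Subtype.ext (h ()))
    (fun _ _ _ h _ => by rw [dif_pos h]; rfl)
    (fun _ _ _ h _ => by rw [dif_pos h]; rfl)
    (fun _ _ _ => rfl)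

/-- The inclusion of a cyclic submodule. -/
def incl : Hom U.toCycMod C where
  app n := (U.carrier n).subtype
  app_d n i h x := by
    change ((dite (i ≤ n + 1) _ _ : U.carrier (n + 1) →ₗ[ZMod 2] U.carrier n) x : C.X n) = _
    rw [dif_pos h]
    rfl
  app_s n i h x := by
    change ((dite (i ≤ n) _ _ : U.carrier n →ₗ[ZMod 2] U.carrier (n + 1)) x : C.X (n + 1)) = _
    rw [dif_pos h]
    rfl
  app_t _ _ := rfl

theorem incl_injective (n : ℕ) : Function.Injective (U.incl.app n) := Subtype.val_injective

theorem incl_mem (x : U.toCycMod.X n) : U.incl.app n x ∈ U.carrier n := Subtype.property x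

theorem exists_incl_eq {x : C.X n} (hx : x ∈ U.carrier n) : ∃ y, U.incl.app n y = x :=
  ⟨(⟨x, hx⟩ : U.carrier n), rfl⟩

/-- The quotient by a cyclic submodule, with the same convention as for `Sub.toCycMod`. -/
def quotient : CycMod :=
  ofSurjective (fun n => C.X n ⧸ U.carrier n)
    (fun n i => if h : i ≤ n + 1 then Submodule.mapQ _ _ (C.d n i) (U.d_mem n i h) else 0)
    (fun n i => if h : i ≤ n then Submodule.mapQ _ _ (C.s n i) (U.s_mem n i h) else 0)
    (fun n => Submodule.mapQ _ _ (C.t n) (U.t_mem n))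
    C (fun n => (U.carrier n).mkQ) (fun _ => Submodule.mkQ_surjective _)
    (fun _ _ h _ => by rw [dif_pos h]; rfl)
    (fun _ _ h _ => by rw [dif_pos h]; rfl)
    (fun _ _ => rfl)

/-- The projection onto the quotient by a cyclic submodule. -/
def mkQ : Hom C U.quotient where
  app n := (U.carrier n).mkQ
  app_d n i h x := by
    change _ = (dite (i ≤ n + 1) _ _ :
      (C.X (n + 1) ⧸ U.carrier (n + 1)) →ₗ[ZMod 2] (C.X n ⧸ U.carrier n)) _
    rw [dif_pos h]
    rfl
  app_s n i h x := by
    change _ = (dite (i ≤ n) _ _ :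
      (C.X n ⧸ U.carrier n) →ₗ[ZMod 2] (C.X (n + 1) ⧸ U.carrier (n + 1))) _
    rw [dif_pos h]
    rfl
  app_t _ _ := rfl

theorem mkQ_surjective (n : ℕ) : Function.Surjective (U.mkQ.app n) := Submodule.mkQ_surjective _

theorem mkQ_eq_zero_iff {x : C.X n} : U.mkQ.app n x = 0 ↔ x ∈ U.carrier n :=
  Submodule.Quotient.mk_eq_zero _

end Sub

namespace Hom

variable {C D E : CycMod}

/-- The kernel of a homomorphism. -/
def ker (f : Hom C D) : C.Sub where
  carrier n := LinearMap.ker (f.app n)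
  d_mem n i h x hx := by rw [LinearMap.mem_ker, f.app_d n i h, LinearMap.mem_ker.mp hx, map_zero]
  s_mem n i h x hx := by rw [LinearMap.mem_ker, f.app_s n i h, LinearMap.mem_ker.mp hx, map_zero]
  t_mem n x hx := by rw [LinearMap.mem_ker, f.app_t, LinearMap.mem_ker.mp hx, map_zero]

/-- The image of a homomorphism. -/
def range (f : Hom C D) : D.Sub where
  carrier n := LinearMap.range (f.app n)
  d_mem n i h := by
    rintro _ ⟨x, rfl⟩
    exact ⟨_, f.app_d n i h x⟩
  s_mem n i h := by
    rintro _ ⟨x, rfl⟩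
    exact ⟨_, f.app_s n i h x⟩
  t_mem n := by
    rintro _ ⟨x, rfl⟩
    exact ⟨_, f.app_t n x⟩

theorem exists_desc {g : Hom C D} (hg : ∀ n, Function.Surjective (g.app n)) (f : Hom C E)
    (hf : ∀ n x, g.app n x = 0 → f.app n x = 0) :
    ∃ h : Hom D E, ∀ n x, h.app n (g.app n x) = f.app n x := by
  choose σ hσ using fun n =>
    (g.app n).exists_rightInverse_of_surjective (LinearMap.range_eq_top.mpr (hg n))
  have desc (n : ℕ) (x : C.X n) : f.app n (σ n (g.app n x)) = f.app n x := by
    rw [← sub_eq_zero, ← map_sub]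
    refine hf n _ ?_
    rw [map_sub, sub_eq_zero]
    exact LinearMap.congr_fun (hσ n) _
  refine ⟨⟨fun n => f.app n ∘ₗ σ n, fun n i h => (hg _).forall.mpr fun x => ?_,
    fun n i h => (hg _).forall.mpr fun x => ?_, fun n => (hg _).forall.mpr fun x => ?_⟩, desc⟩
  · simp only [LinearMap.comp_apply, ← g.app_d n i h, desc, f.app_d n i h]
  · simp only [LinearMap.comp_apply, ← g.app_s n i h, desc, f.app_s n i h]
  · simp only [LinearMap.comp_apply, ← g.app_t, desc, f.app_t]

end Hom

/-! ### Products -/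

section Pi

variable {ι : Type} (D : ι → CycMod)

/-- The product of a family of cyclic modules. -/
def pi : CycMod :=
  ofInjective (fun n => ∀ a, (D a).X n)
    (fun n i => LinearMap.pi fun a => (D a).d n i ∘ₗ LinearMap.proj a)
    (fun n i => LinearMap.pi fun a => (D a).s n i ∘ₗ LinearMap.proj a)
    (fun n => LinearMap.pi fun a => (D a).t n ∘ₗ LinearMap.proj a)
    D (fun a _ => LinearMap.proj a) (fun _ _ _ h => funext h)
    (fun _ _ _ _ _ => rfl) (fun _ _ _ _ _ => rfl) (fun _ _ _ => rfl)

/-- The projections of a product. -/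
def piProj (a : ι) : Hom (pi D) (D a) where
  app n := LinearMap.proj (φ := fun a => (D a).X n) a
  app_d _ _ _ _ := rfl
  app_s _ _ _ _ := rfl
  app_t _ _ := rfl

theorem isCycHom_pi {C : CycMod} {f : ∀ a n, C.X n →ₗ[ZMod 2] (D a).X n}
    (hf : ∀ a, IsCycHom C (D a) (f a)) :
    IsCycHom C (pi D) fun n => LinearMap.pi fun a => f a n :=
  ⟨fun n i => LinearMap.ext fun x => funext fun a => LinearMap.congr_fun ((hf a).1 n i) x,
    fun n i => LinearMap.ext fun x => funext fun a => LinearMap.congr_fun ((hf a).2.1 n i) x,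
    fun n => LinearMap.ext fun x => funext fun a => LinearMap.congr_fun ((hf a).2.2 n) x⟩

end Pi

section Prod

variable (C D : CycMod)

/-- The product of two cyclic modules. -/
def prod : CycMod :=
  ofInjective (fun n => C.X n × D.X n)
    (fun n i => (C.d n i).prodMap (D.d n i))
    (fun n i => (C.s n i).prodMap (D.s n i))
    (fun n => (C.t n).prodMap (D.t n))
    (fun b : Bool => match b with | true => C | false => D)
    (fun b _ => match b with | true => LinearMap.fst _ _ _ | false => LinearMap.snd _ _ _)
    (fun _ _ _ h => Prod.ext (h true) (h false))
    (by rintro (_ | _) <;> intros <;> rfl) (by rintro (_ | _) <;> intros <;> rfl)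
    (by rintro (_ | _) <;> intros <;> rfl)

/-- The first projection. -/
def fst : Hom (C.prod D) C where
  app n := LinearMap.fst (ZMod 2) (C.X n) (D.X n)
  app_d _ _ _ _ := rfl
  app_s _ _ _ _ := rfl
  app_t _ _ := rfl

/-- The second projection. -/
def snd : Hom (C.prod D) D where
  app n := LinearMap.snd (ZMod 2) (C.X n) (D.X n)
  app_d _ _ _ _ := rfl
  app_s _ _ _ _ := rfl
  app_t _ _ := rfl

/-- The inclusion of the first factor. -/
def inl : Hom C (C.prod D) where
  app n := LinearMap.inl (ZMod 2) (C.X n) (D.X n)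
  app_d n i _ _ := Prod.ext rfl (map_zero (D.d n i)).symm
  app_s n i _ _ := Prod.ext rfl (map_zero (D.s n i)).symm
  app_t n _ := Prod.ext rfl (map_zero (D.t n)).symm

/-- The inclusion of the second factor. -/
def inr : Hom D (C.prod D) where
  app n := LinearMap.inr (ZMod 2) (C.X n) (D.X n)
  app_d n i _ _ := Prod.ext (map_zero (C.d n i)).symm rfl
  app_s n i _ _ := Prod.ext (map_zero (C.s n i)).symm rfl
  app_t n _ := Prod.ext (map_zero (C.t n)).symm rfl

variable {C D} {E : CycMod}

/-- The homomorphism to a product with the given components. -/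
def Hom.prod (f : Hom E C) (g : Hom E D) : Hom E (C.prod D) where
  app n := LinearMap.prod (f.app n) (g.app n)
  app_d n i h x := Prod.ext (f.app_d n i h x) (g.app_d n i h x)
  app_s n i h x := Prod.ext (f.app_s n i h x) (g.app_s n i h x)
  app_t n x := Prod.ext (f.app_t n x) (g.app_t n x)

theorem mem_range_bd_prod {n : ℕ} {x : (C.prod D).X n}
    (h₁ : (fst C D).app n x ∈ LinearMap.range (C.bd n))
    (h₂ : (snd C D).app n x ∈ LinearMap.range (D.bd n)) :
    x ∈ LinearMap.range ((C.prod D).bd n) := by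
  obtain ⟨a, ha⟩ := h₁
  obtain ⟨b, hb⟩ := h₂
  let z : (C.prod D).X (n + 1) := (a, b)
  exact ⟨z, Prod.ext (((fst C D).app_bd z).trans ha) (((snd C D).app_bd z).trans hb)⟩

theorem exists_pushout {i : Hom E D} (hi : ∀ n, Function.Injective (i.app n)) (u : Hom E C) :
    ∃ (P : CycMod) (f : Hom C P) (g : Hom D P), (∀ n, Function.Injective (f.app n)) ∧
      ∀ n x, g.app n (i.app n x) = f.app n (u.app n x) := by
  let R := (u.prod i).range
  refine ⟨R.quotient, R.mkQ.comp (inl C D), R.mkQ.comp (inr C D), fun n => ?_, fun n x => ?_⟩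
  · refine (injective_iff_map_eq_zero _).mpr fun x hx => ?_
    obtain ⟨y, hy⟩ := R.mkQ_eq_zero_iff.mp hx
    have hy0 : y = 0 := hi n ((congrArg Prod.snd hy).trans (map_zero (i.app n)).symm)
    exact (congrArg Prod.fst hy).symm.trans (by rw [hy0]; exact map_zero (u.app n))
  · rw [← add_eq_zero_iff_eq, add_comm]
    refine ((R.mkQ.app n).map_add _ _).symm.trans (R.mkQ_eq_zero_iff.mpr ⟨x, ?_⟩)
    exact Prod.ext (add_zero _).symm (zero_add _).symm

end Prod

section ReplaceOutOfRange

variable (U C : CycMod) (f : ∀ n, C.X n →ₗ[ZMod 2] U.X n) (r : ∀ n, U.X n →ₗ[ZMod 2] C.X n)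

/-- The cyclic module `U` with the operators whose index is out of range transported from `C` along
a map with retraction `r`. This turns a `Hom` into a strict `IsCycHom`. -/
def replaceOutOfRange : CycMod :=
  ofInjective U.X
    (fun n i => if i ≤ n + 1 then U.d n i else f n ∘ₗ C.d n i ∘ₗ r (n + 1))
    (fun n i => if i ≤ n then U.s n i else f (n + 1) ∘ₗ C.s n i ∘ₗ r n)
    U.t (fun _ : Unit => U) (fun _ _ => LinearMap.id) (fun _ _ _ h => h ())
    (fun _ _ _ h _ => by rw [if_pos h]; rfl)
    (fun _ _ _ h _ => by rw [if_pos h]; rfl)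
    (fun _ _ _ => rfl)

/-- The identity map from the modified cyclic module to the original one. -/
def ofReplaceOutOfRange : Hom (replaceOutOfRange U C f r) U where
  app n := (LinearMap.id : U.X n →ₗ[ZMod 2] U.X n)
  app_d n i h x := by
    change (ite (i ≤ n + 1) _ _ : U.X (n + 1) →ₗ[ZMod 2] U.X n) x = _
    rw [if_pos h]
    rfl
  app_s n i h x := by
    change (ite (i ≤ n) _ _ : U.X n →ₗ[ZMod 2] U.X (n + 1)) x = _
    rw [if_pos h]
    rfl
  app_t _ _ := rfl

variable {U C} {r}

theorem isCycHom_replaceOutOfRange (f : Hom C U) (hr : ∀ n, r n ∘ₗ f.app n = LinearMap.id) :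
    IsCycHom C (replaceOutOfRange U C f.app r) f.app := by
  refine ⟨fun n i => LinearMap.ext fun x => ?_, fun n i => LinearMap.ext fun x => ?_,
    fun n => LinearMap.ext (f.app_t n)⟩
  · change f.app n (C.d n i x) = (ite (i ≤ n + 1) _ _ : U.X (n + 1) →ₗ[ZMod 2] U.X n) (f.app _ x)
    split_ifs with h
    · exact f.app_d n i h x
    · exact congrArg (fun y => f.app n (C.d n i y)) (LinearMap.congr_fun (hr _) x).symm
  · change f.app (n + 1) (C.s n i x) = (ite (i ≤ n) _ _ : U.X n →ₗ[ZMod 2] U.X (n + 1)) (f.app _ x)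
    split_ifs with h
    · exact f.app_s n i h x
    · exact congrArg (fun y => f.app (n + 1) (C.s n i y)) (LinearMap.congr_fun (hr _) x).symm

end ReplaceOutOfRange

/-! ### A contractible cyclic module containing a given one -/

section VertexFun

/-- The `i`-th coface map of the cocyclic set `n ↦ {0, …, n}`. -/
def coface (n i : ℕ) (b : Fin (n + 1)) : Fin (n + 2) :=
  ⟨if b.1 < i then b.1 else b.1 + 1, by split_ifs <;> omega⟩

/-- The `i`-th codegeneracy map of the cocyclic set `n ↦ {0, …, n}`. The minimum with `n` only
matters for `i` out of range. -/
def codegeneracy (n i : ℕ) (b : Fin (n + 2)) : Fin (n + 1) :=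
  ⟨min (if b.1 ≤ i then b.1 else b.1 - 1) n, by omega⟩

/-- The cocyclic operator of the cocyclic set `n ↦ {0, …, n}`. -/
def cocyclic (n : ℕ) (b : Fin (n + 1)) : Fin (n + 1) :=
  ⟨if b.1 = 0 then n else b.1 - 1, by split_ifs <;> omega⟩

variable (C : CycMod) {n : ℕ}

/-- The cyclic operator of `vertexFun`. -/
def vertexFunT (n : ℕ) : (Fin (n + 1) → C.X n) →ₗ[ZMod 2] (Fin (n + 1) → C.X n) :=
  LinearMap.pi fun b => C.t n ∘ₗ LinearMap.proj (cocyclic n b)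

theorem vertexFunT_pow_apply {k : ℕ} (hk : k ≤ n + 1) (x : Fin (n + 1) → C.X n)
    {b c : Fin (n + 1)} (hc : c.1 = if k ≤ b.1 then b.1 - k else b.1 + n + 1 - k) :
    (C.vertexFunT n ^ k) x b = (C.t n ^ k) (x c) := by
  induction k generalizing b with
  | zero => rw [show c = b from Fin.ext (by grind)]; rfl
  | succ k ih =>
    rw [pow_succ', Module.End.mul_apply, t_pow_succ_apply]
    refine congrArg (C.t n) (ih (by omega) ?_)
    grind [cocyclic]

/-- The levelwise tensor product of `C` with the cyclic module of functions on `{0, …, n}`. It is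
contractible, and contains `C` as the constant functions. -/
def vertexFun : CycMod where
  X n := Fin (n + 1) → C.X n
  d n i := LinearMap.pi fun b => C.d n i ∘ₗ LinearMap.proj (coface n i b)
  s n i := LinearMap.pi fun b => C.s n i ∘ₗ LinearMap.proj (codegeneracy n i b)
  t := C.vertexFunT
  dd n i j h hj := LinearMap.ext fun x => funext fun b => by
    have e : coface (n + 1) j (coface n i b) = coface (n + 1) i (coface n (j - 1) b) :=
      Fin.ext (by grind [coface])
    exact (LinearMap.congr_fun (C.dd n i j h hj) _).trans (by rw [e]; rfl)
  ss n i j h hj := LinearMap.ext fun x => funext fun b => by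
    have e : codegeneracy n j (codegeneracy (n + 1) i b) =
        codegeneracy n i (codegeneracy (n + 1) (j + 1) b) := Fin.ext (by grind [codegeneracy])
    exact (LinearMap.congr_fun (C.ss n i j h hj) _).trans (by rw [e]; rfl)
  ds_lt n i j h hj := LinearMap.ext fun x => funext fun b => by
    have e : codegeneracy (n + 1) j (coface (n + 1) i b) =
        coface n i (codegeneracy n (j - 1) b) := Fin.ext (by grind [codegeneracy, coface])
    exact (LinearMap.congr_fun (C.ds_lt n i j h hj) _).trans (by rw [e]; rfl)
  ds_eq n j hj := by
    constructor
    · refine LinearMap.ext fun x => funext fun b => (C.d_s_apply_self hj _).trans ?_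
      exact congrArg x (Fin.ext (by grind [codegeneracy, coface]))
    · refine LinearMap.ext fun x => funext fun b => (C.d_succ_s_apply_self hj _).trans ?_
      exact congrArg x (Fin.ext (by grind [codegeneracy, coface]))
  ds_gt n i j h hj := LinearMap.ext fun x => funext fun b => by
    have e : codegeneracy (n + 1) j (coface (n + 1) i b) =
        coface n (i - 1) (codegeneracy n j b) := Fin.ext (by grind [codegeneracy, coface])
    exact (LinearMap.congr_fun (C.ds_gt n i j h hj) _).trans (by rw [e]; rfl)
  t_ord n := LinearMap.ext fun x => funext fun b =>
    (C.vertexFunT_pow_apply le_rfl x (by grind)).trans (C.t_pow_card_apply _)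
  dt n i h hi := LinearMap.ext fun x => funext fun b => by
    have e : cocyclic (n + 1) (coface n i b) = coface n (i - 1) (cocyclic n b) :=
      Fin.ext (by grind [cocyclic, coface])
    exact (LinearMap.congr_fun (C.dt n i h hi) _).trans (by rw [e]; rfl)
  d0t n := LinearMap.ext fun x => funext fun b => by
    have e : cocyclic (n + 1) (coface n 0 b) = coface n (n + 1) b :=
      Fin.ext (by grind [cocyclic, coface])
    exact (C.d_zero_t_apply _).trans (by rw [e]; rfl)
  st n i h hi := LinearMap.ext fun x => funext fun b => by
    have e : cocyclic n (codegeneracy n i b) = codegeneracy n (i - 1) (cocyclic (n + 1) b) :=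
      Fin.ext (by grind [cocyclic, codegeneracy])
    exact (LinearMap.congr_fun (C.st n i h hi) _).trans (by rw [e]; rfl)
  s0t n := LinearMap.ext fun x => funext fun b => by
    have e : cocyclic n (codegeneracy n 0 b) =
        codegeneracy n n (cocyclic (n + 1) (cocyclic (n + 1) b)) :=
      Fin.ext (by grind [cocyclic, codegeneracy])
    exact (C.s_zero_t_apply _).trans (by rw [e]; rfl)

/-- The inclusion of the constant functions. -/
def const : Hom C C.vertexFun where
  app n := (LinearMap.pi fun _ => LinearMap.id : C.X n →ₗ[ZMod 2] (Fin (n + 1) → C.X n))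
  app_d _ _ _ _ := rfl
  app_s _ _ _ _ := rfl
  app_t _ _ := rfl

theorem const_injective (n : ℕ) : Function.Injective (C.const.app n) :=
  fun _ _ h => congrFun (h : (Function.const (Fin (n + 1)) _ = Function.const _ _)) 0

/-- The evaluation of functions at a vertex. -/
def eval (n : ℕ) (b : Fin (n + 1)) : C.vertexFun.X n →ₗ[ZMod 2] C.X n :=
  LinearMap.proj (φ := fun _ : Fin (n + 1) => C.X n) b

theorem eval_d (i : ℕ) (b : Fin (n + 1)) (x : C.vertexFun.X (n + 1)) :
    C.eval n b (C.vertexFun.d n i x) = C.d n i (C.eval (n + 1) (coface n i b) x) := rfl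

/-- The contracting homotopy of `C.vertexFun`. -/
def contraction (n : ℕ) : C.vertexFun.X n →ₗ[ZMod 2] C.vertexFun.X (n + 1) :=
  (LinearMap.pi fun a => if h : a.1 < n + 1 then C.s n a ∘ₗ C.eval n ⟨a, h⟩ else 0 :
    C.vertexFun.X n →ₗ[ZMod 2] (Fin (n + 2) → C.X (n + 1)))

theorem eval_contraction_of_lt (x : C.vertexFun.X n) {a : Fin (n + 2)} (h : a.1 < n + 1) :
    C.eval (n + 1) a (C.contraction n x) = C.s n a (C.eval n ⟨a, h⟩ x) :=
  LinearMap.congr_fun (dif_pos h) _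

theorem eval_contraction_of_not_lt (x : C.vertexFun.X n) {a : Fin (n + 2)} (h : ¬ a.1 < n + 1) :
    C.eval (n + 1) a (C.contraction n x) = 0 :=
  LinearMap.congr_fun (dif_neg h) _

theorem sum_range_succ_eq_add_skip {M : Type} [AddCommMonoid M] (F : ℕ → M) {m a : ℕ}
    (ha : a ≤ m) : ∑ i ∈ Finset.range (m + 1), F i =
      F a + ∑ i ∈ Finset.range m, F (if i < a then i else i + 1) := by
  rw [Finset.sum_range, Fin.sum_univ_succAbove _ ⟨a, Nat.lt_succ_of_le ha⟩, Finset.sum_range]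
  refine congrArg (F a + ·) (Finset.sum_congr rfl fun i _ => congrArg F ?_)
  grind [Fin.succAbove, Fin.lt_def]

theorem eval_d_contraction_skip (x : C.vertexFun.X (n + 1)) (b : Fin (n + 2)) {i : ℕ}
    (hi : i < n + 2) :
    C.eval (n + 1) b (C.vertexFun.d (n + 1) (if i < b.1 + 1 then i else i + 1)
        (C.contraction (n + 1) x)) =
      C.eval (n + 1) b (C.contraction n (C.vertexFun.d n i x)) := by
  rw [eval_d]
  by_cases hib : i < b.1 + 1
  · have e : coface (n + 1) i b = ⟨b.1 + 1, by omega⟩ := Fin.ext (by grind [coface])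
    rw [if_pos hib, e]
    by_cases h : b.1 < n + 1
    · have e' : coface n i ⟨b.1, h⟩ = ⟨b.1 + 1, by omega⟩ := Fin.ext (by grind [coface])
      rw [eval_contraction_of_lt _ _ (by grind), eval_contraction_of_lt _ _ h, eval_d, e',
        C.d_s_apply_of_le (by omega) (by omega)]
    · rw [eval_contraction_of_not_lt _ _ (by grind), eval_contraction_of_not_lt _ _ h, map_zero]
  · have h : b.1 < n + 1 := by omega
    have e : coface (n + 1) (i + 1) b = ⟨b.1, by omega⟩ := Fin.ext (by grind [coface])
    have e' : coface n i ⟨b.1, h⟩ = b := Fin.ext (by grind [coface])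
    rw [if_neg hib, e, eval_contraction_of_lt _ _ (by grind), eval_contraction_of_lt _ _ h, eval_d,
      e', C.d_succ_s_apply_of_lt (Nat.not_lt.mp hib) (by omega)]

theorem eval_bd_contraction (x : C.vertexFun.X n) (b : Fin (n + 1)) :
    C.eval n b (C.vertexFun.bd n (C.contraction n x)) = C.eval n b x +
      ∑ i ∈ Finset.range (n + 1), C.eval n b
        (C.vertexFun.d n (if i < b.1 + 1 then i else i + 1) (C.contraction n x)) := by
  have e : coface n (b.1 + 1) b = ⟨b.1, by omega⟩ := Fin.ext (by grind [coface])
  rw [bd_apply, sum_range_succ_eq_add_skip _ (show b.1 + 1 ≤ n + 1 by omega), map_add, map_sum,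
    eval_d, e, C.eval_contraction_of_lt x b.2, C.d_succ_s_apply_self (by omega)]

theorem bd_contraction_zero (x : C.vertexFun.X 0) : C.vertexFun.bd 0 (C.contraction 0 x) = x := by
  refine funext fun b : Fin 1 => (C.eval_bd_contraction x b).trans ?_
  rw [Finset.sum_range_one, eval_d, eval_contraction_of_not_lt _ _ (by grind [coface]), map_zero,
    add_zero]
  rfl

theorem bd_contraction_succ (x : C.vertexFun.X (n + 1)) :
    C.vertexFun.bd (n + 1) (C.contraction (n + 1) x) =
      x + C.contraction n (C.vertexFun.bd n x) := by
  refine funext fun b : Fin (n + 2) => (C.eval_bd_contraction x b).trans ?_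
  rw [Finset.sum_congr rfl fun i hi => C.eval_d_contraction_skip x b (Finset.mem_range.mp hi),
    ← map_sum, ← map_sum, ← bd_apply]
  rfl

theorem mem_range_bd_vertexFun {x : C.vertexFun.X n} (hx : x ∈ C.vertexFun.cyc n) :
    x ∈ LinearMap.range (C.vertexFun.bd n) := by
  refine ⟨C.contraction n x, ?_⟩
  cases n with
  | zero => exact C.bd_contraction_zero x
  | succ n => rw [bd_contraction_succ, LinearMap.mem_ker.mp hx, map_zero, add_zero]

end VertexFun

/-- Any homomorphism is represented, up to quasi-isomorphism of the target, by a strict one. -/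
theorem Hom.exists_strictification {C W : CycMod} (u : Hom C W) :
    ∃ (U : CycMod) (f : ∀ n, C.X n →ₗ[ZMod 2] U.X n) (_ : IsCycHom C U f) (p : Hom U W),
      p.HHInjective ∧ ∀ n x, p.app n (f n x) = u.app n x := by
  let v := u.prod C.const
  have hv : ∀ n, Function.Injective (v.app n) := fun n x y hxy =>
    C.const_injective n (congrArg Prod.snd hxy)
  choose r hr using fun n =>
    (v.app n).exists_leftInverse_of_injective (LinearMap.ker_eq_bot.mpr (hv n))
  let ε := ofReplaceOutOfRange (W.prod C.vertexFun) C v.app r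
  refine ⟨replaceOutOfRange _ C v.app r, v.app, isCycHom_replaceOutOfRange v hr,
    (fst W C.vertexFun).comp ε, fun n x hx hbd => ?_, fun n x => rfl⟩
  obtain ⟨z, hz⟩ := mem_range_bd_prod hbd
    (C.mem_range_bd_vertexFun ((snd W C.vertexFun).app_mem_cyc (ε.app_mem_cyc hx)))
  exact ⟨z, (ε.app_bd z).trans hz⟩

/-! ### Constant cyclic modules -/

section Constant

variable (V : Type) [AddCommGroup V] [Module (ZMod 2) V]

/-- The constant cyclic module. -/
def constant : CycMod where
  X _ := V
  d _ _ := LinearMap.id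
  s _ _ := LinearMap.id
  t _ := LinearMap.id
  dd _ _ _ _ _ := rfl
  ss _ _ _ _ _ := rfl
  ds_lt _ _ _ _ _ := rfl
  ds_eq _ _ _ := ⟨rfl, rfl⟩
  ds_gt _ _ _ _ _ := rfl
  t_ord _ := one_pow _
  dt _ _ _ _ := rfl
  d0t _ := rfl
  st _ _ _ _ := rfl
  s0t _ := rfl

theorem constant_bd_apply (n : ℕ) (x : V) :
    ((constant V).bd n : V →ₗ[ZMod 2] V) x = if Even n then 0 else x := by
  have sum_eq : ((constant V).bd n : V →ₗ[ZMod 2] V) x = ∑ _ ∈ Finset.range (n + 2), x :=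
    (constant V).bd_apply x
  rw [sum_eq, Finset.sum_const, Finset.card_range, ← Nat.cast_smul_eq_nsmul (ZMod 2)]
  split_ifs with h
  · rw [ZMod.natCast_eq_zero_iff_even.mpr (h.add even_two), zero_smul]
  · rw [ZMod.natCast_eq_one_iff_odd.mpr ((Nat.not_even_iff_odd.mp h).add_even even_two), one_smul]

theorem concentratedIn_constant : (constant V).ConcentratedIn 0 := by
  intro n hn x hx
  obtain ⟨m, rfl⟩ := Nat.exists_eq_succ_of_ne_zero hn
  by_cases h : Even m
  · exact ⟨x, (constant_bd_apply V (m + 1) x).trans (if_neg (by grind))⟩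
  · have hx0 : x = 0 := (if_neg h).symm.trans ((constant_bd_apply V m x).symm.trans hx)
    exact hx0 ▸ Submodule.zero_mem _

end Constant

/-! ### The free cyclic module on the décalage -/

section Copies

variable {U V W : Type} [AddCommGroup U] [Module (ZMod 2) U] [AddCommGroup V]
  [Module (ZMod 2) V] [AddCommGroup W] [Module (ZMod 2) W] {l m n : ℕ}

/-- The inclusion of the `a`-th of `n + 1` copies of `V`, for `a ≤ n`. Taking `a` to be a natural
number leaves the arithmetic of copy indices to `omega`. -/
def copy (V : Type) [AddCommGroup V] [Module (ZMod 2) V] (n a : ℕ) :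
    V →ₗ[ZMod 2] (Fin (n + 1) → V) :=
  LinearMap.single (ZMod 2) (fun _ => V) (Fin.ofNat (n + 1) a)

theorem linearMap_copies_ext {f g : (Fin (n + 1) → V) →ₗ[ZMod 2] W}
    (h : ∀ a ≤ n, ∀ x, f (copy V n a x) = g (copy V n a x)) : f = g := by
  refine LinearMap.pi_ext' fun a => LinearMap.ext fun x => ?_
  have ha := h a (Nat.lt_succ_iff.mp a.isLt) x
  rwa [copy, Fin.ofNat_val_eq_self] at ha

theorem lsum_copy (A : ℕ → V →ₗ[ZMod 2] W) {a : ℕ} (ha : a ≤ n) (x : V) :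
    LinearMap.lsum (ZMod 2) (fun _ : Fin (n + 1) => V) (ZMod 2) (fun a => A a) (copy V n a x) =
      A a x := by
  rw [copy, LinearMap.coe_single, LinearMap.lsum_piSingle, Fin.val_ofNat,
    Nat.mod_eq_of_lt (Nat.lt_succ_of_le ha)]

/-- The map that sends the copy `a` to the copy `f a` by `A a`. -/
def mapCopies (n m : ℕ) (f : ℕ → ℕ) (A : ℕ → V →ₗ[ZMod 2] W) :
    (Fin (n + 1) → V) →ₗ[ZMod 2] (Fin (m + 1) → W) :=
  LinearMap.lsum (ZMod 2) (fun _ => V) (ZMod 2) fun a => copy W m (f a) ∘ₗ A a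

theorem mapCopies_copy (f : ℕ → ℕ) (A : ℕ → V →ₗ[ZMod 2] W) {a : ℕ} (ha : a ≤ n) (x : V) :
    mapCopies n m f A (copy V n a x) = copy W m (f a) (A a x) :=
  lsum_copy (fun a => copy W m (f a) ∘ₗ A a) ha x

theorem mapCopies_comp {f g : ℕ → ℕ} {A : ℕ → V →ₗ[ZMod 2] W} {B : ℕ → U →ₗ[ZMod 2] V}
    (hg : ∀ a ≤ l, g a ≤ m) :
    mapCopies m n f A ∘ₗ mapCopies l m g B =
      mapCopies l n (fun a => f (g a)) fun a => A (g a) ∘ₗ B a :=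
  linearMap_copies_ext fun a ha x => by
    rw [LinearMap.comp_apply, mapCopies_copy _ _ ha, mapCopies_copy _ _ (hg a ha),
      mapCopies_copy _ _ ha, LinearMap.comp_apply]

theorem mapCopies_congr {f g : ℕ → ℕ} {A B : ℕ → V →ₗ[ZMod 2] W} (hfg : ∀ a ≤ n, f a = g a)
    (hAB : ∀ a ≤ n, ∀ x, A a x = B a x) : mapCopies n m f A = mapCopies n m g B :=
  linearMap_copies_ext fun a ha x => by
    rw [mapCopies_copy _ _ ha, mapCopies_copy _ _ ha, hfg a ha, hAB a ha]

theorem mapCopies_eq_id {f : ℕ → ℕ} {A : ℕ → V →ₗ[ZMod 2] V} (hf : ∀ a ≤ n, f a = a)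
    (hA : ∀ a ≤ n, ∀ x, A a x = x) : mapCopies n n f A = LinearMap.id :=
  linearMap_copies_ext fun a ha x => by
    rw [mapCopies_copy _ _ ha, hf a ha, hA a ha, LinearMap.id_apply]

end Copies

/-! In any cyclic module `d_i tᵃ = tᵇ d_c` and `s_i tᵃ = tᵇ s_c`, where `b` and `c` are given by the
following index functions. On the free cyclic module, the copy `a` plays the role of `tᵃ`. -/

/-- The exponent `b` in `d_i tᵃ = tᵇ d_c` on degree `n + 1`. -/
def faceCopy (n i a : ℕ) : ℕ := if a ≤ i then (if a = n + 1 then 0 else a) else a - 1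

/-- The index `c` in `d_i tᵃ = tᵇ d_c` on degree `n + 1`; décalage lets it act on degree `n + 2`,
where the last face `d_{n+2}` is not used. -/
def faceIndex (n i a : ℕ) : ℕ := if a ≤ i then i - a else n + 2 + i - a

/-- The exponent `b` in `s_i tᵃ = tᵇ s_c`. -/
def degenCopy (i a : ℕ) : ℕ := if a ≤ i then a else a + 1

/-- The index `c` in `s_i tᵃ = tᵇ s_c` on degree `n`. -/
def degenIndex (n i a : ℕ) : ℕ := if a ≤ i then i - a else n + 1 + i - a

/-- The exponent of `t tᵃ`, reduced modulo `n + 1`. -/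
def cycleCopy (n a : ℕ) : ℕ := if a = n then 0 else a + 1

theorem faceCopy_le (n i : ℕ) : ∀ a ≤ n + 1, faceCopy n i a ≤ n := by
  grind [faceCopy]

theorem degenCopy_le (n i : ℕ) : ∀ a ≤ n, degenCopy i a ≤ n + 1 := by
  grind [degenCopy]

theorem cycleCopy_le (n : ℕ) : ∀ a ≤ n, cycleCopy n a ≤ n := by
  grind [cycleCopy]

section CycleCopies

variable {V : Type} [AddCommGroup V] [Module (ZMod 2) V] {n : ℕ}

theorem mapCopies_cycleCopy_pow_copy {a m : ℕ} (h : a + m ≤ n) (x : V) :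
    (mapCopies n n (cycleCopy n) (fun _ => LinearMap.id) ^ m) (copy V n a x) =
      copy V n (a + m) x := by
  induction m with
  | zero => rfl
  | succ m ih =>
    rw [pow_succ', Module.End.mul_apply, ih (by omega), mapCopies_copy _ _ (by omega), cycleCopy,
      if_neg (by omega), LinearMap.id_apply, add_assoc]

theorem mapCopies_cycleCopy_pow_card :
    mapCopies n n (cycleCopy n) (fun _ => LinearMap.id (M := V)) ^ (n + 1) = LinearMap.id := by
  refine linearMap_copies_ext fun a ha x => ?_
  set T := mapCopies n n (cycleCopy n) (fun _ => LinearMap.id (M := V)) with hT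
  have T_pow : T ^ (n + 1) = T ^ a * (T * T ^ (n - a)) := by
    rw [← pow_succ', ← pow_add]
    congr 1
    omega
  rw [T_pow, Module.End.mul_apply, Module.End.mul_apply, hT,
    mapCopies_cycleCopy_pow_copy (by omega), mapCopies_copy _ _ (by omega), cycleCopy,
    if_pos (by omega), mapCopies_cycleCopy_pow_copy (by omega), zero_add]
  rfl

end CycleCopies

section FreeDecalage

variable (C : CycMod) {n : ℕ}

theorem d_d_apply_eq {p q p' q' : ℕ} (x : C.X (n + 2))
    (h : (p < q ∧ q ≤ n + 2 ∧ p' = q - 1 ∧ q' = p) ∨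
      (p' < q' ∧ q' ≤ n + 2 ∧ p = q' - 1 ∧ q = p')) :
    C.d n p (C.d (n + 1) q x) = C.d n p' (C.d (n + 1) q' x) := by
  rcases h with ⟨hpq, hq, rfl, rfl⟩ | ⟨hpq, hq, rfl, rfl⟩
  · exact LinearMap.congr_fun (C.dd _ _ _ hpq hq) x
  · exact (LinearMap.congr_fun (C.dd _ _ _ hpq hq) x).symm

theorem s_s_apply_eq {p q p' q' : ℕ} (x : C.X n)
    (h : (p ≤ q ∧ q ≤ n ∧ p' = q + 1 ∧ q' = p) ∨ (p' ≤ q' ∧ q' ≤ n ∧ p = q' + 1 ∧ q = p')) :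
    C.s (n + 1) p (C.s n q x) = C.s (n + 1) p' (C.s n q' x) := by
  rcases h with ⟨hpq, hq, rfl, rfl⟩ | ⟨hpq, hq, rfl, rfl⟩
  · exact C.s_s_apply hpq hq x
  · exact (C.s_s_apply hpq hq x).symm

theorem d_s_apply_eq {p q p' q' : ℕ} (x : C.X (n + 1))
    (h : (p < q ∧ q ≤ n + 1 ∧ p' = q - 1 ∧ q' = p) ∨
      (q + 1 < p ∧ p ≤ n + 2 ∧ p' = q ∧ q' = p - 1)) :
    C.d (n + 1) p (C.s (n + 1) q x) = C.s n p' (C.d n q' x) := by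
  rcases h with ⟨hpq, hq, rfl, rfl⟩ | ⟨hqp, hp, rfl, rfl⟩
  · exact LinearMap.congr_fun (C.ds_lt _ _ _ hpq hq) x
  · exact LinearMap.congr_fun (C.ds_gt _ _ _ hqp hp) x

theorem d_s_apply_eq_self {p q : ℕ} (x : C.X n) (hq : q ≤ n) (h : p = q ∨ p = q + 1) :
    C.d n p (C.s n q x) = x := by
  rcases h with rfl | rfl
  · exact C.d_s_apply_self hq x
  · exact C.d_succ_s_apply_self hq x

/-- The free cyclic module on the décalage `n ↦ C.X (n + 1)` of `C`, which forgets the last face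
and degeneracy; its degree `n` part is `⊕_{a ≤ n} tᵃ C.X (n + 1)`. -/
def freeDecalage : CycMod where
  X n := Fin (n + 1) → C.X (n + 1)
  d n i := mapCopies (n + 1) n (faceCopy n i) fun a => C.d (n + 1) (faceIndex n i a)
  s n i := mapCopies n (n + 1) (degenCopy i) fun a => C.s (n + 1) (degenIndex n i a)
  t n := mapCopies n n (cycleCopy n) fun _ => LinearMap.id
  dd n i j h hj := by
    rw [mapCopies_comp (faceCopy_le _ _), mapCopies_comp (faceCopy_le _ _)]
    exact mapCopies_congr (by grind [faceCopy]) fun a ha x =>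
      C.d_d_apply_eq x (by grind [faceCopy, faceIndex])
  ss n i j h hj := by
    rw [mapCopies_comp (degenCopy_le _ _), mapCopies_comp (degenCopy_le _ _)]
    exact mapCopies_congr (by grind [degenCopy]) fun a ha x =>
      C.s_s_apply_eq x (by unfold degenCopy degenIndex; grind)
  ds_lt n i j h hj := by
    rw [mapCopies_comp (degenCopy_le _ _), mapCopies_comp (faceCopy_le _ _)]
    exact mapCopies_congr (by grind [faceCopy, degenCopy]) fun a ha x =>
      C.d_s_apply_eq x (by grind [faceCopy, faceIndex, degenCopy, degenIndex])
  ds_eq n j hj := by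
    rw [mapCopies_comp (degenCopy_le _ _), mapCopies_comp (degenCopy_le _ _)]
    constructor <;>
    exact mapCopies_eq_id (by grind [faceCopy, degenCopy]) fun a ha x =>
      C.d_s_apply_eq_self x (by grind [degenIndex]) (by grind [faceIndex, degenCopy, degenIndex])
  ds_gt n i j h hj := by
    rw [mapCopies_comp (degenCopy_le _ _), mapCopies_comp (faceCopy_le _ _)]
    exact mapCopies_congr (by grind [faceCopy, degenCopy]) fun a ha x =>
      C.d_s_apply_eq x (by grind [faceCopy, faceIndex, degenCopy, degenIndex])
  t_ord n := mapCopies_cycleCopy_pow_card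
  dt n i h hi := by
    rw [mapCopies_comp (cycleCopy_le _), mapCopies_comp (faceCopy_le _ _)]
    refine mapCopies_congr (by grind [faceCopy, cycleCopy]) fun a ha x =>
      congrArg (C.d (n + 1) · x) (by grind [faceIndex, cycleCopy])
  d0t n := by
    rw [mapCopies_comp (cycleCopy_le _)]
    refine mapCopies_congr (by grind [faceCopy, cycleCopy]) fun a ha x =>
      congrArg (C.d (n + 1) · x) (by grind [faceIndex, cycleCopy])
  st n i h hi := by
    rw [mapCopies_comp (cycleCopy_le _), mapCopies_comp (degenCopy_le _ _)]
    refine mapCopies_congr (by grind [degenCopy, cycleCopy]) fun a ha x =>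
      congrArg (C.s (n + 1) · x) (by grind [degenIndex, cycleCopy])
  s0t n := by
    rw [mapCopies_comp (cycleCopy_le _), mapCopies_comp (cycleCopy_le _),
      mapCopies_comp (degenCopy_le _ _)]
    refine mapCopies_congr (by grind [degenCopy, cycleCopy]) fun a ha x =>
      congrArg (C.s (n + 1) · x) (by grind [degenIndex, cycleCopy])

namespace freeDecalage

variable (n) in
/-- The inclusion `x ↦ tᵃ x` of the copy `a`. -/
def of (a : ℕ) : C.X (n + 1) →ₗ[ZMod 2] C.freeDecalage.X n := copy _ n a

variable {C} {i a : ℕ}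

theorem linearMap_ext {V : Type} [AddCommGroup V] [Module (ZMod 2) V]
    {f g : C.freeDecalage.X n →ₗ[ZMod 2] V}
    (h : ∀ a ≤ n, ∀ x, f (of C n a x) = g (of C n a x)) : f = g :=
  linearMap_copies_ext h

theorem d_of (ha : a ≤ n + 1) (x : C.X (n + 2)) :
    C.freeDecalage.d n i (of C (n + 1) a x) =
      of C n (faceCopy n i a) (C.d (n + 1) (faceIndex n i a) x) :=
  mapCopies_copy _ _ ha x

theorem s_of (ha : a ≤ n) (x : C.X (n + 1)) :
    C.freeDecalage.s n i (of C n a x) =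
      of C (n + 1) (degenCopy i a) (C.s (n + 1) (degenIndex n i a) x) :=
  mapCopies_copy _ _ ha x

theorem t_of (ha : a ≤ n) (x : C.X (n + 1)) :
    C.freeDecalage.t n (of C n a x) = of C n (cycleCopy n a) x :=
  mapCopies_copy _ _ ha x

theorem t_pow_of_zero (ha : a ≤ n) (x : C.X (n + 1)) :
    (C.freeDecalage.t n ^ a) (of C n 0 x) = of C n a x :=
  (mapCopies_cycleCopy_pow_copy ((zero_add a).trans_le ha) x).trans (by rw [zero_add]; rfl)

theorem t_of_lt (ha : a < n) (x : C.X (n + 1)) :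
    C.freeDecalage.t n (of C n a x) = of C n (a + 1) x := by
  rw [t_of ha.le, cycleCopy, if_neg ha.ne]

theorem t_of_last (x : C.X (n + 1)) : C.freeDecalage.t n (of C n n x) = of C n 0 x := by
  rw [t_of le_rfl, cycleCopy, if_pos rfl]

theorem norm_of_zero (x : C.X (n + 1)) :
    C.freeDecalage.norm n (of C n 0 x) = ∑ a ∈ Finset.range (n + 1), of C n a x := by
  rw [norm_apply]
  exact Finset.sum_congr rfl fun a ha => t_pow_of_zero (Finset.mem_range_succ_iff.mp ha) x

theorem bd_of_zero (x : C.X (n + 2)) :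
    C.freeDecalage.bd n (of C (n + 1) 0 x) = of C n 0 (C.bd' (n + 1) x) := by
  rw [bd_apply, bd'_apply, map_sum]
  refine Finset.sum_congr rfl fun i _ => ?_
  rw [d_of (Nat.zero_le _), faceCopy, if_pos (Nat.zero_le i), if_neg (Nat.succ_ne_zero n).symm,
    faceIndex, if_pos (Nat.zero_le i), Nat.sub_zero]

section lift

variable {V : Type} [AddCommGroup V] [Module (ZMod 2) V]

/-- The linear map `tᵃ x ↦ B a x`. -/
def lift (n : ℕ) (B : ℕ → C.X (n + 1) →ₗ[ZMod 2] V) : C.freeDecalage.X n →ₗ[ZMod 2] V :=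
  LinearMap.lsum (ZMod 2) (fun _ : Fin (n + 1) => C.X (n + 1)) (ZMod 2) fun a => B a

theorem lift_of (B : ℕ → C.X (n + 1) →ₗ[ZMod 2] V) (ha : a ≤ n) (x : C.X (n + 1)) :
    lift n B (of C n a x) = B a x :=
  lsum_copy B ha x

end lift

variable (C n) in
/-- The map `tᵃ x ↦ tᵃ (d_{n+1} x)` underlying `freeDecalage.proj`. -/
def projApp : C.freeDecalage.X n →ₗ[ZMod 2] C.X n :=
  lift n fun a => (C.t n ^ a) ∘ₗ C.d n (n + 1)

theorem projApp_of (ha : a ≤ n) (x : C.X (n + 1)) :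
    projApp C n (of C n a x) = (C.t n ^ a) (C.d n (n + 1) x) :=
  lift_of _ ha x

theorem projApp_comp_d (hi : i ≤ n + 1) :
    projApp C n ∘ₗ C.freeDecalage.d n i = C.d n i ∘ₗ projApp C (n + 1) := by
  refine linearMap_ext fun a ha x => ?_
  rw [LinearMap.comp_apply, LinearMap.comp_apply, d_of ha, projApp_of (faceCopy_le _ _ _ ha),
    projApp_of ha, faceIndex, faceCopy]
  split_ifs with h hn
  · rw [C.d_t_pow_apply (Nat.sub_add_cancel h) hi, C.d_d_apply (by omega) le_rfl, hn,
      t_pow_card_apply, pow_zero, Module.End.one_apply]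
  · rw [C.d_t_pow_apply (Nat.sub_add_cancel h) hi, C.d_d_apply (by omega) le_rfl]
  · obtain ⟨k, rfl⟩ := Nat.exists_eq_add_of_lt (not_le.mp h)
    rw [add_right_comm i k 1, C.d_t_pow_succ_add_apply (j := n + 1 - k) hi (by omega),
      C.d_d_apply (i := n + 1 - k) (by omega) le_rfl, show i + 1 + k - 1 = i + k by omega,
      show n + 2 + i - (i + 1 + k) = n + 1 - k by omega]

theorem projApp_comp_s (hi : i ≤ n) :
    projApp C (n + 1) ∘ₗ C.freeDecalage.s n i = C.s n i ∘ₗ projApp C n := by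
  refine linearMap_ext fun a ha x => ?_
  rw [LinearMap.comp_apply, LinearMap.comp_apply, s_of ha, projApp_of (degenCopy_le _ _ _ ha),
    projApp_of ha, degenIndex, degenCopy]
  split_ifs with h
  · rw [C.s_t_pow_apply (Nat.sub_add_cancel h) hi, C.d_succ_s_apply_of_lt (by omega) le_rfl]
  · obtain ⟨k, rfl⟩ := Nat.exists_eq_add_of_lt (not_le.mp h)
    rw [add_right_comm i k 1, C.s_t_pow_succ_add_apply (j := n - k) hi (by omega),
      C.d_succ_s_apply_of_lt (by omega) le_rfl, show i + 1 + k + 1 = i + 2 + k by omega,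
      show n + 1 + i - (i + 1 + k) = n - k by omega]

theorem projApp_comp_t : projApp C n ∘ₗ C.freeDecalage.t n = C.t n ∘ₗ projApp C n := by
  refine linearMap_ext fun a ha x => ?_
  rw [LinearMap.comp_apply, LinearMap.comp_apply, t_of ha, projApp_of (cycleCopy_le _ _ ha),
    projApp_of ha, ← t_pow_succ_apply, cycleCopy]
  split_ifs with h
  · rw [h, t_pow_card_apply, pow_zero, Module.End.one_apply]
  · rfl

variable (C) in
/-- The projection `tᵃ x ↦ tᵃ (d_{n+1} x)`. -/
def proj : Hom C.freeDecalage C where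
  app := projApp C
  app_d _ _ hi := LinearMap.congr_fun (projApp_comp_d hi)
  app_s _ _ hi := LinearMap.congr_fun (projApp_comp_s hi)
  app_t _ := LinearMap.congr_fun projApp_comp_t

theorem proj_surjective (n : ℕ) : Function.Surjective ((proj C).app n) := fun y =>
  ⟨of C n 0 (C.s n n y),
    (projApp_of (Nat.zero_le n) _).trans (C.d_succ_s_apply_self le_rfl y)⟩

end freeDecalage

end FreeDecalage

/-! ### Cochains on the cyclic bicomplex -/

/-- Families of linear maps to `V` on the terms of the cyclic bicomplex; their components on the
antidiagonal `p + q = n` form a cochain of degree `n` on the total complex. -/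
abbrev Cochain (E : CycMod) (V : Type) [AddCommGroup V] [Module (ZMod 2) V] :=
  ∀ (_p q : ℕ), E.X q →ₗ[ZMod 2] V

namespace Cochain

variable {E F : CycMod} {V : Type} [AddCommGroup V] [Module (ZMod 2) V] {p q : ℕ}

/-- The dual of the differential of the total complex. -/
def coboundary : Cochain E V →ₗ[ZMod 2] Cochain E V where
  toFun φ := fun
    | 0, 0 => 0
    | 0, q + 1 => φ 0 q ∘ₗ E.vert 0 q
    | p + 1, 0 => φ p 0 ∘ₗ E.horiz p 0
    | p + 1, q + 1 => φ (p + 1) q ∘ₗ E.vert (p + 1) q + φ p (q + 1) ∘ₗ E.horiz p (q + 1)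
  map_add' φ ψ := by
    funext p q
    rcases p with _ | p <;> rcases q with _ | q <;>
      simp only [Pi.add_apply, LinearMap.add_comp, add_zero]
    abel
  map_smul' c φ := by
    funext p q
    rcases p with _ | p <;> rcases q with _ | q <;>
      simp only [Pi.smul_apply, LinearMap.smul_comp, smul_add, smul_zero, RingHom.id_apply]

variable (φ : Cochain E V)

theorem coboundary_zero_zero : coboundary φ 0 0 = 0 := rfl

theorem coboundary_zero_succ : coboundary φ 0 (q + 1) = φ 0 q ∘ₗ E.vert 0 q := rfl

theorem coboundary_succ_zero : coboundary φ (p + 1) 0 = φ p 0 ∘ₗ E.horiz p 0 := rfl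

theorem coboundary_succ_succ :
    coboundary φ (p + 1) (q + 1) =
      φ (p + 1) q ∘ₗ E.vert (p + 1) q + φ p (q + 1) ∘ₗ E.horiz p (q + 1) := rfl

theorem coboundary_coboundary : coboundary (coboundary φ) = 0 := by
  funext p q
  refine LinearMap.ext fun x => ?_
  rcases p with _ | _ | p <;> rcases q with _ | _ | q <;>
    simp [coboundary_zero_zero, coboundary_zero_succ, coboundary_succ_zero, coboundary_succ_succ,
      vert_vert, horiz_horiz, vert_horiz, ZModModule.add_self]

variable (p q) in
/-- The family with the single component `χ` at position `(p, q)`. -/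
def single (χ : E.X q →ₗ[ZMod 2] V) : Cochain E V :=
  Pi.single p (Pi.single q χ)

theorem single_same (χ : E.X q →ₗ[ZMod 2] V) : single p q χ p q = χ := by
  rw [single, Pi.single_eq_same, Pi.single_eq_same]

theorem single_of_ne (χ : E.X q →ₗ[ZMod 2] V) {p' q' : ℕ} (h : p' ≠ p ∨ q' ≠ q) :
    single p q χ p' q' = 0 := by
  by_cases hp : p' = p
  · subst hp
    rw [single, Pi.single_eq_same, Pi.single_eq_of_ne (by tauto)]
  · rw [single, Pi.single_eq_of_ne hp, Pi.zero_apply]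

theorem coboundary_single_horiz (χ : E.X q →ₗ[ZMod 2] V) :
    coboundary (Cochain.single p q χ) (p + 1) q = χ ∘ₗ E.horiz p q := by
  cases q with
  | zero => rw [coboundary_succ_zero, single_same]
  | succ q =>
    rw [coboundary_succ_succ, single_same, single_of_ne _ (by omega), LinearMap.zero_comp, zero_add]

theorem coboundary_single_of_ne (χ : E.X q →ₗ[ZMod 2] V) {p' q' : ℕ}
    (hhoriz : ¬ (p' = p + 1 ∧ q' = q)) (hvert : ¬ (p' = p ∧ q' = q + 1)) :
    coboundary (Cochain.single p q χ) p' q' = 0 := by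
  rcases p' with _ | p' <;> rcases q' with _ | q'
  · rfl
  · rw [coboundary_zero_succ, single_of_ne _ (by omega), LinearMap.zero_comp]
  · rw [coboundary_succ_zero, single_of_ne _ (by omega), LinearMap.zero_comp]
  · rw [coboundary_succ_succ, single_of_ne _ (by omega), single_of_ne _ (by omega),
      LinearMap.zero_comp, LinearMap.zero_comp, add_zero]

/-- The pullback of a family along a homomorphism. -/
def pullback (f : Hom E F) (φ : Cochain F V) : Cochain E V := fun p q => φ p q ∘ₗ f.app q

theorem coboundary_pullback (f : Hom E F) (φ : Cochain F V) :
    coboundary (pullback f φ) = pullback f (coboundary φ) := by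
  funext p q
  refine LinearMap.ext fun x => ?_
  rcases p with _ | p <;> rcases q with _ | q <;>
    simp [coboundary_zero_zero, coboundary_zero_succ, coboundary_succ_zero, coboundary_succ_succ,
      pullback, f.app_vert, f.app_horiz]

/-- The degree `n` part of the family is a cocycle on the total complex. -/
def IsCocycle (φ : Cochain E V) (n : ℕ) : Prop :=
  ∀ p q, p + q = n + 1 → coboundary φ p q = 0

variable {φ} {n : ℕ}

theorem IsCocycle.add_coboundary (hφ : φ.IsCocycle n) (ψ : Cochain E V) :
    (φ + coboundary ψ).IsCocycle n := fun p q hpq => by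
  rw [map_add, coboundary_coboundary, add_zero, hφ p q hpq]

theorem IsCocycle.pullback (hφ : φ.IsCocycle n) (f : Hom F E) : (φ.pullback f).IsCocycle n :=
  fun p q hpq => by
    rw [coboundary_pullback, Cochain.pullback, hφ p q hpq, LinearMap.zero_comp]

end Cochain

/-! ### Acyclicity of the free cyclic module on the décalage -/

theorem bd'_s_last (C : CycMod) {n : ℕ} (x : C.X (n + 1)) :
    C.bd' (n + 1) (C.s (n + 1) (n + 1) x) = C.s n n (C.bd' n x) + x := by
  rw [bd'_apply, Finset.sum_range_succ, C.d_s_apply_self le_rfl, bd'_apply, map_sum]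
  congr 1
  refine Finset.sum_congr rfl fun i hi => ?_
  exact C.d_s_apply_of_le (Finset.mem_range_succ_iff.mp hi) le_rfl x

namespace freeDecalage

variable {C : CycMod} {V : Type} [AddCommGroup V] [Module (ZMod 2) V] {n p a : ℕ}
  {f g : C.freeDecalage.X n →ₗ[ZMod 2] V}

theorem apply_of_eq_of_comp_t (hf : f ∘ₗ C.freeDecalage.t n = f) (ha : a ≤ n) (x : C.X (n + 1)) :
    f (of C n a x) = f (of C n 0 x) := by
  induction a with
  | zero => rfl
  | succ a ih => rw [← t_of_lt ha, ← LinearMap.comp_apply, hf, ih (Nat.le_of_succ_le ha)]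

theorem ext_of_comp_t (hf : f ∘ₗ C.freeDecalage.t n = f) (hg : g ∘ₗ C.freeDecalage.t n = g)
    (h : ∀ x, f (of C n 0 x) = g (of C n 0 x)) : f = g :=
  linearMap_ext fun _ ha x => by
    rw [apply_of_eq_of_comp_t hf ha, apply_of_eq_of_comp_t hg ha, h]

theorem exists_comp_id_add_t_eq (hf : f ∘ₗ C.freeDecalage.norm n = 0) :
    ∃ χ : C.freeDecalage.X n →ₗ[ZMod 2] V, χ ∘ₗ (LinearMap.id + C.freeDecalage.t n) = f := by
  refine ⟨lift n fun a => ∑ b ∈ Finset.range a, f ∘ₗ of C n b, linearMap_ext fun a ha x => ?_⟩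
  rw [LinearMap.comp_apply, LinearMap.add_apply, LinearMap.id_apply, map_add, lift_of _ ha,
    LinearMap.sum_apply]
  rcases ha.lt_or_eq with han | rfl
  · rw [t_of_lt han, lift_of _ han, LinearMap.sum_apply, Finset.sum_range_succ, ← add_assoc,
      ZModModule.add_self, zero_add, LinearMap.comp_apply]
  · have f_norm : f (C.freeDecalage.norm a (of C a 0 x)) = 0 := LinearMap.congr_fun hf _
    rw [norm_of_zero, map_sum, Finset.sum_range_succ] at f_norm
    rw [t_of_last, lift_of _ (Nat.zero_le a), Finset.sum_range_zero, LinearMap.zero_apply, add_zero]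
    exact add_eq_zero_iff_eq.mp f_norm

theorem exists_comp_norm_eq (hf : f ∘ₗ C.freeDecalage.t n = f) :
    ∃ χ : C.freeDecalage.X n →ₗ[ZMod 2] V, χ ∘ₗ C.freeDecalage.norm n = f := by
  refine ⟨lift n fun a => if a = 0 then f ∘ₗ of C n 0 else 0, ext_of_comp_t ?_ hf fun x => ?_⟩
  · exact LinearMap.ext fun y => congrArg _ (C.freeDecalage.norm_t y)
  · rw [LinearMap.comp_apply, norm_of_zero, map_sum, Finset.sum_eq_single 0]
    · rw [lift_of _ (Nat.zero_le n), if_pos rfl, LinearMap.comp_apply]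
    · intro b hb hb0
      rw [lift_of _ (Finset.mem_range_succ_iff.mp hb), if_neg hb0, LinearMap.zero_apply]
    · exact fun h => absurd (Finset.mem_range.mpr n.succ_pos) h

theorem comp_id_add_t_eq_zero_iff :
    f ∘ₗ (LinearMap.id + C.freeDecalage.t n) = 0 ↔ f ∘ₗ C.freeDecalage.t n = f := by
  rw [LinearMap.comp_add, LinearMap.comp_id, add_eq_zero_iff_eq, eq_comm]

theorem exists_comp_horiz_eq (hf : f ∘ₗ C.freeDecalage.horiz (p + 1) n = 0) :
    ∃ χ : C.freeDecalage.X n →ₗ[ZMod 2] V, χ ∘ₗ C.freeDecalage.horiz p n = f := by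
  unfold horiz at hf ⊢
  by_cases hp : Even p
  · rw [if_neg (by rwa [Nat.even_add_one, not_not])] at hf
    rw [if_pos hp]
    exact exists_comp_id_add_t_eq hf
  · rw [if_pos (by rwa [Nat.even_add_one])] at hf
    rw [if_neg hp]
    exact exists_comp_norm_eq (comp_id_add_t_eq_zero_iff.mp hf)

theorem exists_comp_bd_eq {f : C.freeDecalage.X (n + 1) →ₗ[ZMod 2] V}
    (hft : f ∘ₗ C.freeDecalage.t (n + 1) = f) (hfb : f ∘ₗ C.freeDecalage.bd (n + 1) = 0) :
    ∃ χ : C.freeDecalage.X n →ₗ[ZMod 2] V,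
      χ ∘ₗ C.freeDecalage.t n = χ ∧ χ ∘ₗ C.freeDecalage.bd n = f := by
  let χ : C.freeDecalage.X n →ₗ[ZMod 2] V :=
    lift n fun _ => f ∘ₗ of C (n + 1) 0 ∘ₗ C.s (n + 1) (n + 1)
  have χ_t : χ ∘ₗ C.freeDecalage.t n = χ := linearMap_ext fun a ha x => by
    rw [LinearMap.comp_apply, t_of ha, lift_of _ (cycleCopy_le _ _ ha), lift_of _ ha]
  refine ⟨χ, χ_t, ext_of_comp_t ?_ hft fun x => ?_⟩
  · refine comp_id_add_t_eq_zero_iff.mp (LinearMap.ext fun y => ?_)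
    have χ_t_apply := LinearMap.congr_fun (comp_id_add_t_eq_zero_iff.mpr χ_t)
      (C.freeDecalage.bd' n y)
    exact (congrArg χ (C.freeDecalage.bd_add_t y)).trans χ_t_apply
  · have f_bd : f (C.freeDecalage.bd (n + 1) (of C (n + 2) 0 (C.s (n + 2) (n + 2) x))) = 0 :=
      LinearMap.congr_fun hfb _
    rw [bd_of_zero, bd'_s_last, map_add, map_add] at f_bd
    rw [LinearMap.comp_apply, bd_of_zero, lift_of _ (Nat.zero_le n)]
    exact add_eq_zero_iff_eq.mp f_bd

open Cochain in
/-- Exactness of the rows clears the components of a cocycle one row at a time. -/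
theorem exists_add_coboundary_eq_zero {φ : Cochain C.freeDecalage V} (hφ : φ.IsCocycle (n + 1))
    {m : ℕ} (hm : m ≤ n + 1) :
    ∃ ψ : Cochain C.freeDecalage V,
      ∀ p q, p + q = n + 1 → q < m → (φ + coboundary ψ) p q = 0 := by
  induction m with
  | zero => exact ⟨0, fun _ _ _ h => absurd h (Nat.not_lt_zero _)⟩
  | succ m ih =>
    obtain ⟨ψ, hψ⟩ := ih (Nat.le_of_succ_le hm)
    obtain ⟨p, hp⟩ : ∃ p, p + m = n := ⟨n - m, Nat.sub_add_cancel (Nat.le_of_succ_le_succ hm)⟩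
    have horiz_eq_zero :
        (φ + coboundary ψ) (p + 1) m ∘ₗ C.freeDecalage.horiz (p + 1) m = 0 := by
      have h := hφ.add_coboundary ψ (p + 2) m (by omega)
      cases m with
      | zero => exact h
      | succ m =>
        rwa [coboundary_succ_succ, hψ _ _ (by omega) (by omega), LinearMap.zero_comp,
          zero_add] at h
    obtain ⟨χ, hχ⟩ := exists_comp_horiz_eq horiz_eq_zero
    refine ⟨ψ + Cochain.single p m χ, fun p' q' hpq hq => ?_⟩
    rw [map_add, ← add_assoc, Pi.add_apply, Pi.add_apply]
    rcases Nat.lt_succ_iff_lt_or_eq.mp hq with hqm | rfl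
    · rw [coboundary_single_of_ne _ (by omega) (by omega), add_zero, hψ _ _ hpq hqm]
    · obtain rfl : p' = p + 1 := by omega
      rw [coboundary_single_horiz, hχ, ZModModule.add_self]

open Cochain in
theorem exists_coboundary_eq {φ : Cochain C.freeDecalage V} (hφ : φ.IsCocycle (n + 1)) :
    ∃ ψ : Cochain C.freeDecalage V, ∀ p q, p + q = n + 1 → coboundary ψ p q = φ p q := by
  obtain ⟨ψ, hψ⟩ := exists_add_coboundary_eq_zero hφ le_rfl
  have cocycle := hφ.add_coboundary ψ
  obtain ⟨χ, χ_t, χ_bd⟩ := exists_comp_bd_eq (f := (φ + coboundary ψ) 0 (n + 1))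
    (comp_id_add_t_eq_zero_iff.mp (by
      have h := cocycle 1 (n + 1) (by omega)
      rwa [coboundary_succ_succ, hψ _ _ (by omega) (by omega), LinearMap.zero_comp, zero_add,
        horiz_zero] at h))
    (by rw [← vert_zero]; exact cocycle 0 (n + 2) (by omega))
  refine ⟨ψ + Cochain.single 0 n χ, fun p q hpq => ?_⟩
  rw [map_add, Pi.add_apply, Pi.add_apply, add_comm]
  suffices h : coboundary (Cochain.single 0 n χ) p q = (φ + coboundary ψ) p q by
    rw [h, Pi.add_apply, Pi.add_apply, add_assoc, ZModModule.add_self, add_zero]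
  rcases Nat.lt_or_ge q (n + 1) with hq | hq
  · rw [hψ _ _ hpq hq]
    by_cases hqn : q = n
    · subst hqn
      obtain rfl : p = 0 + 1 := by omega
      rw [coboundary_single_horiz, horiz_zero]
      exact comp_id_add_t_eq_zero_iff.mpr χ_t
    · exact coboundary_single_of_ne _ (by omega) (by omega)
  · obtain rfl : q = n + 1 := by omega
    obtain rfl : p = 0 := by omega
    rw [coboundary_zero_succ, Cochain.single_same, vert_zero, χ_bd]

end freeDecalage

/-! ### Realization of cocycles -/

section Realization

variable {C : CycMod} {V : Type} [AddCommGroup V] [Module (ZMod 2) V] {n j : ℕ}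

theorem bd_mem_cyc (x : C.X (n + 1)) : C.bd n x ∈ C.cyc n := by
  cases n with
  | zero => exact Submodule.mem_top
  | succ n => exact C.bd_bd x

theorem Hom.mem_cyc_of_injective {D : CycMod} (f : Hom C D)
    (hf : ∀ n, Function.Injective (f.app n)) {x : C.X n} (hx : f.app n x ∈ D.cyc n) :
    x ∈ C.cyc n := by
  cases n with
  | zero => exact Submodule.mem_top
  | succ n =>
    refine hf n ?_
    rw [f.app_bd, map_zero]
    exact hx

/-- The linear map `e` induces an injective map on the homology in degree `j`. -/
def DetectsHH (C : CycMod) (j : ℕ) (e : C.X j →ₗ[ZMod 2] V) : Prop :=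
  (∀ x, e (C.bd j x) = 0) ∧ ∀ x ∈ C.cyc j, e x = 0 → x ∈ LinearMap.range (C.bd j)

section Cokernel

variable {A I : CycMod} {ι : Hom A I}

theorem Hom.mkQ_range_app_mem_range_bd (hI : ∀ m, ∀ x ∈ I.cyc m, x ∈ LinearMap.range (I.bd m))
    {y : I.X (n + 1)} {a : A.X n} (hya : I.bd n y = ι.app n a)
    (ha : a ∈ LinearMap.range (A.bd n)) :
    ι.range.mkQ.app (n + 1) y ∈ LinearMap.range (ι.range.quotient.bd (n + 1)) := by
  obtain ⟨b, rfl⟩ := ha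
  obtain ⟨z, hz⟩ := hI (n + 1) (y - ι.app (n + 1) b) (by
    change I.bd n _ = 0
    rw [map_sub, hya, ι.app_bd, sub_self])
  refine ⟨ι.range.mkQ.app _ z, ?_⟩
  rw [← Hom.app_bd, hz, map_sub, ι.range.mkQ_eq_zero_iff.mpr ⟨b, rfl⟩, sub_zero]

theorem Hom.exists_app_eq_bd_of_mkQ_range_mem_cyc (hι : ∀ n, Function.Injective (ι.app n))
    {y : I.X (n + 1)} (hy : ι.range.mkQ.app (n + 1) y ∈ ι.range.quotient.cyc (n + 1)) :
    ∃ a ∈ A.cyc n, I.bd n y = ι.app n a := by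
  obtain ⟨a, ha⟩ := ι.range.mkQ_eq_zero_iff.mp ((ι.range.mkQ.app_bd y).trans hy)
  exact ⟨a, ι.mem_cyc_of_injective hι (ha ▸ bd_mem_cyc y), ha.symm⟩

theorem ConcentratedIn.cokernel (hA : A.ConcentratedIn j) (hι : ∀ n, Function.Injective (ι.app n))
    (hI : ∀ m, ∀ x ∈ I.cyc m, x ∈ LinearMap.range (I.bd m)) :
    ι.range.quotient.ConcentratedIn (j + 1) := by
  intro n hn w hw
  obtain ⟨y, rfl⟩ := ι.range.mkQ_surjective n w
  cases n with
  | zero =>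
    obtain ⟨z, rfl⟩ := hI 0 y Submodule.mem_top
    exact ⟨_, (ι.range.mkQ.app_bd z).symm⟩
  | succ n =>
    obtain ⟨a, ha, hya⟩ := Hom.exists_app_eq_bd_of_mkQ_range_mem_cyc hι hw
    exact Hom.mkQ_range_app_mem_range_bd hI hya (hA n (by omega) a ha)

/-- The functional `e` is the transport of `e'` along the connecting map. -/
theorem DetectsHH.exists_cokernel {e' : A.X j →ₗ[ZMod 2] V} (he' : A.DetectsHH j e')
    (hι : ∀ n, Function.Injective (ι.app n))
    (hI : ∀ m, ∀ x ∈ I.cyc m, x ∈ LinearMap.range (I.bd m)) :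
    ∃ e : ι.range.quotient.X (j + 1) →ₗ[ZMod 2] V, ι.range.quotient.DetectsHH (j + 1) e ∧
      ∀ y a, I.bd j y = ι.app j a → e (ι.range.mkQ.app (j + 1) y) = e' a := by
  obtain ⟨r, hr⟩ := (ι.app j).exists_leftInverse_of_injective (LinearMap.ker_eq_bot.mpr (hι j))
  replace hr (a) : r (ι.app j a) = a := LinearMap.congr_fun hr a
  let e : ι.range.quotient.X (j + 1) →ₗ[ZMod 2] V :=
    (ι.range.carrier (j + 1)).liftQ (e' ∘ₗ r ∘ₗ I.bd j) (by
      rintro _ ⟨b, rfl⟩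
      change e' (r (I.bd j (ι.app (j + 1) b))) = 0
      rw [← ι.app_bd, hr, he'.1])
  have e_mkQ (y a) (hya : I.bd j y = ι.app j a) : e (ι.range.mkQ.app (j + 1) y) = e' a := by
    change e' (r (I.bd j y)) = e' a
    rw [hya, hr]
  refine ⟨e, ⟨fun w => ?_, fun w hw hew => ?_⟩, e_mkQ⟩
  · obtain ⟨y, rfl⟩ := ι.range.mkQ_surjective _ w
    rw [← Hom.app_bd, e_mkQ _ 0 (by rw [I.bd_bd, map_zero]), map_zero]
  · obtain ⟨y, rfl⟩ := ι.range.mkQ_surjective _ w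
    obtain ⟨a, ha, hya⟩ := Hom.exists_app_eq_bd_of_mkQ_range_mem_cyc hι hw
    exact Hom.mkQ_range_app_mem_range_bd hI hya (he'.2 a ha (e_mkQ y a hya ▸ hew))

end Cokernel

namespace Cochain

/-- The restriction of `φ` to the cycles of degree `j` is induced, through a homomorphism to a
cyclic module concentrated in degree `j`, by a linear map that is injective on homology. -/
def IsRealizable (φ : Cochain C V) (j : ℕ) : Prop :=
  ∃ (W : CycMod) (u : Hom C W) (e : W.X j →ₗ[ZMod 2] V),
    W.ConcentratedIn j ∧ W.DetectsHH j e ∧ ∀ x ∈ C.cyc j, e (u.app j x) = φ 0 j x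

/-- A linear map on `C.X 0`, composed with iterated zeroth faces. -/
def vertexMap (φ : C.X 0 →ₗ[ZMod 2] V) : ∀ n, C.X n →ₗ[ZMod 2] V
  | 0 => φ
  | n + 1 => vertexMap φ n ∘ₗ C.d n 0

theorem vertexMap_d {φ : C.X 0 →ₗ[ZMod 2] V} (hφ : ∀ x, φ (C.bd 0 x) = 0) :
    ∀ n i, i ≤ n + 1 → ∀ x, vertexMap φ n (C.d n i x) = vertexMap φ (n + 1) x
  | 0, 0, _, _ => rfl
  | 0, 1, _, x => by
    have h := hφ x
    rw [bd_apply, Finset.sum_range_succ, Finset.sum_range_one, map_add,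
      add_eq_zero_iff_eq] at h
    exact h.symm
  | n + 1, 0, _, _ => rfl
  | n + 1, i + 1, hi, x => by
    change vertexMap φ n (C.d n 0 (C.d (n + 1) (i + 1) x)) = _
    rw [C.d_d_apply (Nat.zero_le i) (by omega), vertexMap_d hφ n i (by omega)]
    rfl

/-- The homomorphism to a constant cyclic module extending a `0`-cocycle. -/
def homConstant (φ : C.X 0 →ₗ[ZMod 2] V) (hφ : ∀ x, φ (C.bd 0 x) = 0) : Hom C (constant V) where
  app := vertexMap φ
  app_d := vertexMap_d hφ
  app_s n i hi x := by
    refine (vertexMap_d hφ n i (by omega) _).symm.trans ?_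
    rw [C.d_s_apply_self hi]
    rfl
  app_t n x := by
    cases n with
    | zero =>
      have h := C.t_pow_card_apply x
      rw [zero_add, pow_one] at h
      rw [h]
      rfl
    | succ n =>
      change vertexMap φ n (C.d n 0 (C.t (n + 1) x)) = vertexMap φ (n + 1) x
      rw [d_zero_t_apply, vertexMap_d hφ n _ le_rfl]

variable {φ : Cochain C V}

theorem IsCocycle.isRealizable_zero (hφ : φ.IsCocycle 0) : φ.IsRealizable 0 := by
  have φ_bd (x) : φ 0 0 (C.bd 0 x) = 0 := by
    rw [← C.vert_zero]
    exact LinearMap.congr_fun (hφ 0 1 rfl) x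
  refine ⟨constant V, homConstant (φ 0 0) φ_bd, (LinearMap.id : V →ₗ[ZMod 2] V),
    concentratedIn_constant V, ⟨fun y => ?_, fun w _ hw => ?_⟩, fun x _ => rfl⟩
  · exact (constant_bd_apply V 0 y).trans (if_pos Even.zero)
  · rw [show w = 0 from hw]
    exact Submodule.zero_mem _

/-- Dimension shifting: push the homomorphism realizing the restriction of `ψ` out along the
inclusion of the kernel, embed the pushout into an acyclic module and pass to the cokernel. -/
theorem IsRealizable.succ_of_ker {Q : CycMod} {π : Hom Q C}
    (hπ : ∀ n, Function.Surjective (π.app n)) {ψ : Cochain Q V}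
    (hψ : coboundary ψ 0 (j + 1) = φ.pullback π 0 (j + 1))
    (h : (ψ.pullback π.ker.incl).IsRealizable j) : φ.IsRealizable (j + 1) := by
  obtain ⟨A, u', e', hA, he', e'_u'⟩ := h
  obtain ⟨P, f, g, hf, g_incl⟩ := exists_pushout π.ker.incl_injective u'
  let ι := P.const.comp f
  let g' := P.const.comp g
  have hι (n) : Function.Injective (ι.app n) := (P.const_injective n).comp (hf n)
  have g'_incl (n x) : g'.app n (π.ker.incl.app n x) = ι.app n (u'.app n x) :=
    congrArg (P.const.app n) (g_incl n x)
  obtain ⟨e, he, e_mkQ⟩ := he'.exists_cokernel hι fun m x => P.mem_range_bd_vertexFun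
  obtain ⟨u, hu⟩ := Hom.exists_desc hπ (ι.range.mkQ.comp g') fun n x hx => by
    obtain ⟨y, rfl⟩ := π.ker.exists_incl_eq hx
    exact ι.range.mkQ_eq_zero_iff.mpr ⟨_, (g'_incl n y).symm⟩
  refine ⟨_, u, e, hA.cokernel hι fun m x => P.mem_range_bd_vertexFun, he, fun x hx => ?_⟩
  obtain ⟨q, rfl⟩ := hπ _ x
  obtain ⟨a, ha⟩ : ∃ a, π.ker.incl.app j a = Q.bd j q :=
    π.ker.exists_incl_eq ((π.app_bd q).trans hx)
  have ha_cyc : a ∈ π.ker.toCycMod.cyc j :=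
    π.ker.incl.mem_cyc_of_injective π.ker.incl_injective (ha ▸ bd_mem_cyc q)
  calc e (u.app (j + 1) (π.app (j + 1) q))
      = e (ι.range.mkQ.app (j + 1) (g'.app (j + 1) q)) := congrArg e (hu _ q)
    _ = e' (u'.app j a) := e_mkQ _ _ (by rw [← g'.app_bd, ← ha, g'_incl])
    _ = ψ 0 j (Q.bd j q) := by rw [e'_u' a ha_cyc, ← ha]; rfl
    _ = φ 0 (j + 1) (π.app (j + 1) q) := by
      rw [← Q.vert_zero]
      exact LinearMap.congr_fun hψ q

theorem IsCocycle.isRealizable (hφ : φ.IsCocycle j) : φ.IsRealizable j := by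
  induction j generalizing C with
  | zero => exact hφ.isRealizable_zero
  | succ j ih =>
    obtain ⟨ψ, hψ⟩ := freeDecalage.exists_coboundary_eq (hφ.pullback (freeDecalage.proj C))
    refine IsRealizable.succ_of_ker (freeDecalage.proj_surjective (C := C)) (hψ 0 _ (zero_add _))
      (ih fun p q hpq => ?_)
    rw [coboundary_pullback, Cochain.pullback, hψ p q hpq]
    exact LinearMap.ext fun x =>
      (congrArg (φ p q) ((freeDecalage.proj C).ker.incl_mem x)).trans (map_zero _)

end Cochain

end Realization

/-! ### From injectivity of `HH → CH` to a splitting -/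

section Splitting

variable {C : CycMod} {V : Type} [AddCommGroup V] [Module (ZMod 2) V] {n j : ℕ}

/-- The class of a cycle in Hochschild homology. -/
def hhMk (C : CycMod) (j : ℕ) : C.cyc j →ₗ[ZMod 2] C.HHc j :=
  Submodule.mkQ _

theorem hhMk_eq_zero_iff {x : C.cyc j} :
    C.hhMk j x = 0 ↔ (x : C.X j) ∈ LinearMap.range (C.bd j) :=
  Submodule.Quotient.mk_eq_zero _

theorem hhMk_surjective : Function.Surjective (C.hhMk j) := Submodule.mkQ_surjective _

theorem ccSingle_mem_range_D {x : C.X j} (hx : x ∈ LinearMap.range (C.bd j)) :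
    C.ccSingle 0 j x ∈ LinearMap.range C.CC.D := by
  obtain ⟨z, rfl⟩ := hx
  refine ⟨C.ccSingle 0 (j + 1) z, ?_⟩
  change C.CC.dh _ + C.CC.dv _ = _
  rw [dh_ccSingle_zero, dv_ccSingle_succ, zero_add, vert_zero]

theorem HHInjectsCH.mem_range_bd (hC : C.HHInjectsCH) {x : C.X j}
    (hx : C.ccSingle 0 j x ∈ LinearMap.range C.CC.D) : x ∈ LinearMap.range (C.bd j) := by
  obtain ⟨Y, hY⟩ := hx
  have hDY : C.totalD (C.toChain Y) = C.single 0 j x := by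
    rw [← toChain_D, hY, toChain_ccSingle]
  let y : C.Chain := fun p q => if p + q = j + 1 then C.toChain Y p q else 0
  have y_of_ne {p q : ℕ} (h : p + q ≠ j + 1) : y p q = 0 := if_neg h
  have totalD_y {p q : ℕ} (hpq : p + q = j) : C.totalD y p q = C.single 0 j x p q := by
    have hv : y p (q + 1) = C.toChain Y p (q + 1) := if_pos (by omega)
    have hh : y (p + 1) q = C.toChain Y (p + 1) q := if_pos (by omega)
    rw [← hDY, totalD_apply, totalD_apply, hv, hh]
  have hy := hC j y (fun p q h => y_of_ne (by omega)) fun p q => by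
    by_cases h : p + 1 + q = j
    · rw [totalD_y h, C.single_of_ne _ (by omega)]
    · rw [totalD_apply, y_of_ne (by omega), y_of_ne (by omega), map_zero, map_zero, add_zero]
  rwa [totalD_y (zero_add j), single_same] at hy

/-- The restrictions of a linear map on the total space of the cyclic bicomplex to its terms. -/
def Cochain.ofTotal (L : C.CC.T →ₗ[ZMod 2] V) : Cochain C V := fun p q => L ∘ₗ C.ccSingle p q

theorem Cochain.coboundary_ofTotal (L : C.CC.T →ₗ[ZMod 2] V) (p q : ℕ) (x : C.X q) :
    coboundary (ofTotal L) p q x = L (C.CC.D (C.ccSingle p q x)) := by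
  change _ = L (C.CC.dh _ + C.CC.dv _)
  rcases p with _ | p <;> rcases q with _ | q
  · rw [coboundary_zero_zero, dh_ccSingle_zero, dv_ccSingle_zero, add_zero, map_zero]
    rfl
  · rw [coboundary_zero_succ, dh_ccSingle_zero, dv_ccSingle_succ, zero_add]
    rfl
  · rw [coboundary_succ_zero, dh_ccSingle_succ, dv_ccSingle_zero, add_zero]
    rfl
  · rw [coboundary_succ_succ, dh_ccSingle_succ, dv_ccSingle_succ, map_add]
    exact add_comm (L _) _

/-- As `HH_j` injects into the quotient of the total complex by its boundaries, its identity extends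
to this quotient. -/
theorem HHInjectsCH.exists_isCocycle (hC : C.HHInjectsCH) (j : ℕ) :
    ∃ φ : Cochain C (C.HHc j), φ.IsCocycle j ∧ ∀ x : C.cyc j, φ 0 j x = C.hhMk j x := by
  let B := LinearMap.range C.CC.D
  let i : C.HHc j →ₗ[ZMod 2] C.CC.T ⧸ B :=
    Submodule.liftQ _ (B.mkQ ∘ₗ C.ccSingle 0 j ∘ₗ (C.cyc j).subtype) fun _ hx =>
      (Submodule.Quotient.mk_eq_zero B).mpr (ccSingle_mem_range_D hx)
  have hi : LinearMap.ker i = ⊥ := by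
    refine LinearMap.ker_eq_bot'.mpr (hhMk_surjective.forall.mpr fun x hx => ?_)
    exact hhMk_eq_zero_iff.mpr (hC.mem_range_bd ((Submodule.Quotient.mk_eq_zero B).mp hx))
  obtain ⟨r, hr⟩ := i.exists_leftInverse_of_injective hi
  refine ⟨Cochain.ofTotal (r ∘ₗ B.mkQ), fun p q _ => LinearMap.ext fun x => ?_,
    fun x => LinearMap.congr_fun hr (C.hhMk j x)⟩
  rw [Cochain.coboundary_ofTotal, LinearMap.comp_apply, LinearMap.zero_apply,
    show B.mkQ _ = 0 from (Submodule.Quotient.mk_eq_zero B).mpr ⟨_, rfl⟩, map_zero]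

theorem HHInjectsCH.exists_isCycHom_concentratedIn (hC : C.HHInjectsCH) (j : ℕ) :
    ∃ (U : CycMod) (g : ∀ n, C.X n →ₗ[ZMod 2] U.X n), IsCycHom C U g ∧ U.ConcentratedIn j ∧
      (∀ x ∈ C.cyc j, g j x ∈ LinearMap.range (U.bd j) → x ∈ LinearMap.range (C.bd j)) ∧
      ∀ y ∈ U.cyc j, ∃ x ∈ C.cyc j, g j x - y ∈ LinearMap.range (U.bd j) := by
  obtain ⟨φ, hφ, φ_eq⟩ := hC.exists_isCocycle j
  obtain ⟨W, u, e, hW, he, e_u⟩ := hφ.isRealizable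
  obtain ⟨U, g, hg, p, hp, p_g⟩ := u.exists_strictification
  have e_p_g (x : C.cyc j) : e (p.app j (g j x)) = C.hhMk j x := by rw [p_g, e_u x x.2, φ_eq]
  refine ⟨U, g, hg, fun n hn x hx => hp n x hx (hW n hn _ (p.app_mem_cyc hx)),
    fun x hx ⟨z, hz⟩ => ?_, fun y hy => ?_⟩
  · refine hhMk_eq_zero_iff.mp ((e_p_g ⟨x, hx⟩).symm.trans ?_)
    rw [← hz, p.app_bd, he.1]
  · obtain ⟨x, hx⟩ := hhMk_surjective (e (p.app j y))
    have hcyc : g j x - y ∈ U.cyc j :=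
      Submodule.sub_mem _ ((Hom.ofIsCycHom hg).app_mem_cyc x.2) hy
    refine ⟨x, x.2, hp j _ hcyc (he.2 _ (p.app_mem_cyc hcyc) ?_)⟩
    rw [map_sub, map_sub, e_p_g, hx, sub_self]

theorem Bounded.exists_forall_lt (hC : C.Bounded) :
    ∃ N, ∀ n, N < n → ∀ x ∈ C.cyc n, x ∈ LinearMap.range (C.bd n) := by
  obtain ⟨N, hN⟩ := hC.bddAbove
  refine ⟨N, fun n hn x hx => (hhMk_eq_zero_iff (x := ⟨x, hx⟩)).mp ?_⟩
  by_contra hne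
  exact hn.not_ge (hN (⟨_, _, hne⟩ : Nontrivial (C.HHc n)))

theorem isCycQIso_pi {N : ℕ} {D : Fin (N + 1) → CycMod}
    {g : ∀ a n, C.X n →ₗ[ZMod 2] (D a).X n} (hg : ∀ a, IsCycHom C (D a) (g a))
    (hD : ∀ a, (D a).ConcentratedIn a)
    (hinj : ∀ a : Fin (N + 1), ∀ x ∈ C.cyc a, g a a x ∈ LinearMap.range ((D a).bd a) →
      x ∈ LinearMap.range (C.bd a))
    (hsurj : ∀ a : Fin (N + 1), ∀ y ∈ (D a).cyc a, ∃ x ∈ C.cyc a,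
      g a a x - y ∈ LinearMap.range ((D a).bd a))
    (hN : ∀ n, N < n → ∀ x ∈ C.cyc n, x ∈ LinearMap.range (C.bd n)) :
    IsCycQIso C (pi D) fun n => LinearMap.pi fun a => g a n := by
  have hG := isCycHom_pi D hg
  refine ⟨hG, (Hom.ofIsCycHom hG).isNatQIso_iff.mpr ⟨?_, fun n y hy => ?_⟩⟩
  · rintro n x hx ⟨z, hz⟩
    by_cases hn : N < n
    · exact hN n hn x hx
    · refine hinj ⟨n, by omega⟩ x hx ⟨(piProj D _).app _ z, ?_⟩
      exact ((piProj D _).app_bd z).symm.trans (congrArg _ hz)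
  · obtain ⟨x, hx, hxy⟩ : ∃ x ∈ C.cyc n, ∀ a : Fin (N + 1), a.1 = n →
        g a n x - (piProj D a).app n y ∈ LinearMap.range ((D a).bd n) := by
      by_cases hn : n < N + 1
      · obtain ⟨x, hx, h⟩ := hsurj ⟨n, hn⟩ _ ((piProj D _).app_mem_cyc hy)
        exact ⟨x, hx, fun a ha => by obtain rfl : a = ⟨n, hn⟩ := Fin.ext ha; exact h⟩
      · exact ⟨0, Submodule.zero_mem _, fun a ha => absurd a.2 (ha ▸ hn)⟩
    refine ⟨x, hx, ?_⟩
    have hcyc : (Hom.ofIsCycHom hG).app n x - y ∈ (pi D).cyc n :=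
      Submodule.sub_mem _ ((Hom.ofIsCycHom hG).app_mem_cyc hx) hy
    choose z hz using fun a => show (piProj D a).app n ((Hom.ofIsCycHom hG).app n x - y) ∈
        LinearMap.range ((D a).bd n) from
      if ha : a.1 = n then hxy a ha
      else hD a n (Ne.symm ha) _ ((piProj D a).app_mem_cyc hcyc)
    exact ⟨z, funext fun a => ((piProj D a).app_bd z).trans (hz a)⟩

theorem HHInjectsCH.exists_isCycQIso_pi (hC : C.HHInjectsCH) (hbdd : C.Bounded) :
    ∃ (N : ℕ) (D : Fin (N + 1) → CycMod) (g : ∀ n, C.X n →ₗ[ZMod 2] (pi D).X n),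
      IsCycQIso C (pi D) g ∧ ∀ a, (D a).ConcentratedIn a := by
  obtain ⟨N, hN⟩ := hbdd.exists_forall_lt
  choose D g hg hD hinj hsurj using fun a : Fin (N + 1) => hC.exists_isCycHom_concentratedIn a
  exact ⟨N, D, _, isCycQIso_pi hg hD hinj hsurj hN, hD⟩

theorem isCycQIso_id (C : CycMod) : IsCycQIso C C fun _ => LinearMap.id := by
  have hid : IsCycHom C C fun _ => LinearMap.id :=
    ⟨fun _ _ => rfl, fun _ _ => rfl, fun _ => rfl⟩
  refine ⟨hid, (Hom.ofIsCycHom hid).isNatQIso_iff.mpr ⟨fun n x _ h => h, fun n y hy => ?_⟩⟩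
  exact ⟨y, hy, 0, (map_zero _).trans (sub_self y).symm⟩

end Splitting

section PiSummand

variable {ι : Type} (D : ι → CycMod) (j : ι)

/-- The `j`-th factor of a product as a submodule: the families supported at `j`. -/
def piSummand (n : ℕ) : Submodule (ZMod 2) ((pi D).X n) :=
  Submodule.pi (φ := fun a => (D a).X n) {j}ᶜ fun _ => ⊥

variable {D j} {n : ℕ}

theorem d_mem_piSummand (i : ℕ) {x : (pi D).X (n + 1)} (hx : x ∈ piSummand D j (n + 1)) :
    (pi D).d n i x ∈ piSummand D j n :=
  fun a ha => (congrArg ((D a).d n i) (hx a ha)).trans (map_zero _)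

theorem s_mem_piSummand (i : ℕ) {x : (pi D).X n} (hx : x ∈ piSummand D j n) :
    (pi D).s n i x ∈ piSummand D j (n + 1) :=
  fun a ha => (congrArg ((D a).s n i) (hx a ha)).trans (map_zero _)

theorem t_mem_piSummand {x : (pi D).X n} (hx : x ∈ piSummand D j n) :
    (pi D).t n x ∈ piSummand D j n :=
  fun a ha => (congrArg ((D a).t n) (hx a ha)).trans (map_zero _)

theorem mem_map_bd_piSummand {x : (pi D).X n} (hx : x ∈ piSummand D j n)
    (hbd : (piProj D j).app n x ∈ LinearMap.range ((D j).bd n)) :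
    x ∈ (piSummand D j (n + 1)).map ((pi D).bd n) := by
  classical
  obtain ⟨z, hz⟩ := hbd
  let w : (pi D).X (n + 1) := Pi.single (M := fun a => (D a).X (n + 1)) j z
  have w_of_ne {a : ι} (ha : a ≠ j) : w a = 0 :=
    Pi.single_eq_of_ne (M := fun a => (D a).X (n + 1)) ha z
  refine ⟨w, fun a ha => w_of_ne ha, funext fun a => ?_⟩
  refine ((piProj D a).app_bd w).trans ?_
  by_cases ha : a = j
  · subst ha
    exact (congrArg _ (Pi.single_eq_same (M := fun a => (D a).X (n + 1)) a z)).trans hz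
  · exact (congrArg _ (w_of_ne ha)).trans ((map_zero _).trans (hx a ha).symm)

end PiSummand

/-! ### From a splitting to injectivity of `HH → CH` -/

section OfSplitting

variable {C D S : CycMod}

theorem Hom.hhInjective_of_bijective (f : Hom C D) (hf : ∀ n, Function.Bijective (f.app n)) :
    f.HHInjective := by
  rintro n x - ⟨z, hz⟩
  obtain ⟨w, rfl⟩ := (hf _).2 z
  exact ⟨w, (hf n).1 ((f.app_bd w).trans hz)⟩

theorem Hom.hhSurjective_of_bijective (f : Hom C D) (hf : ∀ n, Function.Bijective (f.app n)) :
    f.HHSurjective := by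
  intro n y hy
  obtain ⟨x, rfl⟩ := (hf n).2 y
  exact ⟨x, f.mem_cyc_of_injective (fun n => (hf n).1) hy, 0, (map_zero _).trans (sub_self _).symm⟩

variable {ι : Type}

theorem HHInjectsCH.pi {D : ι → CycMod} (hD : ∀ a, (D a).HHInjectsCH) :
    (CycMod.pi D).HHInjectsCH := by
  intro n y hy hDy
  choose z hz using fun a => hD a n ((piProj D a).mapChain y)
    ((piProj D a).mapChain_mem_fil hy) fun p q => by
      rw [← Hom.mapChain_totalD, Hom.mapChain_apply, hDy, map_zero]
  refine ⟨z, funext fun a => ((piProj D a).app_bd (n := n) z).trans ((hz a).trans ?_)⟩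
  rw [← Hom.mapChain_totalD]
  rfl

/-- The homomorphism from a finite product, regarded as a direct sum, with the given components. -/
def Hom.sum [Fintype ι] {D : ι → CycMod} (f : ∀ a, Hom (D a) S) : Hom (CycMod.pi D) S where
  app n := ∑ a, (f a).app n ∘ₗ (piProj D a).app n
  app_d n i h x := by
    simp only [LinearMap.sum_apply, LinearMap.comp_apply, map_sum]
    exact Finset.sum_congr rfl fun a _ => by rw [(piProj D a).app_d n i h, (f a).app_d n i h]
  app_s n i h x := by
    simp only [LinearMap.sum_apply, LinearMap.comp_apply, map_sum]
    exact Finset.sum_congr rfl fun a _ => by rw [(piProj D a).app_s n i h, (f a).app_s n i h]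
  app_t n x := by
    simp only [LinearMap.sum_apply, LinearMap.comp_apply, map_sum]
    exact Finset.sum_congr rfl fun a _ => by rw [(piProj D a).app_t, (f a).app_t]

theorem HHInjectsCH.of_isInternal [Finite ι] [DecidableEq ι] {U : ι → S.Sub}
    (hU : ∀ n, DirectSum.IsInternal fun j => (U j).carrier n)
    (h : ∀ j, (U j).toCycMod.HHInjectsCH) : S.HHInjectsCH := by
  have := Fintype.ofFinite ι
  let σ := Hom.sum fun j => (U j).incl
  have hσ (n) : Function.Bijective (σ.app n) := by
    have σ_eq : ⇑(σ.app n) = fun x : ∀ j, (U j).carrier n => ∑ j, (x j : S.X n) :=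
      funext fun x => LinearMap.sum_apply ..
    rw [σ_eq]
    exact (isInternal_iff_bijective_sum _).mp (hU n)
  exact (HHInjectsCH.pi h).map (σ.hhInjective_of_bijective hσ) (σ.hhSurjective_of_bijective hσ)

theorem Sub.concentratedIn_toCycMod (U : S.Sub) {j : ℕ}
    (h : ∀ n, n ≠ j → ∀ x ∈ U.carrier n, x ∈ S.cyc n → x ∈ (U.carrier (n + 1)).map (S.bd n)) :
    U.toCycMod.ConcentratedIn j := by
  intro n hn x hx
  obtain ⟨z, hz, hzx⟩ := h n hn _ (U.incl_mem x) (U.incl.app_mem_cyc hx)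
  obtain ⟨w, rfl⟩ := U.exists_incl_eq hz
  exact ⟨w, U.incl_injective n ((U.incl.app_bd w).trans hzx)⟩

end OfSplitting

end CycMod

/-- **Proposition 3.23.** Let `𝓜` be a bounded cyclic module over `𝔽₂`. The Hodge-to-de
Rham spectral sequence of `𝓜` collapses at `E¹` if and only if `𝓜` is quasi-isomorphic (in
the homotopy category of cyclic modules, via a span of quasi-isomorphisms) to a finite direct
sum `⊕ⱼ 𝒩ⱼ` of cyclic modules each having homology concentrated in a single degree (realized
as an internal direct sum decomposition of a cyclic module `S` into sub-cyclic-modules). -/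
theorem hodge_to_de_rham_collapse_iff_split
    (C : CycMod) (hbdd : C.Bounded) :
    C.HdRdegenAt 1 ↔
    ∃ (S P : CycMod) (f : ∀ n, P.X n →ₗ[ZMod 2] C.X n)
      (g : ∀ n, P.X n →ₗ[ZMod 2] S.X n),
      IsCycQIso P C f ∧ IsCycQIso P S g ∧
      ∃ (kk : ℕ) (U : Fin (kk + 1) → ∀ n, Submodule (ZMod 2) (S.X n)),
        (∀ j n i, ∀ x ∈ U j (n + 1), S.d n i x ∈ U j n) ∧
        (∀ j n i, ∀ x ∈ U j n, S.s n i x ∈ U j (n + 1)) ∧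
        (∀ j n, ∀ x ∈ U j n, S.t n x ∈ U j n) ∧
        (∀ n, DirectSum.IsInternal (fun j => U j n)) ∧
        (∀ j, ∃ n₀ : ℕ,
          ((0 : ℕ) ≠ n₀ → ∀ x ∈ U j 0, x ∈ Submodule.map (S.bd 0) (U j 1)) ∧
          (∀ m : ℕ, m + 1 ≠ n₀ → ∀ x ∈ U j (m + 1), S.bd m x = 0 →
            x ∈ Submodule.map (S.bd (m + 1)) (U j (m + 2)))) := by
  rw [C.HdRdegenAt_one_iff_HHInjectsCH]
  constructor
  · intro hC
    obtain ⟨N, D, g, hg, hD⟩ := hC.exists_isCycQIso_pi hbdd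
    refine ⟨.pi D, C, fun _ => LinearMap.id, g, CycMod.isCycQIso_id C, hg, N, CycMod.piSummand D,
      fun _ _ i _ => CycMod.d_mem_piSummand i, fun _ _ i _ => CycMod.s_mem_piSummand i,
      fun _ _ _ => CycMod.t_mem_piSummand, fun _ => isInternal_pi_compl_bot, fun j => ⟨j, ?_, ?_⟩⟩
    · exact fun h x hx => CycMod.mem_map_bd_piSummand hx (hD j 0 h _ Submodule.mem_top)
    · exact fun m h x hx hbd => CycMod.mem_map_bd_piSummand hx
        (hD j (m + 1) h _ ((CycMod.piProj D j).app_mem_cyc hbd))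
  · rintro ⟨S, P, f, g, ⟨hf, hfq⟩, ⟨hg, hgq⟩, N, U, hd, hs, ht, hU, hconc⟩
    let W j : S.Sub := ⟨U j, fun n i _ => hd j n i, fun n i _ => hs j n i, ht j⟩
    have hS : S.HHInjectsCH := .of_isInternal (U := W) hU fun j => by
      obtain ⟨n₀, h0, hsucc⟩ := hconc j
      refine ((W j).concentratedIn_toCycMod (j := n₀) ?_).hhInjectsCH
      rintro (_ | m) h x hx hbd
      exacts [h0 h x hx, hsucc m h x hx hbd]
    obtain ⟨hginj, -⟩ := (CycMod.Hom.ofIsCycHom hg).isNatQIso_iff.mp hgq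
    obtain ⟨hfinj, hfsurj⟩ := (CycMod.Hom.ofIsCycHom hf).isNatQIso_iff.mp hfq
    exact (hS.of_hom hginj).map hfinj hfsurj

end LT
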